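/- arXiv:1408.0529 — 3 statements merged into one kernel-verified Lean document; each statement's English description precedes it below -/
import Mathlib

section
/- Let π be an irreducible pair on a finite alphabet A. If Z(π) ⊆ Alt(A), then G(π) ⊆ Alt(A). -/
open Equiv

/-- A (labeled) pair on alphabet `A`: two bijections from `A` to positions.
Positions are `Fin (Fintype.card A)`, 0-indexed: position `j : Fin N`
corresponds to the position `j+1 ∈ {1,…,N}` of the paper. -/
abbrev RPair (A : Type*) [Fintype A] := Bool → (A ≃ Fin (Fintype.card A))

variable {A : Type*} [Fintype A]

/-- Irreducibility: `π₁(π₀⁻¹({1,…,k})) = {1,…,k}` only for `k = N`. -/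
def PairIrreducible (π : RPair A) : Prop :=
  ∀ k : Fin (Fintype.card A),
    (∀ x : A, π false x ≤ k → π true x ≤ k) → (k : ℕ) + 1 = Fintype.card A

/-- Type-ε right Rauzy induction sends `π` to `π'`.  Here `zc = π_ε⁻¹(N)` and
`zo = π_{1-ε}⁻¹(N)` are characterized as the letters of maximal position. -/
def RightMove (π π' : RPair A) : Prop :=
  ∃ ε : Bool, ∃ zc zo : A,
    (∀ x : A, π ε x ≤ π ε zc) ∧
    (∀ x : A, π (!ε) x ≤ π (!ε) zo) ∧
    π' ε = π ε ∧
    (∀ b : A, π (!ε) b ≤ π (!ε) zc → π' (!ε) b = π (!ε) b) ∧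
    ((π' (!ε) zo : ℕ) = (π (!ε) zc : ℕ) + 1) ∧
    (∀ b : A, ¬ π (!ε) b ≤ π (!ε) zc → b ≠ zo → (π' (!ε) b : ℕ) = (π (!ε) b : ℕ) + 1)

/-- Type-ε left Rauzy induction sends `π` to `π'`.  Here `ac = π_ε⁻¹(1)` and
`ao = π_{1-ε}⁻¹(1)` are characterized as the letters of minimal position. -/
def LeftMove (π π' : RPair A) : Prop :=
  ∃ ε : Bool, ∃ ac ao : A,
    (∀ x : A, π ε ac ≤ π ε x) ∧
    (∀ x : A, π (!ε) ao ≤ π (!ε) x) ∧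
    π' ε = π ε ∧
    (∀ b : A, π (!ε) ac ≤ π (!ε) b → π' (!ε) b = π (!ε) b) ∧
    ((π' (!ε) ao : ℕ) = (π (!ε) ac : ℕ) - 1) ∧
    (∀ b : A, ¬ π (!ε) ac ≤ π (!ε) b → b ≠ ao → (π' (!ε) b : ℕ) = (π (!ε) b : ℕ) - 1)

/-- The Rauzy class `R(π)`: pairs reachable by right Rauzy inductions. -/
def RClass (π : RPair A) : Set (RPair A) := {ρ | Relation.ReflTransGen RightMove π ρ}

/-- The extended Rauzy class `E(π)`: pairs reachable by left and right Rauzy inductions. -/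
def EClass (π : RPair A) : Set (RPair A) :=
  {ρ | Relation.ReflTransGen (fun x y => RightMove x y ∨ LeftMove x y) π ρ}

/-- `π ∘ ν = (π₀ ∘ ν, π₁ ∘ ν)`. -/
def pairRename (π : RPair A) (ν : Equiv.Perm A) : RPair A := fun ε => ν.trans (π ε)

/-- The renaming set `G(π) = {ν : π ∘ ν ∈ E(π)}`. -/
def renamings (π : RPair A) : Set (Equiv.Perm A) := {ν | pairRename π ν ∈ EClass π}

/-- The non-labeled permutation `π₁ ∘ π₀⁻¹`. -/
def nonlabeled (π : RPair A) : Equiv.Perm (Fin (Fintype.card A)) :=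
  (π false).symm.trans (π true)

/-- The position `1` (smallest). -/
def posFirst (A : Type*) [Fintype A] [Nonempty A] : Fin (Fintype.card A) :=
  ⟨0, Fintype.card_pos⟩

/-- The position `N` (largest). -/
def posLast (A : Type*) [Fintype A] [Nonempty A] : Fin (Fintype.card A) :=
  ⟨Fintype.card A - 1, Nat.sub_lt Fintype.card_pos Nat.one_pos⟩

/-- A pair is standard if `π₀(π₁⁻¹(1)) = π₁(π₀⁻¹(1)) = N`. -/
def PairStandard [Nonempty A] (π : RPair A) : Prop :=
  π false ((π true).symm (posFirst A)) = posLast A ∧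
  π true ((π false).symm (posFirst A)) = posLast A

/-- `S` is the permutation `S(π)` of the paper. -/
def IsS [Nonempty A] (π : RPair A) (S : Equiv.Perm A) : Prop :=
  ∀ b : A,
    (π true b = posFirst A → S b = (π false).symm (posFirst A)) ∧
    (π true b ≠ posFirst A →
      (((π true b : ℕ) = (π true ((π false).symm (posLast A)) : ℕ) + 1 →
        (π false (S b) : ℕ) = (π false ((π true).symm (posLast A)) : ℕ) + 1) ∧
      ((π true b : ℕ) ≠ (π true ((π false).symm (posLast A)) : ℕ) + 1 →
        (π false (S b) : ℕ) =
          (π false ((π true).symm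
            ⟨(π true b : ℕ) - 1,
              Nat.lt_of_le_of_lt (Nat.sub_le _ _) (π true b).isLt⟩) : ℕ) + 1)))

/-- The marked letter `X(π) = π₀⁻¹(1)`. -/
def XOf [Nonempty A] (π : RPair A) : A := (π false).symm (posFirst A)

/-- `Q` is the permutation `Q(π)` of the paper (constructed from `S = S(π)`). -/
def IsQ [Nonempty A] (π : RPair A) (S Q : Equiv.Perm A) : Prop :=
  Q (XOf π) = XOf π ∧
  ∀ b : A, b ≠ XOf π →
    (S b = XOf π → Q b = S (S b)) ∧ (S b ≠ XOf π → Q b = S b)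

/-- `Λ`: the multiset of cardinalities of the orbits of `Q` on `A ∖ {X}`
(for `Q` fixing `X`): the nontrivial cycle lengths of `Q` together with one `1`
for each fixed point of `Q` other than `X`. -/
def lamOf [DecidableEq A] (Q : Equiv.Perm A) : Multiset ℕ :=
  Q.cycleType + Multiset.replicate ((Finset.univ.filter fun a => Q a = a).card - 1) 1

/-- The centralizer `Z(π)` of `(X(π), Q(π))`. -/
def ZOf [Nonempty A] (π : RPair A) (Q : Equiv.Perm A) : Set (Equiv.Perm A) :=
  {ν | ν (XOf π) = XOf π ∧ ν⁻¹ * Q * ν = Q}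

/-!
Close each row of a pair into a cyclic word by adjoining an endpoint marker. If `σ₀`, `σ₁` are the
cyclic successor maps of the two rows, then `S(π)` is `σ₀ ∘ σ₁⁻¹` with the marker deleted from its
cycle, and `Q(π)` is `S(π)` with `X(π)` deleted from its cycle.

A Rauzy induction displaces a single letter of one row, so that row's successor map is unchanged
once this letter is deleted from it. A right induction therefore preserves `S(π)`. A left induction
preserves `S(π)` with `a` deleted, where `a` is the first letter of the unchanged row. When that row
is `π₀`, `a` is `X(π)` and `Q(π)` is preserved. When it is `π₁`, `S(π)` maps `a` to `X(π)`, and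
deleting a point or its image give results conjugate by the transposition of the two points; so
`Q(π)` changes by conjugation with a product of two transpositions. Along the extended Rauzy class
the marked permutation `(X, Q)` is thus only ever conjugated by even permutations, and each element
of `G(π)` differs from one of `Z(π)` by an even permutation.
-/

section ErasePoint

variable {B C : Type*} [DecidableEq B] [DecidableEq C]

/-- The permutation obtained from `S` by deleting `x` from its cycle, `x` becoming a fixed point:
off `x` it is the first-return map of `S` to the complement of `x`. -/
def erasePoint (x : B) (S : Perm B) : Perm B := swap x (S x) * S

theorem erasePoint_apply_self (x : B) (S : Perm B) : erasePoint x S x = x := by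
  simp [erasePoint]

theorem erasePoint_of_apply_eq {S : Perm B} {y x : B} (h : S y = x) :
    erasePoint x S = S * swap y x := by
  rw [erasePoint, mul_swap_eq_swap_mul, h, swap_comm]

theorem erasePoint_inv (x : B) (S : Perm B) : erasePoint x S⁻¹ = (erasePoint x S)⁻¹ := by
  have hSx : S⁻¹ (S x) = x := by simp
  rw [erasePoint_of_apply_eq hSx, erasePoint, mul_inv_rev, swap_inv, swap_comm]

theorem erasePoint_permCongr (e : B ≃ C) (x : B) (S : Perm B) :
    erasePoint (e x) (e.permCongr S) = e.permCongr (erasePoint x S) := by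
  rw [erasePoint, erasePoint, permCongr_mul, permCongr_def _ (swap _ _), symm_trans_swap_trans,
    permCongr_apply, symm_apply_apply]

theorem erasePoint_conj (f : Perm B) (x : B) (S : Perm B) :
    erasePoint (f x) (f * S * f⁻¹) = f * erasePoint x S * f⁻¹ :=
  erasePoint_permCongr f x S

theorem erasePoint_comm (x y : B) (S : Perm B) :
    erasePoint x (erasePoint y S) = erasePoint y (erasePoint x S) := by
  ext b
  simp only [erasePoint, Perm.mul_apply, swap_apply_def]
  grind [S.injective.eq_iff]

theorem erasePoint_apply_eq_conj {S : Perm B} {y x : B} (h : S y = x) :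
    erasePoint x S = swap y x * erasePoint y S * (swap y x)⁻¹ := by
  rw [erasePoint_of_apply_eq h, erasePoint, h, swap_mul_self_mul, swap_inv]

theorem erasePoint_mul_swap_self_mul_swap {S : Perm B} {y x : B} (h : S y = x) (c : B) :
    erasePoint x (S * (swap x y * swap x c)) = erasePoint x S := by
  have hc : (S * (swap x y * swap x c)) c = x := by simp [h]
  rw [erasePoint_of_apply_eq hc, erasePoint_of_apply_eq h, swap_comm c x, swap_comm y x,
    ← mul_assoc, mul_swap_mul_self]

theorem erasePoint_mul_swap_mul_swap_self {S : Perm B} {y x : B} (h : S y = x) (c : B) :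
    erasePoint x (S * (swap y c * swap y x)) = erasePoint x S := by
  have hc : (S * (swap y c * swap y x)) (swap y x c) = x := by simp [h]
  have hswap : swap y x * swap (swap y x c) x = swap c y * swap y x := by
    nth_rw 3 [← swap_apply_left y x]
    rw [swap_apply_apply, swap_inv, mul_assoc, swap_mul_self_mul]
  rw [erasePoint_of_apply_eq hc, erasePoint_of_apply_eq h, mul_assoc, mul_assoc, hswap,
    swap_comm c y, swap_mul_self_mul]

theorem inv_eq_of_erasePoint_eq {S S' : Perm B} {o : B} (h : erasePoint o S' = erasePoint o S) :
    S'⁻¹ = S⁻¹ * (swap o (S o) * swap o (S' o)) := by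
  rw [erasePoint, erasePoint, ← inv_inj, mul_inv_rev, mul_inv_rev, swap_inv, swap_inv,
    ← eq_mul_inv_iff_mul_eq, swap_inv] at h
  rw [h, mul_assoc]

theorem inv_eq_of_erasePoint_eq_of_apply_eq {S S' : Perm B} {o z : B}
    (h : erasePoint o S' = erasePoint o S) (hz : S' z = o) :
    S'⁻¹ = S⁻¹ * (swap (S o) (S z) * swap (S o) o) := by
  rw [erasePoint_of_apply_eq hz, erasePoint, ← eq_mul_inv_iff_mul_eq] at h
  rw [h, swap_apply_apply S, swap_comm (S o) o]
  simp only [mul_inv_rev, swap_inv, mul_assoc, inv_mul_cancel_left, swap_comm z o]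

end ErasePoint

section CyclicSucc

variable {C : Type*} {m : ℕ}

/-- The successor map of the cyclic word in which the letter `x` stands at position `e x`. -/
def cyclicSucc (e : C ≃ Fin m) : Perm C := e.symm.permCongr (finRotate m)

theorem cyclicSucc_eq_iff (e : C ≃ Fin m) {x y : C} :
    cyclicSucc e x = y ↔ finRotate m (e x) = e y := by
  rw [cyclicSucc, permCongr_apply, symm_symm, symm_apply_eq]

theorem cyclicSucc_trans (f : Perm C) (e : C ≃ Fin m) :
    cyclicSucc (f.trans e) = f⁻¹ * cyclicSucc e * f := rfl

theorem erasePoint_finRotate_succAbove {k : ℕ} (i : Fin (k + 2)) (j : Fin (k + 1)) :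
    erasePoint i (finRotate (k + 2)) (i.succAbove j) = i.succAbove (finRotate (k + 1) j) := by
  have hi := coe_finRotate i
  have hj := coe_finRotate j
  have hij := coe_finRotate (i.succAbove j)
  simp only [erasePoint, Perm.mul_apply, swap_apply_def, Fin.succAbove, Fin.ext_iff, Fin.lt_def,
    Fin.val_castSucc, Fin.val_last] at *
  grind

theorem erasePoint_cyclicSucc_symm_succAbove [DecidableEq C] {k : ℕ} (e : C ≃ Fin (k + 2)) (o : C)
    (j : Fin (k + 1)) :
    erasePoint o (cyclicSucc e) (e.symm ((e o).succAbove j)) =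
      e.symm ((e o).succAbove (finRotate (k + 1) j)) := by
  rw [← erasePoint_finRotate_succAbove]
  conv_lhs => rw [← e.symm_apply_apply o, cyclicSucc, erasePoint_permCongr]
  simp

theorem symm_succAbove_eq_of_lt_imp_lt {k : ℕ} {e e' : C ≃ Fin (k + 1)} {o : C}
    (h : ∀ x y, x ≠ o → y ≠ o → e x < e y → e' x < e' y) (j : Fin k) :
    e'.symm ((e' o).succAbove j) = e.symm ((e o).succAbove j) := by
  have hne (i : Fin k) : e.symm ((e o).succAbove i) ≠ o := by
    simp [symm_apply_eq, Fin.succAbove_ne]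
  have hmono : StrictMono fun i => e' (e.symm ((e o).succAbove i)) := fun i i' hi =>
    h _ _ (hne i) (hne i') (by simpa using hi)
  have hrange : Set.range (fun i => e' (e.symm ((e o).succAbove i))) =
      Set.range (e' o).succAbove := by
    rw [← Function.comp_def e', Set.range_comp, ← Function.comp_def e.symm, Set.range_comp,
      Fin.range_succAbove, Fin.range_succAbove, Set.image_compl_eq e.symm.bijective,
      Set.image_compl_eq e'.bijective, Set.image_singleton, Set.image_singleton, symm_apply_apply]
  rw [symm_apply_eq]
  exact congrFun (((Fin.strictMono_succAbove _).range_inj hmono).1 hrange.symm) j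

theorem erasePoint_cyclicSucc_eq_of_lt_imp_lt [DecidableEq C] {e e' : C ≃ Fin m} {o : C}
    (h : ∀ x y, x ≠ o → y ≠ o → e x < e y → e' x < e' y) :
    erasePoint o (cyclicSucc e') = erasePoint o (cyclicSucc e) := by
  obtain _ | _ | k := m
  · exact (e o).elim0
  · have : Subsingleton (Fin (0 + 1)) := Fin.subsingleton_one
    have : Subsingleton C := e.subsingleton
    exact Subsingleton.elim _ _
  · ext x
    obtain rfl | hx := eq_or_ne x o
    · simp only [erasePoint_apply_self]
    · obtain ⟨j, hj⟩ := Fin.exists_succAbove_eq (e.injective.ne hx)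
      obtain rfl : e.symm ((e o).succAbove j) = x := by rw [hj, symm_apply_apply]
      rw [erasePoint_cyclicSucc_symm_succAbove, ← symm_succAbove_eq_of_lt_imp_lt h,
        ← symm_succAbove_eq_of_lt_imp_lt h, erasePoint_cyclicSucc_symm_succAbove]

end CyclicSucc

section WordSucc

variable {B : Type*} {n : ℕ} {p : B ≃ Fin n}

/-- Positions in the word of `p` preceded by an endpoint marker `none`: the marker has position `0`
and the letter `b` has position `p b + 1`. -/
def markedPos (p : B ≃ Fin n) : Option B ≃ Fin (n + 1) :=
  p.optionCongr.trans (finSuccEquiv n).symm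

theorem markedPos_none : markedPos p none = 0 := by simp [markedPos]

theorem markedPos_some (b : B) : markedPos p (some b) = (p b).succ := by simp [markedPos]

/-- The successor map of the word of `p`, closed up into a cycle through the marker `none`. -/
def wordSucc (p : B ≃ Fin n) : Perm (Option B) := cyclicSucc (markedPos p)

theorem wordSucc_trans (ν : Perm B) :
    wordSucc (ν.trans p) = ν.optionCongr⁻¹ * wordSucc p * ν.optionCongr := by
  have hpos : markedPos (ν.trans p) = ν.optionCongr.trans (markedPos p) := by
    simp only [markedPos, ← trans_assoc, optionCongr_trans]
  rw [wordSucc, hpos, cyclicSucc_trans, wordSucc]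

theorem wordSucc_none {a : B} (ha : ∀ x, p a ≤ p x) : wordSucc p none = some a := by
  have : NeZero n := ⟨(p a).pos.ne'⟩
  have hfirst : p a = 0 := by simpa using ha (p.symm 0)
  rw [wordSucc, cyclicSucc_eq_iff, markedPos_none, markedPos_some, hfirst, finRotate_apply,
    zero_add]
  ext
  simp [Nat.mod_eq_of_lt, Nat.pos_of_neZero]

theorem wordSucc_last {z : B} (hz : ∀ x, p x ≤ p z) : wordSucc p (some z) = none := by
  obtain _ | n := n
  · exact (p z).elim0
  have hlast : p z = Fin.last n := by simpa using hz (p.symm (Fin.last n))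
  rw [wordSucc, cyclicSucc_eq_iff, markedPos_none, markedPos_some, hlast, Fin.succ_last,
    finRotate_last]

theorem wordSucc_some {b c : B} (h : (p c : ℕ) = p b + 1) : wordSucc p (some b) = some c := by
  rw [wordSucc, cyclicSucc_eq_iff, markedPos_some, markedPos_some, Fin.ext_iff, coe_finRotate,
    if_neg (by rw [Fin.ext_iff]; simp; omega)]
  simp [h]

theorem erasePoint_wordSucc_eq_of_lt_imp_lt [DecidableEq B] {p p' : B ≃ Fin n} {o : B}
    (h : ∀ x y, x ≠ o → y ≠ o → p x < p y → p' x < p' y) :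
    erasePoint (some o) (wordSucc p') = erasePoint (some o) (wordSucc p) := by
  refine erasePoint_cyclicSucc_eq_of_lt_imp_lt fun x y hx hy hxy => ?_
  obtain _ | x := x <;> obtain _ | y := y <;>
    simp_all [markedPos_none, markedPos_some]

end WordSucc

section SPerm

variable {B : Type*} {n : ℕ}

/-- The permutation `S` of a pair of rows `p`, `q`: the map `wordSucc p ∘ (wordSucc q)⁻¹` on
letters and marker, followed through the marker. -/
def sPerm (p q : B ≃ Fin n) : Perm B := removeNone (wordSucc p * (wordSucc q)⁻¹)

variable {p q q' : B ≃ Fin n}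

theorem mul_inv_apply_apply {C : Type*} (f g : Perm C) (x : C) : (f * g⁻¹) (g x) = f x := by
  simp

theorem sPerm_apply_of_wordSucc_eq_some {x : Option B} {b d : B} (hq : wordSucc q x = some b)
    (hp : wordSucc p x = some d) : sPerm p q b = d := by
  have hT : (wordSucc p * (wordSucc q)⁻¹) (some b) = some d := by
    rw [← hq, mul_inv_apply_apply, hp]
  exact Option.some_injective _ ((removeNone_some _ ⟨d, hT⟩).trans hT)

theorem sPerm_apply_of_wordSucc_eq_none {x w : Option B} {b d : B} (hq : wordSucc q x = some b)
    (hp : wordSucc p x = none) (hqw : wordSucc q w = none) (hpw : wordSucc p w = some d) :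
    sPerm p q b = d := by
  have hT : (wordSucc p * (wordSucc q)⁻¹) (some b) = none := by
    rw [← hq, mul_inv_apply_apply, hp]
  have hT' : (wordSucc p * (wordSucc q)⁻¹) none = some d := by
    rw [← hqw, mul_inv_apply_apply, hpw]
  exact Option.some_injective _ ((removeNone_none _ hT).trans hT')

theorem sPerm_apply_first {a b : B} (ha : ∀ x, p a ≤ p x) (hb : ∀ x, q b ≤ q x) :
    sPerm p q b = a :=
  sPerm_apply_of_wordSucc_eq_some (wordSucc_none hb) (wordSucc_none ha)

theorem sPerm_comm (p q : B ≃ Fin n) : sPerm q p = (sPerm p q)⁻¹ := by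
  rw [sPerm, sPerm, Perm.inv_def (removeNone _), removeNone_symm, ← Perm.inv_def, mul_inv_rev,
    inv_inv]

theorem optionCongr_sPerm [DecidableEq B] (p q : B ≃ Fin n) :
    (sPerm p q).optionCongr = erasePoint none (wordSucc p * (wordSucc q)⁻¹) :=
  map_equiv_removeNone _

theorem optionCongr_erasePoint [DecidableEq B] (x : B) (S : Perm B) :
    (erasePoint x S).optionCongr = erasePoint (some x) S.optionCongr := by
  rw [erasePoint, erasePoint, Perm.mul_def, optionCongr_trans, optionCongr_swap,
    Perm.mul_def, optionCongr_apply, Option.map_some]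

theorem sPerm_trans (ν : Perm B) (p q : B ≃ Fin n) :
    sPerm (ν.trans p) (ν.trans q) = ν⁻¹ * sPerm p q * ν := by
  classical
  apply optionCongr_injective
  calc (sPerm (ν.trans p) (ν.trans q)).optionCongr
      = erasePoint none
          (ν.optionCongr⁻¹ * (wordSucc p * (wordSucc q)⁻¹) * ν.optionCongr⁻¹⁻¹) := by
        rw [optionCongr_sPerm, wordSucc_trans, wordSucc_trans]
        group
    _ = ν.optionCongr⁻¹ * (sPerm p q).optionCongr * ν.optionCongr⁻¹⁻¹ := by
        rw [optionCongr_sPerm]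
        exact erasePoint_conj ν.optionCongr⁻¹ none _
    _ = (ν⁻¹ * sPerm p q * ν).optionCongr := by
        simp [Perm.mul_def, Perm.inv_def]

/-- The row changed by a right Rauzy induction: `o`, the last letter of `q`, is moved to the place
right after `z`. -/
structure MovesLastAfter (q q' : B ≃ Fin n) (z o : B) : Prop where
  last : ∀ x, q x ≤ q o
  keep : ∀ b, q b ≤ q z → q' b = q b
  moved : (q' o : ℕ) = q z + 1
  shift : ∀ b, ¬ q b ≤ q z → b ≠ o → (q' b : ℕ) = q b + 1

/-- The row changed by a left Rauzy induction: `o`, the first letter of `q`, is moved to the place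
right before `a`. -/
structure MovesFirstBefore (q q' : B ≃ Fin n) (a o : B) : Prop where
  first : ∀ x, q o ≤ q x
  keep : ∀ b, q a ≤ q b → q' b = q b
  moved : (q' o : ℕ) = q a - 1
  shift : ∀ b, ¬ q a ≤ q b → b ≠ o → (q' b : ℕ) = q b - 1

variable {a o z : B}

theorem MovesFirstBefore.eq_of_first_eq (h : MovesFirstBefore q q' a a) : q' = q :=
  Equiv.ext fun b => h.keep b (h.first b)

theorem MovesFirstBefore.lt_of_ne (h : MovesFirstBefore q q' a o) (hao : a ≠ o) : q o < q a :=
  lt_of_le_of_ne (h.first a) (q.injective.ne hao.symm)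

theorem MovesLastAfter.erasePoint_wordSucc_eq [DecidableEq B] (h : MovesLastAfter q q' z o) :
    erasePoint (some o) (wordSucc q') = erasePoint (some o) (wordSucc q) :=
  erasePoint_wordSucc_eq_of_lt_imp_lt fun x y hx hy hxy => by grind [h.keep, h.shift]

theorem MovesFirstBefore.erasePoint_wordSucc_eq [DecidableEq B] (h : MovesFirstBefore q q' a o) :
    erasePoint (some o) (wordSucc q') = erasePoint (some o) (wordSucc q) :=
  erasePoint_wordSucc_eq_of_lt_imp_lt fun x y hx hy hxy => by
    have hox : q o < q x := (h.first x).lt_of_ne (q.injective.ne hx.symm)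
    grind [h.keep, h.shift]

theorem MovesLastAfter.sPerm_eq (h : MovesLastAfter q q' z o) (hz : ∀ x, p x ≤ p z) :
    sPerm p q' = sPerm p q := by
  classical
  have hzo : wordSucc q' (some z) = some o := wordSucc_some (by rw [h.moved, h.keep z le_rfl])
  have hT : (wordSucc p * (wordSucc q)⁻¹) (wordSucc q (some z)) = none := by
    rw [mul_inv_apply_apply, wordSucc_last hz]
  apply optionCongr_injective
  rw [optionCongr_sPerm, optionCongr_sPerm,
    inv_eq_of_erasePoint_eq_of_apply_eq h.erasePoint_wordSucc_eq hzo, wordSucc_last h.last,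
    ← mul_assoc, erasePoint_mul_swap_self_mul_swap hT]

theorem MovesFirstBefore.erasePoint_sPerm_eq [DecidableEq B] (h : MovesFirstBefore q q' a o)
    (ha : ∀ x, p a ≤ p x) : erasePoint a (sPerm p q') = erasePoint a (sPerm p q) := by
  obtain rfl | hao := eq_or_ne a o
  · rw [h.eq_of_first_eq]
  have hoa : wordSucc q' (some o) = some a := wordSucc_some (by
    have := h.lt_of_ne hao
    rw [h.moved, h.keep a le_rfl]; omega)
  have hT : (wordSucc p * (wordSucc q)⁻¹) (some o) = some a := by
    rw [← wordSucc_none h.first, mul_inv_apply_apply, wordSucc_none ha]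
  apply optionCongr_injective
  rw [optionCongr_erasePoint, optionCongr_erasePoint, optionCongr_sPerm, optionCongr_sPerm,
    erasePoint_comm, inv_eq_of_erasePoint_eq h.erasePoint_wordSucc_eq, hoa, ← mul_assoc,
    erasePoint_mul_swap_mul_swap_self hT, erasePoint_comm]

end SPerm

section QPerm

variable [Nonempty A] {π ρ : RPair A}

theorem apply_XOf_le (π : RPair A) (x : A) : π false (XOf π) ≤ π false x := by
  simp [XOf, posFirst]

theorem XOf_eq_of_le {a : A} (ha : ∀ x, π false a ≤ π false x) : XOf π = a :=
  (π false).injective ((apply_XOf_le π a).antisymm (ha _))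

theorem XOf_pairRename (π : RPair A) (ν : Perm A) : XOf (pairRename π ν) = ν⁻¹ (XOf π) := rfl

theorem IsS.eq_sPerm {S : Perm A} (hS : IsS π S) : S = sPerm (π false) (π true) := by
  have hlast (ε : Bool) (x : A) : π ε x ≤ π ε ((π ε).symm (posLast A)) := by
    rw [apply_symm_apply]
    exact Nat.le_sub_one_of_lt (π ε x).isLt
  ext b
  obtain ⟨hfirst, hrest⟩ := hS b
  symm
  by_cases hb : π true b = posFirst A
  · rw [hfirst hb]
    exact sPerm_apply_first (apply_XOf_le π) fun x => by simp [hb, posFirst]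
  obtain ⟨hjump, hstep⟩ := hrest hb
  by_cases hz : (π true b : ℕ) = π true ((π false).symm (posLast A)) + 1
  · exact sPerm_apply_of_wordSucc_eq_none (wordSucc_some hz) (wordSucc_last (hlast false))
      (wordSucc_last (hlast true)) (wordSucc_some (hjump hz))
  · refine sPerm_apply_of_wordSucc_eq_some (wordSucc_some ?_) (wordSucc_some (hstep hz))
    have hpos : (π true b : ℕ) ≠ 0 := fun h => hb (Fin.ext h)
    rw [apply_symm_apply]
    exact (Nat.sub_one_add_one hpos).symm

variable [DecidableEq A]

/-- The permutation `Q(π)`: the marked letter `X(π)` is deleted from its cycle in `S(π)`. -/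
def qPerm (π : RPair A) : Perm A := erasePoint (XOf π) (sPerm (π false) (π true))

theorem IsQ.eq_erasePoint {S Q : Perm A} (hQ : IsQ π S Q) : Q = erasePoint (XOf π) S := by
  ext b
  obtain rfl | hb := eq_or_ne b (XOf π)
  · rw [hQ.1, erasePoint_apply_self]
  rw [erasePoint, Perm.mul_apply]
  by_cases hSb : S b = XOf π
  · rw [(hQ.2 b hb).1 hSb, hSb, swap_apply_left]
  · rw [(hQ.2 b hb).2 hSb, swap_apply_of_ne_of_ne hSb (S.injective.ne hb)]

theorem qPerm_pairRename (π : RPair A) (ν : Perm A) :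
    qPerm (pairRename π ν) = ν⁻¹ * qPerm π * ν := by
  have hS : sPerm (pairRename π ν false) (pairRename π ν true) =
      ν⁻¹ * sPerm (π false) (π true) * ν := sPerm_trans ν _ _
  rw [qPerm, XOf_pairRename, hS]
  exact erasePoint_conj ν⁻¹ _ _

/-- Some even permutation carries the marked permutation `(X(π), Q(π))` to `(X(ρ), Q(ρ))`. -/
def EvenlyConjugate (π ρ : RPair A) : Prop :=
  ∃ φ ∈ alternatingGroup A, φ (XOf π) = XOf ρ ∧ qPerm ρ = φ * qPerm π * φ⁻¹

theorem EvenlyConjugate.of_eq (hX : XOf ρ = XOf π) (hQ : qPerm ρ = qPerm π) :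
    EvenlyConjugate π ρ :=
  ⟨1, one_mem _, hX.symm, by simp [hQ]⟩

theorem EvenlyConjugate.trans {τ : RPair A} (h : EvenlyConjugate π ρ)
    (h' : EvenlyConjugate ρ τ) : EvenlyConjugate π τ := by
  obtain ⟨φ, hφ, hX, hQ⟩ := h
  obtain ⟨ψ, hψ, hX', hQ'⟩ := h'
  refine ⟨ψ * φ, mul_mem hψ hφ, by rw [Perm.mul_apply, hX, hX'], ?_⟩
  rw [hQ', hQ]
  group

theorem RightMove.evenlyConjugate (h : RightMove π ρ) : EvenlyConjugate π ρ := by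
  obtain ⟨ε, z, o, hz, ho, hε, hkeep, hmoved, hshift⟩ := h
  have hmove : MovesLastAfter (π !ε) (ρ !ε) z o := ⟨ho, hkeep, hmoved, hshift⟩
  have hS := hmove.sPerm_eq hz
  cases ε
  · have hX : XOf ρ = XOf π := by rw [XOf, XOf, hε]
    exact .of_eq hX (by rw [qPerm, qPerm, hX, hε]; exact congrArg _ hS)
  · have hX : XOf ρ = XOf π := XOf_eq_of_le fun x => by
      have hfirst : ρ false (XOf π) = π false (XOf π) := hmove.keep _ (apply_XOf_le π z)
      rw [hfirst]
      simp [XOf, posFirst]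
    refine .of_eq hX ?_
    rw [qPerm, qPerm, hX, hε, sPerm_comm, sPerm_comm (π true)]
    exact congrArg _ (congrArg _ hS)

theorem qPerm_eq_swap_conj {a : A} (ha : ∀ x, π true a ≤ π true x) :
    qPerm π = swap a (XOf π) * erasePoint a (sPerm (π false) (π true)) * (swap a (XOf π))⁻¹ :=
  erasePoint_apply_eq_conj (sPerm_apply_first (apply_XOf_le π) ha)

theorem EvenlyConjugate.of_erasePoint_eq {a : A} (ha : ∀ x, π true a ≤ π true x)
    (ha' : ∀ x, ρ true a ≤ ρ true x) (hπ : a ≠ XOf π) (hρ : a ≠ XOf ρ)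
    (h : erasePoint a (sPerm (ρ false) (ρ true)) = erasePoint a (sPerm (π false) (π true))) :
    EvenlyConjugate π ρ := by
  refine ⟨swap a (XOf ρ) * swap a (XOf π), ?_, by simp, ?_⟩
  · rw [Perm.mem_alternatingGroup, Perm.sign_mul, Perm.sign_swap hπ, Perm.sign_swap hρ]
    rfl
  · rw [qPerm_eq_swap_conj ha, qPerm_eq_swap_conj ha', h]
    simp [mul_assoc]

theorem MovesFirstBefore.evenlyConjugate {a o : A} (h : MovesFirstBefore (π false) (ρ false) a o)
    (hrow : ρ true = π true) (ha : ∀ x, π true a ≤ π true x) : EvenlyConjugate π ρ := by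
  have hX : XOf π = o := XOf_eq_of_le h.first
  obtain rfl | hao := eq_or_ne a o
  · obtain rfl : ρ = π := funext (Bool.forall_bool.2 ⟨h.eq_of_first_eq, hrow⟩)
    exact .of_eq rfl rfl
  have hXρ : a ≠ XOf ρ := by
    intro haX
    have hle : ρ false a ≤ π false o := by simp [haX, XOf, posFirst]
    exact (h.lt_of_ne hao).not_ge (h.keep a le_rfl ▸ hle)
  refine .of_erasePoint_eq ha (by rwa [hrow]) (hX ▸ hao) hXρ ?_
  rw [hrow, sPerm_comm (π true), sPerm_comm (π true), erasePoint_inv, erasePoint_inv,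
    h.erasePoint_sPerm_eq ha]

theorem LeftMove.evenlyConjugate (h : LeftMove π ρ) : EvenlyConjugate π ρ := by
  obtain ⟨ε, a, o, ha, ho, hε, hkeep, hmoved, hshift⟩ := h
  have hmove : MovesFirstBefore (π !ε) (ρ !ε) a o := ⟨ho, hkeep, hmoved, hshift⟩
  cases ε
  · have hX : XOf π = a := XOf_eq_of_le ha
    have hX' : XOf ρ = a := XOf_eq_of_le (by rwa [hε])
    exact .of_eq (hX'.trans hX.symm) (by
      rw [qPerm, qPerm, hX, hX', hε]; exact hmove.erasePoint_sPerm_eq ha)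
  · exact hmove.evenlyConjugate hε ha

theorem evenlyConjugate_of_mem_EClass (h : ρ ∈ EClass π) : EvenlyConjugate π ρ := by
  induction h with
  | refl => exact .of_eq rfl rfl
  | tail _ hmove ih => exact ih.trans (hmove.elim (·.evenlyConjugate) (·.evenlyConjugate))

theorem exists_mul_mem_ZOf_of_mem_renamings {ν : Perm A} (hν : ν ∈ renamings π) :
    ∃ φ ∈ alternatingGroup A, ν * φ ∈ ZOf π (qPerm π) := by
  obtain ⟨φ, hφ, hX, hQ⟩ := evenlyConjugate_of_mem_EClass hν
  rw [XOf_pairRename] at hX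
  rw [qPerm_pairRename, eq_mul_inv_iff_mul_eq] at hQ
  refine ⟨φ, hφ, by simp [hX], ?_⟩
  calc (ν * φ)⁻¹ * qPerm π * (ν * φ) = φ⁻¹ * (ν⁻¹ * qPerm π * ν * φ) := by group
    _ = qPerm π := by rw [hQ, inv_mul_cancel_left]

end QPerm

theorem stmt6_general {A : Type*} [Fintype A] [DecidableEq A] [Nonempty A] (π : RPair A)
    (S Q : Equiv.Perm A) (hS : IsS π S) (hQ : IsQ π S Q)
    (hZ : ZOf π Q ⊆ (alternatingGroup A : Set (Equiv.Perm A))) :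
    renamings π ⊆ (alternatingGroup A : Set (Equiv.Perm A)) := by
  intro ν hν
  have hQπ : Q = qPerm π := by rw [hQ.eq_erasePoint, hS.eq_sPerm, qPerm]
  obtain ⟨φ, hφ, hνφ⟩ := exists_mul_mem_ZOf_of_mem_renamings hν
  exact (Subgroup.mul_mem_cancel_right _ hφ).1 (hZ (hQπ ▸ hνφ))

/-- if `Z(π) ⊆ Alt(A)` then `G(π) ⊆ Alt(A)`. -/
theorem stmt6 {A : Type*} [Fintype A] [DecidableEq A] [Nonempty A]
    (hN : 2 ≤ Fintype.card A) (π : RPair A) (hπ : PairIrreducible π)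
    (S Q : Equiv.Perm A) (hS : IsS π S) (hQ : IsQ π S Q)
    (hZ : ZOf π Q ⊆ (alternatingGroup A : Set (Equiv.Perm A))) :
    renamings π ⊆ (alternatingGroup A : Set (Equiv.Perm A)) :=
  stmt6_general π S Q hS hQ hZ
end

section
/- For every irreducible pair π on a finite alphabet A, the alternating group Alt(A) is contained in the renaming set G(π). -/
open Equiv

variable {A : Type*} [Fintype A]

/-!
Each Rauzy induction is an injective map of the finite set of pairs, so it is undone by one of its
own iterates. Hence lying in the same extended Rauzy class is an equivalence relation, compatible
with renaming, and `G(π)` is a subgroup of `Sym(A)` depending only on the class of `π`.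

The class of an irreducible pair contains a pair with a letter `a` that is first in one row and last
in the other. Right and left inductions rotate each row of such a pair independently around `a`, so
any other letter `z` can be moved to the last place of the row that begins with `a` and to the first
place of the other row. Rotating now around `z` one step further than before gives the original
pair with `a` and `z` exchanged and its rows shifted cyclically, in opposite directions. A second
exchange, of `z` with `b`, undoes the shifts and leaves the renaming `(a z)(z b)`. As every letter
can take the place of `a`, all 3-cycles are renamings.
-/

section Rotations

variable {n : ℕ}

theorem revPerm_mul_finRotate_mul_revPerm :
    Fin.revPerm * finRotate n * Fin.revPerm = (finRotate n)⁻¹ := by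
  ext x
  simp [Perm.inv_def, finRotate_symm_apply, finRotate_apply, Fin.rev_add]

variable [NeZero n]

theorem finRotate_top : finRotate n ⊤ = ⊥ := by
  obtain ⟨m, rfl⟩ := Nat.exists_eq_succ_of_ne_zero (NeZero.ne n)
  exact finRotate_last

/-- The cycle `k + 1 ↦ k + 2 ↦ ⋯ ↦ ⊤ ↦ k + 1` of the positions above `k`. Written as a product of
two cycles, it is the identity when `k = ⊤`. -/
def rotAbove (k : Fin n) : Perm (Fin n) := Fin.cycleIcc k ⊤ * swap k ⊤

/-- The cycle `k - 1 ↦ k - 2 ↦ ⋯ ↦ ⊥ ↦ k - 1` of the positions below `k`, which is the mirror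
image of `rotAbove`. -/
def rotBelow (k : Fin n) : Perm (Fin n) := Fin.revPerm * rotAbove k.rev * Fin.revPerm

theorem rotAbove_of_le {k x : Fin n} (hx : x ≤ k) : rotAbove k x = x := by
  rcases hx.eq_or_lt with rfl | hx
  · rw [rotAbove, Perm.mul_apply, swap_apply_left, Fin.cycleIcc_of_last le_top]
  · rw [rotAbove, Perm.mul_apply, swap_apply_of_ne_of_ne hx.ne (hx.trans_le le_top).ne,
      Fin.cycleIcc_of_lt hx]

theorem rotAbove_le_iff_of_le {k m x : Fin n} (hm : m ≤ k) : rotAbove k x ≤ m ↔ x ≤ m := by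
  refine ⟨fun h => ?_, fun h => (rotAbove_of_le (h.trans hm)).trans_le h⟩
  rwa [(rotAbove k).injective (rotAbove_of_le (h.trans hm))] at h

theorem val_rotAbove_of_lt {k x : Fin n} (hkx : k < x) (hx : x < ⊤) :
    (rotAbove k x : ℕ) = x + 1 := by
  rw [rotAbove, Perm.mul_apply, swap_apply_of_ne_of_ne hkx.ne' hx.ne,
    Fin.cycleIcc_of_ge_of_lt hkx.le hx, Fin.val_add_one_of_lt' (by grind [Fin.val_top])]

theorem val_rotAbove_top {k : Fin n} (hk : k < ⊤) : (rotAbove k ⊤ : ℕ) = k + 1 := by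
  rw [rotAbove, Perm.mul_apply, swap_apply_right, Fin.cycleIcc_of_ge_of_lt le_rfl hk,
    Fin.val_add_one_of_lt' (by grind [Fin.val_top])]

theorem rotAbove_top : rotAbove (⊤ : Fin n) = 1 :=
  Equiv.ext fun _ => rotAbove_of_le le_top

theorem rotBelow_of_le {k x : Fin n} (hx : k ≤ x) : rotBelow k x = x := by
  simp [rotBelow, rotAbove_of_le (Fin.rev_le_rev.mpr hx)]

theorem val_rotBelow_of_lt {k x : Fin n} (hxk : x < k) (hx : ⊥ < x) :
    (rotBelow k x : ℕ) = x - 1 := by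
  have hrev := val_rotAbove_of_lt (Fin.rev_lt_rev.mpr hxk)
    (Fin.rev_bot (n := n) ▸ Fin.rev_lt_rev.mpr hx)
  simp only [rotBelow, Perm.mul_apply, Fin.revPerm_apply, Fin.val_rev, hrev]
  omega

theorem val_rotBelow_bot {k : Fin n} (hk : ⊥ < k) : (rotBelow k ⊥ : ℕ) = k - 1 := by
  have hrev := val_rotAbove_top (Fin.rev_bot (n := n) ▸ Fin.rev_lt_rev.mpr hk)
  simp only [rotBelow, Perm.mul_apply, Fin.revPerm_apply, Fin.rev_bot, Fin.val_rev, hrev]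
  omega

theorem rotBelow_bot : rotBelow (⊥ : Fin n) = 1 :=
  Equiv.ext fun _ => rotBelow_of_le bot_le

theorem exists_pow_rotAbove_eq_top {k x : Fin n} (hkx : k < x) :
    ∃ i : ℕ, (rotAbove k ^ i) x = ⊤ := by
  induction x using WellFoundedGT.induction with
  | _ x ih =>
    rcases (le_top (a := x)).eq_or_lt with rfl | hx
    · exact ⟨0, rfl⟩
    · have hlt : x < rotAbove k x := by rw [Fin.lt_def, val_rotAbove_of_lt hkx hx]; omega
      obtain ⟨i, hi⟩ := ih _ hlt (hkx.trans hlt)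
      exact ⟨i + 1, by rw [pow_succ, Perm.mul_apply, hi]⟩

theorem exists_pow_rotBelow_eq_bot {k x : Fin n} (hxk : x < k) :
    ∃ i : ℕ, (rotBelow k ^ i) x = ⊥ := by
  obtain ⟨i, hi⟩ := exists_pow_rotAbove_eq_top (Fin.rev_lt_rev.mpr hxk)
  have hconj : rotBelow k ^ i = Fin.revPerm * rotAbove k.rev ^ i * Fin.revPerm⁻¹ := by
    rw [← conj_pow]; rfl
  exact ⟨i, by rw [hconj]; simp [hi]⟩

theorem rotAbove_bot : rotAbove (⊥ : Fin n) = finRotate n * swap ⊥ ⊤ := by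
  obtain ⟨m, rfl⟩ := Nat.exists_eq_succ_of_ne_zero (NeZero.ne n)
  rw [rotAbove, bot_eq_zero, Fin.cycleIcc_zero_eq_cycleRange, ← Fin.cycleRange_last]
  rfl

theorem rotBelow_top : rotBelow (⊤ : Fin n) = (finRotate n)⁻¹ * swap ⊥ ⊤ := by
  have hswap : swap ⊥ ⊤ * Fin.revPerm = Fin.revPerm * swap (⊥ : Fin n) ⊤ := by
    rw [mul_swap_eq_swap_mul, Fin.revPerm_apply, Fin.revPerm_apply, Fin.rev_bot, Fin.rev_top,
      swap_comm]
  rw [rotBelow, Fin.rev_top, rotAbove_bot, ← revPerm_mul_finRotate_mul_revPerm]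
  simp only [mul_assoc, hswap]

theorem rotBelow_top_pow_mul_rotAbove_bot_pow (i : ℕ) :
    rotBelow (⊤ : Fin n) ^ i * (finRotate n)⁻¹ * rotAbove ⊥ ^ i = (finRotate n)⁻¹ := by
  have hsemi : SemiconjBy (finRotate n)⁻¹ (rotAbove ⊥) (rotBelow ⊤)⁻¹ := by
    simp [SemiconjBy, rotAbove_bot, rotBelow_top]
  rw [mul_assoc, (hsemi.pow_right i).eq, inv_pow, mul_inv_cancel_left]

theorem rotAbove_bot_pow_mul_rotBelow_top_pow (i : ℕ) :
    rotAbove (⊥ : Fin n) ^ i * finRotate n * rotBelow ⊤ ^ i = finRotate n := by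
  have hsemi : SemiconjBy (finRotate n) (rotBelow ⊤) (rotAbove ⊥)⁻¹ := by
    simp [SemiconjBy, rotAbove_bot, rotBelow_top]
  rw [mul_assoc, (hsemi.pow_right i).eq, inv_pow, mul_inv_cancel_left]

theorem rotBelow_top_pow_succ_mul_rotAbove_bot_pow {i : ℕ} {q : Fin n}
    (hq : (rotAbove ⊥ ^ i) q = ⊤) :
    rotBelow ⊤ ^ (i + 1) * rotAbove ⊥ ^ i = (finRotate n)⁻¹ * swap ⊥ q := by
  have hbot : (rotAbove ⊥ ^ i) (⊥ : Fin n) = ⊥ :=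
    Perm.pow_apply_eq_self_of_apply_eq_self (rotAbove_of_le le_rfl) i
  have hswap : swap ⊥ ⊤ * rotAbove ⊥ ^ i = rotAbove ⊥ ^ i * swap ⊥ q := by
    rw [mul_swap_eq_swap_mul, hbot, hq]
  calc rotBelow ⊤ ^ (i + 1) * rotAbove ⊥ ^ i
      = rotBelow ⊤ ^ i * (finRotate n)⁻¹ * (swap ⊥ ⊤ * rotAbove ⊥ ^ i) := by
        rw [pow_succ]; nth_rw 2 [rotBelow_top]; simp only [mul_assoc]
    _ = rotBelow ⊤ ^ i * (finRotate n)⁻¹ * rotAbove ⊥ ^ i * swap ⊥ q := by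
        rw [hswap]; simp only [mul_assoc]
    _ = (finRotate n)⁻¹ * swap ⊥ q := by rw [rotBelow_top_pow_mul_rotAbove_bot_pow]

theorem rotAbove_bot_pow_succ_mul_rotBelow_top_pow {j : ℕ} {q : Fin n}
    (hq : (rotBelow ⊤ ^ j) q = ⊥) :
    rotAbove ⊥ ^ (j + 1) * rotBelow ⊤ ^ j = finRotate n * swap ⊤ q := by
  have htop : (rotBelow ⊤ ^ j) (⊤ : Fin n) = ⊤ :=
    Perm.pow_apply_eq_self_of_apply_eq_self (rotBelow_of_le le_rfl) j
  have hswap : swap ⊥ ⊤ * rotBelow ⊤ ^ j = rotBelow ⊤ ^ j * swap ⊤ q := by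
    rw [mul_swap_eq_swap_mul, htop, hq, swap_comm]
  calc rotAbove ⊥ ^ (j + 1) * rotBelow ⊤ ^ j
      = rotAbove ⊥ ^ j * finRotate n * (swap ⊥ ⊤ * rotBelow ⊤ ^ j) := by
        rw [pow_succ]; nth_rw 2 [rotAbove_bot]; simp only [mul_assoc]
    _ = rotAbove ⊥ ^ j * finRotate n * rotBelow ⊤ ^ j * swap ⊤ q := by
        rw [hswap]; simp only [mul_assoc]
    _ = finRotate n * swap ⊤ q := by rw [rotAbove_bot_pow_mul_rotBelow_top_pow]

end Rotations

theorem apply_iff_apply_of_imp {α β : Type*} [Finite β] {p : β → Prop} (u v : α ≃ β)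
    (h : ∀ x, p (u x) → p (v x)) (x : α) : p (u x) ↔ p (v x) := by
  refine ⟨h x, fun hx => ?_⟩
  have hmaps : ∀ y, p y → p ((u.symm.trans v) y) := fun y hy => h _ (by simpa using hy)
  simpa using Perm.perm_symm_on_of_perm_on_finite hmaps hx

section EquivToBoundedOrder

variable {α β : Type*} [PartialOrder β]

theorem apply_eq_top_of_forall_le [OrderTop β] (e : α ≃ β) {z : α} (h : ∀ x, e x ≤ e z) :
    e z = ⊤ :=
  top_le_iff.mp (by simpa using h (e.symm ⊤))

theorem apply_eq_bot_of_forall_le [OrderBot β] (e : α ≃ β) {z : α} (h : ∀ x, e z ≤ e x) :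
    e z = ⊥ :=
  le_bot_iff.mp (by simpa using h (e.symm ⊥))

end EquivToBoundedOrder

theorem reflTransGen_iterate {α : Type*} {r : α → α → Prop} {f : α → α} (hf : ∀ x, r x (f x))
    (i : ℕ) (x : α) : Relation.ReflTransGen r x (f^[i] x) := by
  induction i with
  | zero => exact .refl
  | succ i ih =>
    rw [Function.iterate_succ_apply']
    exact ih.tail (hf _)

theorem reflTransGen_swap_of_injective {α : Type*} [Finite α] {r : α → α → Prop}
    (h : ∀ x y, r x y → ∃ f : α → α, f.Injective ∧ f x = y ∧ ∀ w, r w (f w)) {x y : α}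
    (hxy : Relation.ReflTransGen r x y) : Relation.ReflTransGen r y x := by
  induction hxy with
  | refl => exact .refl
  | @tail w _ _ hstep ih =>
    obtain ⟨f, hf, rfl, hr⟩ := h _ _ hstep
    obtain ⟨n, hn, hperiodic⟩ := hf.mem_periodicPts w
    obtain ⟨m, rfl⟩ := Nat.exists_eq_succ_of_ne_zero hn.ne'
    have hback : f^[m] (f w) = w := by rwa [← Function.iterate_succ_apply]
    exact (hback ▸ reflTransGen_iterate hr m (f w)).trans ih

namespace RPair

/-- The pair obtained from `π` by letting `f` permute the positions of row `ε` and `g` those of the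
other row. -/
def actRows (ε : Bool) (f g : Perm (Fin (Fintype.card A))) (π : RPair A) : RPair A :=
  fun δ => (π δ).trans (if δ = ε then f else g)

section Rows

variable (ε : Bool) (f g : Perm (Fin (Fintype.card A))) (π : RPair A)

@[simp]
theorem actRows_apply_self : actRows ε f g π ε = (π ε).trans f := by simp [actRows]

@[simp]
theorem actRows_apply_not : actRows ε f g π (!ε) = (π (!ε)).trans g := by simp [actRows]

theorem actRows_not : actRows (!ε) f g π = actRows ε g f π := by
  cases ε <;> funext δ <;> cases δ <;> simp [actRows]

theorem actRows_one_one : actRows ε 1 1 π = π := by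
  funext δ; ext x; simp [actRows]

theorem actRows_actRows (f' g' : Perm (Fin (Fintype.card A))) :
    actRows ε f' g' (actRows ε f g π) = actRows ε (f' * f) (g' * g) π := by
  funext δ; ext x; simp only [actRows]; split_ifs <;> rfl

theorem pairRename_actRows (ν : Perm A) :
    pairRename (actRows ε f g π) ν = actRows ε f g (pairRename π ν) :=
  rfl

variable {π} in
theorem ext_rows {ρ : RPair A} (h : π ε = ρ ε) (h' : π (!ε) = ρ (!ε)) : π = ρ := by
  cases ε <;> funext δ <;> cases δ <;> assumption

end Rows

/-- The common form of right and left Rauzy induction of type `ε`: the letter at position `p` of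
row `ε` is at some position `k` of the other row, which is then permuted by `rot k`. -/
def rauzyInduction (rot : Fin (Fintype.card A) → Perm (Fin (Fintype.card A)))
    (p : Fin (Fintype.card A)) (ε : Bool) (π : RPair A) : RPair A :=
  actRows ε 1 (rot (π (!ε) ((π ε).symm p))) π

section RauzyInduction

variable {rot : Fin (Fintype.card A) → Perm (Fin (Fintype.card A))}

@[simp]
theorem rauzyInduction_apply_self (p : Fin (Fintype.card A)) (ε : Bool) (π : RPair A) :
    rauzyInduction rot p ε π ε = π ε :=
  actRows_apply_self ε 1 _ π

@[simp]
theorem rauzyInduction_apply_not (p : Fin (Fintype.card A)) (ε : Bool) (π : RPair A) :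
    rauzyInduction rot p ε π (!ε) = (π (!ε)).trans (rot (π (!ε) ((π ε).symm p))) :=
  actRows_apply_not ε 1 _ π

theorem rauzyInduction_injective (hrot : ∀ k, rot k k = k) (p : Fin (Fintype.card A)) (ε : Bool) :
    (rauzyInduction rot p ε : RPair A → RPair A).Injective := by
  intro π ρ h
  have hself : π ε = ρ ε := by simpa using congrFun h ε
  have hnot := congrFun h (!ε)
  simp only [rauzyInduction_apply_not, hself] at hnot
  have hpos : π (!ε) ((ρ ε).symm p) = ρ (!ε) ((ρ ε).symm p) := by
    simpa [hrot] using DFunLike.congr_fun hnot ((ρ ε).symm p)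
  rw [hpos] at hnot
  exact ext_rows ε hself (Equiv.ext fun x => by simpa using DFunLike.congr_fun hnot x)

theorem iterate_rauzyInduction (hrot : ∀ k, rot k k = k) (p : Fin (Fintype.card A)) (ε : Bool)
    (π : RPair A) (i : ℕ) :
    (rauzyInduction rot p ε)^[i] π = actRows ε 1 (rot (π (!ε) ((π ε).symm p)) ^ i) π := by
  induction i with
  | zero => exact (actRows_one_one ε π).symm
  | succ i ih =>
    have hfix : (rot (π (!ε) ((π ε).symm p)) ^ i) (π (!ε) ((π ε).symm p)) = _ :=
      Perm.pow_apply_eq_self_of_apply_eq_self (hrot _) i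
    rw [Function.iterate_succ_apply', ih, rauzyInduction, actRows_actRows, pow_succ', one_mul]
    simp [Perm.one_def, hfix]

theorem pairRename_rauzyInduction (p : Fin (Fintype.card A)) (ε : Bool) (π : RPair A)
    (ν : Perm A) :
    pairRename (rauzyInduction rot p ε π) ν = rauzyInduction rot p ε (pairRename π ν) := by
  simp [rauzyInduction, pairRename_actRows, pairRename]

end RauzyInduction

theorem mem_EClass_self (π : RPair A) : π ∈ EClass π := Relation.ReflTransGen.refl

theorem mem_EClass_trans {π ρ σ : RPair A} (hρ : ρ ∈ EClass π) (hσ : σ ∈ EClass ρ) :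
    σ ∈ EClass π :=
  Relation.ReflTransGen.trans hρ hσ

variable [Nonempty A]

/-- Right Rauzy induction of type `ε`, totalized: it fixes the pairs whose two rows end with the
same letter. -/
noncomputable abbrev rightInduction (ε : Bool) : RPair A → RPair A := rauzyInduction rotAbove ⊤ ε

/-- Left Rauzy induction of type `ε`; it fixes the pairs whose two rows begin with the same
letter. -/
noncomputable abbrev leftInduction (ε : Bool) : RPair A → RPair A := rauzyInduction rotBelow ⊥ ε

variable {π π' ρ : RPair A} {ε : Bool}

theorem exists_eq_rightInduction_of_rightMove (h : RightMove π π') :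
    ∃ ε, π' = rightInduction ε π := by
  obtain ⟨ε, zc, zo, hzc, hzo, hself, hle, hlast, hlt⟩ := h
  replace hzc := (Equiv.symm_apply_eq _).mpr (apply_eq_top_of_forall_le (π ε) hzc).symm
  replace hzo := apply_eq_top_of_forall_le (π (!ε)) hzo
  refine ⟨ε, ext_rows ε (by simp [hself]) ?_⟩
  ext b
  simp only [rauzyInduction_apply_not, Equiv.trans_apply, hzc]
  rcases le_or_gt (π (!ε) b) (π (!ε) zc) with hb | hb
  · rw [hle b hb, rotAbove_of_le hb]
  · by_cases hbo : b = zo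
    · rw [hbo, hlast, hzo, val_rotAbove_top (hzo ▸ hbo ▸ hb)]
    · have hb' : π (!ε) b < ⊤ := lt_top_iff_ne_top.mpr fun h =>
        hbo ((π (!ε)).injective (h.trans hzo.symm))
      rw [hlt b hb.not_ge hbo, val_rotAbove_of_lt hb hb']

theorem rightMove_rightInduction (h : π (!ε) ((π ε).symm ⊤) ≠ ⊤) :
    RightMove π (rightInduction ε π) := by
  refine ⟨ε, (π ε).symm ⊤, (π (!ε)).symm ⊤, by simp, by simp, ?_, fun b hb => ?_, ?_,
    fun b hb hbo => ?_⟩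
  · simp
  · simp [rotAbove_of_le hb]
  · simp [val_rotAbove_top (lt_top_iff_ne_top.mpr h)]
  · have hb' : π (!ε) b < ⊤ := lt_top_iff_ne_top.mpr fun h => hbo (by simp [← h])
    simp [val_rotAbove_of_lt (not_le.mp hb) hb']

theorem exists_eq_leftInduction_of_leftMove (h : LeftMove π π') :
    ∃ ε, π' = leftInduction ε π := by
  obtain ⟨ε, ac, ao, hac, hao, hself, hle, hfirst, hlt⟩ := h
  replace hac := (Equiv.symm_apply_eq _).mpr (apply_eq_bot_of_forall_le (π ε) hac).symm
  replace hao := apply_eq_bot_of_forall_le (π (!ε)) hao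
  refine ⟨ε, ext_rows ε (by simp [hself]) ?_⟩
  ext b
  simp only [rauzyInduction_apply_not, Equiv.trans_apply, hac]
  rcases le_or_gt (π (!ε) ac) (π (!ε) b) with hb | hb
  · rw [hle b hb, rotBelow_of_le hb]
  · by_cases hbo : b = ao
    · rw [hbo, hfirst, hao, val_rotBelow_bot (hao ▸ hbo ▸ hb)]
    · have hb' : ⊥ < π (!ε) b := bot_lt_iff_ne_bot.mpr fun h =>
        hbo ((π (!ε)).injective (h.trans hao.symm))
      rw [hlt b hb.not_ge hbo, val_rotBelow_of_lt hb hb']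

theorem leftMove_leftInduction (h : π (!ε) ((π ε).symm ⊥) ≠ ⊥) :
    LeftMove π (leftInduction ε π) := by
  refine ⟨ε, (π ε).symm ⊥, (π (!ε)).symm ⊥, by simp, by simp, ?_, fun b hb => ?_, ?_,
    fun b hb hbo => ?_⟩
  · simp
  · simp [rotBelow_of_le hb]
  · simp [val_rotBelow_bot (bot_lt_iff_ne_bot.mpr h)]
  · have hb' : ⊥ < π (!ε) b := bot_lt_iff_ne_bot.mpr fun h => hbo (by simp [← h])
    simp [val_rotBelow_of_lt (not_le.mp hb) hb']

/-- A single induction step, right or left and of either type. -/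
def InductionStep (π ρ : RPair A) : Prop :=
  ∃ ε, ρ = rightInduction ε π ∨ ρ = leftInduction ε π

theorem mem_EClass_iff : ρ ∈ EClass π ↔ Relation.ReflTransGen InductionStep π ρ := by
  refine ⟨Relation.ReflTransGen.mono ?_ _ _, Relation.ReflTransGen.lift' id ?_ _ _⟩
  · rintro π ρ (hright | hleft)
    · exact (exists_eq_rightInduction_of_rightMove hright).imp fun _ => .inl
    · exact (exists_eq_leftInduction_of_leftMove hleft).imp fun _ => .inr
  · rintro π _ ⟨ε, rfl | rfl⟩
    · by_cases htop : π (!ε) ((π ε).symm ⊤) = ⊤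
      · simpa [rauzyInduction, htop, rotAbove_top, actRows_one_one] using .refl
      · exact .single (.inl (rightMove_rightInduction htop))
    · by_cases hbot : π (!ε) ((π ε).symm ⊥) = ⊥
      · simpa [rauzyInduction, hbot, rotBelow_bot, actRows_one_one] using .refl
      · exact .single (.inr (leftMove_leftInduction hbot))

theorem iterate_rightInduction_mem_EClass (ε : Bool) (i : ℕ) (π : RPair A) :
    (rightInduction ε)^[i] π ∈ EClass π :=
  mem_EClass_iff.mpr (reflTransGen_iterate (fun _ => ⟨ε, .inl rfl⟩) i π)

theorem iterate_leftInduction_mem_EClass (ε : Bool) (i : ℕ) (π : RPair A) :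
    (leftInduction ε)^[i] π ∈ EClass π :=
  mem_EClass_iff.mpr (reflTransGen_iterate (fun _ => ⟨ε, .inr rfl⟩) i π)

theorem mem_EClass_symm (h : ρ ∈ EClass π) : π ∈ EClass ρ := by
  rw [mem_EClass_iff] at h ⊢
  refine reflTransGen_swap_of_injective ?_ h
  rintro π _ ⟨ε, rfl | rfl⟩
  · exact ⟨rightInduction ε, rauzyInduction_injective (fun k => rotAbove_of_le le_rfl) ⊤ ε, rfl,
      fun _ => ⟨ε, .inl rfl⟩⟩
  · exact ⟨leftInduction ε, rauzyInduction_injective (fun k => rotBelow_of_le le_rfl) ⊥ ε, rfl,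
      fun _ => ⟨ε, .inr rfl⟩⟩

theorem pairRename_mem_EClass (h : ρ ∈ EClass π) (ν : Perm A) :
    pairRename ρ ν ∈ EClass (pairRename π ν) := by
  rw [mem_EClass_iff] at h ⊢
  refine h.lift (pairRename · ν) ?_
  rintro π _ ⟨ε, rfl | rfl⟩
  · exact ⟨ε, .inl (pairRename_rauzyInduction ⊤ ε π ν)⟩
  · exact ⟨ε, .inr (pairRename_rauzyInduction ⊥ ε π ν)⟩

/-- The renaming set `G(π)` as a subgroup of `Perm A`. -/
def renamingSubgroup (π : RPair A) : Subgroup (Perm A) where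
  carrier := renamings π
  one_mem' := mem_EClass_self π
  mul_mem' {_ ν} hμ hν := mem_EClass_trans hν (pairRename_mem_EClass hμ ν)
  inv_mem' {ν} hν := by
    have h := mem_EClass_symm (pairRename_mem_EClass hν ν⁻¹)
    have hcancel : pairRename (pairRename π ν) ν⁻¹ = π := by
      funext ε; ext x; simp [pairRename]
    rwa [hcancel] at h

theorem renamings_eq_of_mem_EClass (h : ρ ∈ EClass π) : renamings π = renamings ρ := by
  ext ν
  have hν := pairRename_mem_EClass h ν
  exact ⟨fun hπ => mem_EClass_trans (mem_EClass_symm h) (mem_EClass_trans hπ hν),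
    fun hρ => mem_EClass_trans h (mem_EClass_trans hρ (mem_EClass_symm hν))⟩

theorem pairIrreducible_iff (ε : Bool) :
    PairIrreducible π ↔ ∀ k, (∀ x, π ε x ≤ k ↔ π (!ε) x ≤ k) → k = ⊤ := by
  have htop : ∀ k : Fin (Fintype.card A), (k : ℕ) + 1 = Fintype.card A ↔ k = ⊤ := fun k => by
    rw [Fin.ext_iff, Fin.val_top]; omega
  simp only [PairIrreducible, htop]
  refine forall_congr' fun k => imp_congr_left ?_
  cases ε
  · exact ⟨apply_iff_apply_of_imp (p := (· ≤ k)) _ _, fun h x => (h x).mp⟩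
  · exact ⟨fun h x => (apply_iff_apply_of_imp (p := (· ≤ k)) _ _ h x).symm, fun h x => (h x).mpr⟩

theorem pairIrreducible_rightInduction (h : PairIrreducible π) (ε : Bool) :
    PairIrreducible (rightInduction ε π) := by
  rw [pairIrreducible_iff ε] at h ⊢
  intro k hk
  simp only [rauzyInduction_apply_self, rauzyInduction_apply_not, Equiv.trans_apply] at hk
  set z := (π ε).symm ⊤ with hz
  by_contra hne
  have hkz : k < π (!ε) z := by
    rw [← not_le, ← rotAbove_of_le (le_refl (π (!ε) z)), ← hk z, hz, Equiv.apply_symm_apply,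
      top_le_iff]
    exact hne
  exact hne (h k fun x => (hk x).trans (rotAbove_le_iff_of_le hkz.le))

theorem exists_lt_and_lt_of_pairIrreducible (h : PairIrreducible π) {z : A} (hz : π ε z = ⊤)
    (hpos : π (!ε) z ≠ ⊥) : ∃ x, π ε x < π (!ε) z ∧ π (!ε) z < π (!ε) x := by
  by_contra! hle
  have hpred : ∀ y, y ≤ Order.pred (π (!ε) z) ↔ y < π (!ε) z := fun y =>
    Order.le_pred_iff_of_not_isMin (by rwa [isMin_iff_eq_bot])
  have hprefix : ∀ x, π ε x < π (!ε) z → π (!ε) x < π (!ε) z := fun x hx =>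
    (hle x hx).lt_of_ne fun heq =>
      (hx.trans_le le_top).ne ((π (!ε)).injective heq ▸ hz)
  have htop : Order.pred (π (!ε) z) = ⊤ := (pairIrreducible_iff ε).mp h _
    (apply_iff_apply_of_imp (p := (· ≤ Order.pred (π (!ε) z))) _ _
      (by simpa only [hpred] using hprefix))
  exact ((hpred _).mp le_rfl).not_ge (htop ▸ le_top)

/-- The letter `a` is the first one of row `ε` and the last one of the other row. The pair is
standard in the sense of `PairStandard` when each row begins with such a letter. -/
def IsStandardAt (π : RPair A) (ε : Bool) (a : A) : Prop := π ε a = ⊥ ∧ π (!ε) a = ⊤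

/-- The pair obtained from `π` by exchanging the letters `a` and `z` and then shifting row `ε`
cyclically one position to the left and the other row one position to the right. If `a` is the
first letter of row `ε` and the last one of the other row, then `z` becomes the last letter of
row `ε` and the first one of the other row. -/
def exchange [DecidableEq A] (ε : Bool) (a z : A) (π : RPair A) : RPair A :=
  actRows ε (finRotate _)⁻¹ (finRotate _) (pairRename π (swap a z))

theorem exists_isStandardAt_of_pairIrreducible (h : PairIrreducible π) :
    ∃ ρ ∈ EClass π, ∃ ε a, IsStandardAt ρ ε a := by
  -- Let `z` be the last letter of row `ε`. Rotating the other row around `z` makes its last letter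
  -- one that stands in row `ε` further left than `z` in the other row; then the rows swap roles.
  suffices key : ∀ (m : Fin (Fintype.card A)) (π : RPair A) (ε : Bool), PairIrreducible π →
      π (!ε) ((π ε).symm ⊤) = m → ∃ ρ ∈ EClass π, ∃ ε a, IsStandardAt ρ ε a from
    key _ π true h rfl
  intro m
  induction m using WellFoundedLT.induction with
  | _ m ih =>
    intro π ε h hm
    set z := (π ε).symm ⊤ with hz
    have hztop : π ε z = ⊤ := by simp [hz]
    by_cases hbot : π (!ε) z = ⊥
    · exact ⟨π, mem_EClass_self π, !ε, z, hbot, by simpa using hztop⟩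
    obtain ⟨x, hxz, hzx⟩ := exists_lt_and_lt_of_pairIrreducible h hztop hbot
    obtain ⟨i, hi⟩ := exists_pow_rotAbove_eq_top hzx
    set σ := (rightInduction ε)^[i] π with hσ
    have hσirr : PairIrreducible σ :=
      Function.Iterate.rec PairIrreducible h (fun _ h => pairIrreducible_rightInduction h ε) i
    rw [iterate_rauzyInduction (fun k => rotAbove_of_le le_rfl), ← hz] at hσ
    have hσx : (σ (!ε)).symm ⊤ = x := by
      rw [Equiv.symm_apply_eq, hσ, actRows_apply_not, Equiv.trans_apply, hi]
    obtain ⟨ρ, hρ, hstd⟩ := ih (π ε x) (hm ▸ hxz) σ (!ε) hσirr (by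
      rw [hσx, Bool.not_not, hσ, actRows_apply_self]; rfl)
    exact ⟨ρ, mem_EClass_trans (iterate_rightInduction_mem_EClass ε i π) hρ, hstd⟩

namespace IsStandardAt

variable {a : A}

theorem actRows_rotAbove_mem_EClass (h : IsStandardAt π ε a) (i : ℕ) :
    actRows ε (rotAbove ⊥ ^ i) 1 π ∈ EClass π := by
  have hiter := iterate_rightInduction_mem_EClass (!ε) i π
  rwa [iterate_rauzyInduction (fun k => rotAbove_of_le le_rfl), ← h.2, Equiv.symm_apply_apply,
    Bool.not_not, h.1, actRows_not] at hiter

theorem actRows_rotBelow_mem_EClass (h : IsStandardAt π ε a) (j : ℕ) :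
    actRows ε 1 (rotBelow ⊤ ^ j) π ∈ EClass π := by
  have hiter := iterate_leftInduction_mem_EClass ε j π
  rwa [iterate_rauzyInduction (fun k => rotBelow_of_le le_rfl), ← h.1, Equiv.symm_apply_apply,
    h.2] at hiter

theorem actRows_rot_mem_EClass (h : IsStandardAt π ε a) (i j : ℕ) :
    actRows ε (rotAbove ⊥ ^ i) (rotBelow ⊤ ^ j) π ∈ EClass π := by
  have hstd : IsStandardAt (actRows ε (rotAbove ⊥ ^ i) 1 π) ε a :=
    ⟨by simpa [h.1] using Perm.pow_apply_eq_self_of_apply_eq_self (rotAbove_of_le le_rfl) i,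
      by simpa using h.2⟩
  have hmem := mem_EClass_trans (h.actRows_rotAbove_mem_EClass i)
    (hstd.actRows_rotBelow_mem_EClass j)
  rwa [actRows_actRows, one_mul, mul_one] at hmem

theorem exchange_mem_EClass [DecidableEq A] (h : IsStandardAt π ε a) {z : A} (hz : z ≠ a) :
    exchange ε a z π ∈ EClass π := by
  obtain ⟨i, hi⟩ : ∃ i : ℕ, (rotAbove ⊥ ^ i) (π ε z) = ⊤ :=
    exists_pow_rotAbove_eq_top (bot_lt_iff_ne_bot.mpr (h.1 ▸ (π ε).injective.ne hz))
  obtain ⟨j, hj⟩ : ∃ j : ℕ, (rotBelow ⊤ ^ j) (π (!ε) z) = ⊥ :=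
    exists_pow_rotBelow_eq_bot (lt_top_iff_ne_top.mpr (h.2 ▸ (π (!ε)).injective.ne hz))
  have hstd : IsStandardAt (actRows ε (rotAbove ⊥ ^ i) (rotBelow ⊤ ^ j) π) (!ε) z :=
    ⟨by simpa using hj, by simpa using hi⟩
  have hmem := mem_EClass_trans (h.actRows_rot_mem_EClass i j)
    (hstd.actRows_rot_mem_EClass (j + 1) (i + 1))
  rw [actRows_not, actRows_actRows, rotBelow_top_pow_succ_mul_rotAbove_bot_pow hi,
    rotAbove_bot_pow_succ_mul_rotBelow_top_pow hj, ← h.1, ← h.2] at hmem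
  convert hmem using 1
  refine ext_rows ε (Equiv.ext fun x => ?_) (Equiv.ext fun x => ?_)
  · simp [exchange, pairRename, (π ε).injective.swap_apply]
  · simp [exchange, pairRename, (π (!ε)).injective.swap_apply]

theorem isStandardAt_exchange [DecidableEq A] (h : IsStandardAt π ε a) (z : A) :
    IsStandardAt (exchange ε a z π) (!ε) z := by
  refine ⟨?_, ?_⟩
  · simp only [exchange, actRows_apply_not, Equiv.trans_apply, pairRename, swap_apply_right, h.2,
      finRotate_top]
  · simp only [exchange, Bool.not_not, actRows_apply_self, Equiv.trans_apply, pairRename,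
      swap_apply_right, h.1, Perm.inv_eq_iff_eq, finRotate_top]

theorem swap_mul_swap_mem_renamings [DecidableEq A] (h : IsStandardAt π ε a) {z b : A}
    (hz : z ≠ a) (hb : b ≠ z) : swap a z * swap z b ∈ renamings π := by
  have hmem := mem_EClass_trans (h.exchange_mem_EClass hz)
    ((h.isStandardAt_exchange z).exchange_mem_EClass hb)
  rw [exchange, exchange, actRows_not, pairRename_actRows, actRows_actRows, mul_inv_cancel,
    inv_mul_cancel, actRows_one_one] at hmem
  exact hmem

theorem exists_isStandardAt (h : IsStandardAt π ε a) (z : A) :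
    ∃ ρ ∈ EClass π, ∃ δ, IsStandardAt ρ δ z := by
  classical
  rcases eq_or_ne z a with rfl | hz
  · exact ⟨π, mem_EClass_self π, ε, h⟩
  · exact ⟨_, h.exchange_mem_EClass hz, !ε, h.isStandardAt_exchange z⟩

theorem alternatingGroup_le_renamingSubgroup [DecidableEq A] (h : IsStandardAt π ε a) :
    alternatingGroup A ≤ renamingSubgroup π := by
  rw [← Perm.closure_three_cycles_eq_alternating, Subgroup.closure_le]
  intro σ hσ
  obtain ⟨x, hx⟩ : σ.support.Nonempty := Finset.card_pos.mp (by rw [hσ.card_support]; omega)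
  obtain ⟨ρ, hρ, δ, hstd⟩ := h.exists_isStandardAt x
  change σ ∈ renamings π
  rw [renamings_eq_of_mem_EClass hρ, hσ.eq_swap_mul_swap_iff_mem_support.mpr hx]
  have hσx := Perm.mem_support.mp hx
  exact hstd.swap_mul_swap_mem_renamings hσx (σ.injective.ne hσx)

end IsStandardAt

end RPair

/-- `Alt(A) ⊆ G(π)` for every irreducible pair `π`. -/
theorem stmt7 {A : Type*} [Fintype A] [DecidableEq A] [Nonempty A]
    (hN : 2 ≤ Fintype.card A) (π : RPair A) (hπ : PairIrreducible π) :
    (alternatingGroup A : Set (Equiv.Perm A)) ⊆ renamings π := by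
  obtain ⟨ρ, hρ, ε, a, hstd⟩ := RPair.exists_isStandardAt_of_pairIrreducible hπ
  rw [RPair.renamings_eq_of_mem_EClass hρ]
  exact hstd.alternatingGroup_le_renamingSubgroup
end

section
/- Let π be an irreducible pair on a finite alphabet A. Then G(π) ⊆ Alt(A) if and only if Λ(π) is simple. -/
open Equiv

variable {A : Type*} [Fintype A]

/-!
Weights on the alphabet carry an alternating form, the intersection form of the pair. Each Rauzy
induction acts on weights by a transvection, which has determinant 1, intertwines the forms, and
shifts the multiset of interior heights of a kernel vector by a constant. Hence a renaming `ν` in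
`G(π)` yields an isometry `R` of this form with `det R = sign ν`. The heights of kernel vectors
are the functions that are constant on the cycles of `S` and vanish at `X`, and the multiplicities
of these heights are the cycle lengths of `Q`. If `Λ` is simple, then `R` must therefore fix the
kernel pointwise, and an isometry of an alternating form that does so has determinant 1.

Conversely, right inductions lead to a standard pair with rows `a W` and `W' a`, for which `Q` is
`c * d⁻¹` with `c`, `d` the cyclic permutations of the words `W`, `W'`. Exchanging `a` with another
letter by explicit moves is an odd step, which conjugates `c * d⁻¹`. If two cycles of `Q` have the
same length, then joining them and running around the joint cycle closes up to a loop that renames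
the letters by an odd permutation.
-/

/-! ### Isometries of alternating forms -/

section AlternatingForm

open Matrix

variable {K V : Type*} [Field K] [AddCommGroup V] [Module K V] {B : V →ₗ[K] V →ₗ[K] K}

/-- A symplectic family for `B`: its Gram matrix is the standard one, `Matrix.J`. -/
def IsSymplecticFamily {l : Type*} [DecidableEq l] (B : V →ₗ[K] V →ₗ[K] K) (v : l ⊕ l → V) :
    Prop :=
  ∀ i j, B (v i) (v j) = J l K i j

namespace IsSymplecticFamily

variable {l : Type*} [DecidableEq l] {v : l ⊕ l → V}

theorem apply_sum_smul [Fintype l] (hv : IsSymplecticFamily B v) (c : l ⊕ l → K) (j : l ⊕ l) :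
    B (∑ i, c i • v i) (v j) = (c ᵥ* J l K) j := by
  simp [vecMul, dotProduct, LinearMap.sum_apply, hv _ j]

variable [Finite l]

theorem linearIndependent (hv : IsSymplecticFamily B v) : LinearIndependent K v := by
  cases nonempty_fintype l
  refine Fintype.linearIndependent_iff.2 fun c hc => congrFun ?_
  refine eq_zero_of_vecMul_eq_zero (isUnit_det_J l K).ne_zero (funext fun j => ?_)
  rw [← hv.apply_sum_smul, hc, map_zero, LinearMap.zero_apply, Pi.zero_apply]

theorem exists_sub_orthogonal (hv : IsSymplecticFamily B v) (x : V) :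
    ∃ p ∈ Submodule.span K (Set.range v), ∀ j, B (x - p) (v j) = 0 := by
  cases nonempty_fintype l
  obtain ⟨c, hc⟩ := vecMul_surjective_iff_isUnit.2 ((isUnit_iff_isUnit_det _).2 (isUnit_det_J l K))
    fun j => B x (v j)
  refine ⟨∑ i, c i • v i, Submodule.sum_smul_mem _ _ fun i _ => Submodule.subset_span ⟨i, rfl⟩,
    fun j => ?_⟩
  rw [map_sub, LinearMap.sub_apply, hv.apply_sum_smul]
  exact sub_eq_zero.2 (congrFun hc j).symm

theorem exists_orthogonal_pair (hsep : B.SeparatingLeft)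
    (hv : IsSymplecticFamily B v) (hspan : Submodule.span K (Set.range v) ≠ ⊤) :
    ∃ x y, B x y = -1 ∧ ∀ j, B x (v j) = 0 ∧ B y (v j) = 0 := by
  obtain ⟨z, hz⟩ := not_forall.1 (mt Submodule.eq_top_iff'.2 hspan)
  obtain ⟨p, hp, hx⟩ := hv.exists_sub_orthogonal z
  have hx_ne : z - p ≠ 0 := fun h => hz (sub_eq_zero.1 h ▸ hp)
  obtain ⟨y, hy⟩ := not_forall.1 (mt (hsep _) hx_ne)
  obtain ⟨q, hq, hyq⟩ := hv.exists_sub_orthogonal y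
  have hspan_le : Submodule.span K (Set.range v) ≤ LinearMap.ker (B (z - p)) :=
    Submodule.span_le.2 (Set.range_subset_iff.2 hx)
  refine ⟨z - p, -(B (z - p) y)⁻¹ • (y - q), ?_, fun j => ⟨hx j, ?_⟩⟩
  · rw [map_smul, map_sub (B (z - p)), LinearMap.mem_ker.1 (hspan_le hq), sub_zero, smul_eq_mul,
      neg_mul, inv_mul_cancel₀ hy]
  · rw [map_smul, LinearMap.smul_apply, hyq j, smul_zero]

theorem cons {n : ℕ} {v : Fin n ⊕ Fin n → V} (hB : B.IsAlt) (hv : IsSymplecticFamily B v)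
    {x y : V} (hxy : B x y = -1) (horth : ∀ j, B x (v j) = 0 ∧ B y (v j) = 0) :
    IsSymplecticFamily B (l := Fin (n + 1))
      (Sum.elim (Fin.cons x (v ∘ Sum.inl)) (Fin.cons y (v ∘ Sum.inr))) := by
  have hyx : B y x = 1 := by rw [← hB.neg, hxy, neg_neg]
  have horth' (j) : B (v j) x = 0 ∧ B (v j) y = 0 :=
    ⟨by rw [← hB.neg, (horth j).1, neg_zero], by rw [← hB.neg, (horth j).2, neg_zero]⟩
  have hv' := hv
  simp only [IsSymplecticFamily, J, Sum.forall, fromBlocks_apply₁₁, fromBlocks_apply₁₂,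
    fromBlocks_apply₂₁, fromBlocks_apply₂₂] at hv'
  simp only [IsSymplecticFamily, J, Sum.forall, fromBlocks_apply₁₁, fromBlocks_apply₁₂,
    fromBlocks_apply₂₁, fromBlocks_apply₂₂, Fin.forall_fin_succ]
  simp [hB.self_eq_zero, hxy, hyx, horth, horth', hv', Matrix.one_apply,
    (Fin.succ_ne_zero _).symm]

end IsSymplecticFamily

variable [FiniteDimensional K V]

theorem exists_isSymplecticFamily_span_eq_top (hB : B.IsAlt) (hsep : B.SeparatingLeft) :
    ∃ (n : ℕ) (v : Fin n ⊕ Fin n → V),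
      IsSymplecticFamily B v ∧ Submodule.span K (Set.range v) = ⊤ := by
  by_contra! hspan
  have hlong (n : ℕ) : ∃ v : Fin n ⊕ Fin n → V, IsSymplecticFamily B v := by
    induction n with
    | zero => exact ⟨isEmptyElim, isEmptyElim⟩
    | succ n ih =>
      obtain ⟨v, hv⟩ := ih
      obtain ⟨x, y, hxy, horth⟩ := hv.exists_orthogonal_pair hsep (hspan n v hv)
      exact ⟨_, hv.cons hB hxy horth⟩
  obtain ⟨v, hv⟩ := hlong (Module.finrank K V + 1)
  have := hv.linearIndependent.fintype_card_le_finrank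
  rw [Fintype.card_sum, Fintype.card_fin] at this
  omega

theorem det_eq_one_of_isAlt_of_separatingLeft (hB : B.IsAlt) (hsep : B.SeparatingLeft)
    {R : V →ₗ[K] V} (hR : ∀ x y, B (R x) (R y) = B x y) : LinearMap.det R = 1 := by
  obtain ⟨n, v, hv, hspan⟩ := exists_isSymplecticFamily_span_eq_top hB hsep
  let b := Module.Basis.mk hv.linearIndependent hspan.ge
  have hJ : LinearMap.toMatrix₂ b b B = J (Fin n) K := by
    ext i j
    rw [LinearMap.toMatrix₂_apply, Module.Basis.mk_apply, Module.Basis.mk_apply, hv]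
  rw [← LinearMap.det_toMatrix b]
  refine SymplecticGroup.det_eq_one (SymplecticGroup.mem_iff'.2 ?_)
  rw [← hJ, ← LinearMap.toMatrix₂_compl₁₂ b b b b B R R]
  exact congrArg _ (LinearMap.ext₂ hR)

theorem det_eq_one_of_isAlt_of_fixes_ker (hB : B.IsAlt) {R : V →ₗ[K] V}
    (hR : ∀ x y, B (R x) (R y) = B x y) (hfix : ∀ x ∈ LinearMap.ker B, R x = x) :
    LinearMap.det R = 1 := by
  let W := LinearMap.ker B
  have hW : W ≤ W.comap R := fun x hx => by rwa [Submodule.mem_comap, hfix x hx]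
  let B' := hB.isRefl.liftQ₂ B W le_rfl
  have hrestrict : R.restrict hW = LinearMap.id := by
    ext x; exact hfix x x.2
  have halt : B'.IsAlt := (Submodule.Quotient.forall W).2 hB
  have hsep : B'.SeparatingLeft := by
    intro x hx
    obtain ⟨x, rfl⟩ := W.mkQ_surjective x
    exact (Submodule.Quotient.mk_eq_zero W).2 (LinearMap.ext fun y => hx (W.mkQ y))
  have hmapQ : ∀ x y, B' (W.mapQ W R hW x) (W.mapQ W R hW y) = B' x y :=
    (Submodule.Quotient.forall W).2 fun x => (Submodule.Quotient.forall W).2 (hR x)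
  rw [LinearMap.det_eq_det_mul_det W R hW, hrestrict, LinearMap.det_id, one_mul,
    det_eq_one_of_isAlt_of_separatingLeft halt hsep hmapQ]

end AlternatingForm

/-! ### Weights, heights and the intersection form -/

/-- One row of a pair: an ordering of the alphabet, as a bijection onto positions. -/
abbrev Row (A : Type*) [Fintype A] := A ≃ Fin (Fintype.card A)

namespace Row

/-- The total weight of the letters in the first `k` positions of a row. -/
def partialSum (e : Row A) (k : ℕ) : (A → ℝ) →ₗ[ℝ] ℝ :=
  ∑ y with (e y : ℕ) < k, LinearMap.proj y

/-- The total weight of the letters preceding `x` in a row. -/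
def height (e : Row A) (x : A) : (A → ℝ) →ₗ[ℝ] ℝ := e.partialSum (e x)

variable (e : Row A) (u : A → ℝ)

theorem partialSum_apply (k : ℕ) : e.partialSum k u = ∑ y with (e y : ℕ) < k, u y := by
  simp [partialSum, LinearMap.sum_apply]

@[simp]
theorem partialSum_zero : e.partialSum 0 u = 0 := by simp [partialSum_apply]

theorem partialSum_card : e.partialSum (Fintype.card A) u = ∑ y, u y := by
  simp [partialSum_apply]

theorem partialSum_succ (x : A) : e.partialSum (e x + 1) u = e.height x u + u x := by
  classical
  have hfilter : Finset.univ.filter (fun y => (e y : ℕ) < e x + 1) =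
      insert x (Finset.univ.filter fun y => (e y : ℕ) < e x) := by
    ext y
    simp only [Finset.mem_filter, Finset.mem_univ, true_and, Finset.mem_insert,
      ← e.injective.eq_iff, Fin.ext_iff]
    omega
  rw [height, partialSum_apply, hfilter, Finset.sum_insert (by simp), partialSum_apply, add_comm]

variable {e} in
theorem height_of_eq_zero {x : A} (hx : (e x : ℕ) = 0) : e.height x u = 0 := by
  rw [height, hx, partialSum_zero]

variable {e} in
theorem height_succ {x y : A} (hxy : (e y : ℕ) = e x + 1) :
    e.height y u = e.height x u + u x := by
  rw [height, hxy, partialSum_succ]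

variable {e} in
theorem add_one_eq_card_of_forall_le {z : A} (hz : ∀ x, e x ≤ e z) :
    (e z : ℕ) + 1 = Fintype.card A := by
  have hpos := (e z).pos
  have := Fin.le_def.1 (hz (e.symm ⟨Fintype.card A - 1, by omega⟩))
  rw [apply_symm_apply] at this
  have := (e z).isLt
  simp only at *
  omega

variable {e} in
theorem height_add_of_last {z : A} (hz : (e z : ℕ) + 1 = Fintype.card A) :
    e.height z u + u z = ∑ y, u y := by
  rw [← partialSum_succ, hz, partialSum_card]

theorem sum_comp_eq_sum_range {M : Type*} [AddCommMonoid M] (F : ℕ → M) :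
    ∑ x, F (e x) = ∑ k ∈ Finset.range (Fintype.card A), F k := by
  rw [Equiv.sum_comp e (fun k : Fin _ => F k), Fin.sum_univ_eq_sum_range]

theorem two_mul_sum_mul_height_add_sum_sq :
    2 * ∑ x, u x * e.height x u + ∑ x, u x ^ 2 = (∑ x, u x) ^ 2 := by
  have hdiff : ∀ x, 2 * (u x * e.height x u) + u x ^ 2 =
      e.partialSum (e x + 1) u ^ 2 - e.partialSum (e x) u ^ 2 := fun x => by
    rw [partialSum_succ, ← height]; ring
  rw [Finset.mul_sum, ← Finset.sum_add_distrib, Finset.sum_congr rfl fun x _ => hdiff x,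
    e.sum_comp_eq_sum_range fun k => e.partialSum (k + 1) u ^ 2 - e.partialSum k u ^ 2,
    Finset.sum_range_sub (fun k => e.partialSum k u ^ 2), partialSum_card, partialSum_zero]
  ring

theorem height_eq_sub {f : A → ℝ} {a : A} (ha : (e a : ℕ) = 0)
    (hu : ∀ x y, (e y : ℕ) = e x + 1 → u x = f y - f x) (x : A) :
    e.height x u = f x - f a := by
  induction hk : (e x : ℕ) generalizing x with
  | zero => rw [height_of_eq_zero u hk, e.injective (Fin.ext (hk.trans ha.symm)), sub_self]
  | succ k ih =>
    let y := e.symm ⟨k, by have := (e x).isLt; omega⟩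
    have hy : (e y : ℕ) = k := by simp [y]
    rw [height_succ u (hk.trans (by rw [hy])), ih y hy, hu y x (by rw [hk, hy])]
    ring

/-- The multiset of heights of all letters but the first. -/
def interiorHeights : Multiset ℝ :=
  (Multiset.Ico 1 (Fintype.card A)).map fun k => e.partialSum k u

theorem map_height_erase_eq_interiorHeights [DecidableEq A] {a : A} (ha : (e a : ℕ) = 0) :
    (Finset.univ.erase a).val.map (fun x => e.height x u) = e.interiorHeights u := by
  have hmap : (Finset.univ.erase a).map (e.toEmbedding.trans Fin.valEmbedding) =
      Finset.Ico 1 (Fintype.card A) := by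
    ext k
    simp only [Finset.mem_map, Finset.mem_erase, Finset.mem_univ, and_true, Finset.mem_Ico]
    constructor
    · rintro ⟨x, hxa, rfl⟩
      exact ⟨Nat.one_le_iff_ne_zero.2 fun hx => hxa (e.injective (Fin.ext (hx.trans ha.symm))),
        (e x).isLt⟩
    · rintro ⟨hk, hkN⟩
      refine ⟨e.symm ⟨k, hkN⟩, fun h => ?_, by simp⟩
      rw [symm_apply_eq] at h
      have := congrArg Fin.val h
      simp only at this
      omega
  rw [interiorHeights]
  change _ = Multiset.map _ (Finset.Ico 1 (Fintype.card A)).val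
  rw [← hmap, Finset.map_val, Multiset.map_map]
  rfl

end Row

namespace RPair

variable (π : RPair A)

/-- The alternating form on weight vectors whose Gram matrix is the intersection matrix of the
suspension of `π`; `height (π true) - height (π false)` is the translation vector of the interval
exchange. -/
def form : (A → ℝ) →ₗ[ℝ] (A → ℝ) →ₗ[ℝ] ℝ :=
  ∑ x, (Row.height (π true) x - Row.height (π false) x).smulRight (LinearMap.proj x)

theorem form_apply (u v : A → ℝ) :
    form π u v = ∑ x, (Row.height (π true) x u - Row.height (π false) x u) * v x := by
  simp [form, LinearMap.sum_apply]

theorem form_isAlt : (form π).IsAlt := by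
  intro u
  have h₀ := Row.two_mul_sum_mul_height_add_sum_sq (π false) u
  have h₁ := Row.two_mul_sum_mul_height_add_sum_sq (π true) u
  simp only [form_apply, sub_mul, Finset.sum_sub_distrib, mul_comm (Row.height _ _ _)]
  linarith

theorem mem_ker_form_iff {u : A → ℝ} :
    u ∈ LinearMap.ker (form π) ↔ ∀ x, Row.height (π true) x u = Row.height (π false) x u := by
  classical
  rw [LinearMap.mem_ker]
  refine ⟨fun h x => ?_, fun h => LinearMap.ext fun v => ?_⟩
  · have := form_apply π u (Pi.single x 1)
    exact sub_eq_zero.1 (by simpa [h, Pi.single_apply] using this.symm)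
  · simp [form_apply, h]

end RPair

/-! ### Rauzy moves as isometries -/

/-- The row `f'` is obtained from `f` by moving its last letter `l` (the loser) right after the
last letter `w` (the winner) of the other row `e`. -/
structure IsRowMove (e f f' : Row A) (w l : A) : Prop where
  winner_last : ∀ x, e x ≤ e w
  loser_last : ∀ x, f x ≤ f l
  apply_of_le : ∀ b, f b ≤ f w → f' b = f b
  apply_loser : (f' l : ℕ) = f w + 1
  apply_of_not_le : ∀ b, ¬ f b ≤ f w → b ≠ l → (f' b : ℕ) = f b + 1

theorem rightMove_iff {π π' : RPair A} :
    RightMove π π' ↔ ∃ ε w l, π' ε = π ε ∧ IsRowMove (π ε) (π (!ε)) (π' (!ε)) w l := by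
  constructor
  · rintro ⟨ε, w, l, hw, hl, hε, hle, hloser, hnot⟩
    exact ⟨ε, w, l, hε, hw, hl, hle, hloser, hnot⟩
  · rintro ⟨ε, w, l, hε, hw, hl, hle, hloser, hnot⟩
    exact ⟨ε, w, l, hw, hl, hε, hle, hloser, hnot⟩

section LoserTransvection

variable {ι : Type*}

open Classical in
/-- The change of weights accompanying a Rauzy move: the weight of the loser `l` is subtracted from
that of the winner `w`. -/
noncomputable def loserTransvection (w l : ι) : (ι → ℝ) →ₗ[ℝ] (ι → ℝ) :=
  LinearMap.transvection (LinearMap.proj l) (-Pi.single w 1)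

theorem loserTransvection_apply_self (w l : ι) (u : ι → ℝ) :
    loserTransvection w l u w = u w - u l := by
  simp [loserTransvection, LinearMap.transvection.apply, sub_eq_add_neg]

theorem loserTransvection_apply_of_ne {w x : ι} (l : ι) (u : ι → ℝ) (hx : x ≠ w) :
    loserTransvection w l u x = u x := by
  simp [loserTransvection, LinearMap.transvection.apply, hx]

theorem det_loserTransvection [Finite ι] {w l : ι} (hwl : w ≠ l) :
    LinearMap.det (loserTransvection w l) = 1 := by
  simp [loserTransvection, hwl.symm]

theorem sum_mul_loserTransvection [Fintype ι] (w l : ι) (F u : ι → ℝ) :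
    ∑ x, F x * loserTransvection w l u x = ∑ x, F x * u x - F w * u l := by
  classical
  rw [eq_sub_iff_add_eq, ← eq_sub_iff_add_eq', eq_comm, ← Finset.sum_sub_distrib,
    Finset.sum_eq_single w (fun x _ hx => by rw [loserTransvection_apply_of_ne l u hx, sub_self])
      (by simp), loserTransvection_apply_self]
  ring

theorem Row.partialSum_loserTransvection (e : Row A) (w l : A) (k : ℕ) (u : A → ℝ) :
    e.partialSum k (loserTransvection w l u) =
      e.partialSum k u - if (e w : ℕ) < k then u l else 0 := by
  have hind := sum_mul_loserTransvection w l (fun y => if (e y : ℕ) < k then 1 else 0) u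
  simpa only [ite_mul, one_mul, zero_mul, ← Finset.sum_filter, ← Row.partialSum_apply] using hind

end LoserTransvection

namespace IsRowMove

variable {e f f' : Row A} {w l : A} (h : IsRowMove e f f' w l)
include h

theorem winner_ne_loser : w ≠ l := by
  rintro rfl
  have := h.apply_loser
  have := Row.add_one_eq_card_of_forall_le h.loser_last
  have := (f' w).isLt
  omega

theorem height_same_row (u : A → ℝ) (x : A) :
    e.height x (loserTransvection w l u) = e.height x u := by
  rw [Row.height, Row.partialSum_apply, Row.partialSum_apply]
  refine Finset.sum_congr rfl fun y hy => loserTransvection_apply_of_ne l u ?_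
  rintro rfl
  exact absurd (h.winner_last x) (not_le.2 (Finset.mem_filter.1 hy).2)

theorem height_other_row_of_ne (u : A → ℝ) {x : A} (hx : x ≠ l) :
    f'.height x (loserTransvection w l u) = f.height x u := by
  have hw := h.apply_of_le w le_rfl
  have hl := h.apply_loser
  have hxl : f x < f l := (h.loser_last x).lt_of_ne (f.injective.ne hx)
  have hval : ∀ y, y ≠ l → (f' y : ℕ) = if f y ≤ f w then (f y : ℕ) else f y + 1 := fun y hy => by
    split_ifs with hle
    exacts [congrArg Fin.val (h.apply_of_le y hle), h.apply_of_not_le y hle hy]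
  have hxval := hval x hx
  rw [Row.height, Row.partialSum_loserTransvection, Row.height, Row.partialSum_apply,
    Row.partialSum_apply, Finset.sum_filter, Finset.sum_filter, sub_eq_iff_eq_add,
    ← sub_eq_iff_eq_add', ← Finset.sum_sub_distrib]
  rw [Finset.sum_eq_single l _ (by simp)]
  · have : ¬ (f l : ℕ) < f x := by omega
    simp only [this, hl, hw, if_false, sub_zero]
    split_ifs <;> grind
  · intro y _ hy
    have := hval y hy
    split_ifs at * <;> grind

theorem height_loser (u : A → ℝ) :
    f'.height l (loserTransvection w l u) = f.height w u + u w - u l := by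
  have hw := h.apply_of_le w le_rfl
  rw [Row.height, Row.partialSum_loserTransvection, h.apply_loser, hw, if_pos (Nat.lt_succ_self _),
    ← Row.partialSum_succ, Row.partialSum_apply, Row.partialSum_apply]
  congr 2
  ext y
  have hwl : f w < f l := (h.loser_last w).lt_of_ne (f.injective.ne h.winner_ne_loser)
  simp only [Finset.mem_filter, Finset.mem_univ, true_and]
  by_cases hle : f y ≤ f w
  · rw [h.apply_of_le y hle]
  · by_cases hy : y = l
    · have := h.apply_loser
      grind
    · have := h.apply_of_not_le y hle hy
      grind

theorem sum_height_sub_height_mul (u v : A → ℝ) :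
    ∑ x, (f'.height x (loserTransvection w l u) - e.height x (loserTransvection w l u)) *
        loserTransvection w l v x =
      ∑ x, (f.height x u - e.height x u) * v x := by
  have hloser : ∀ x ≠ l, (f'.height x (loserTransvection w l u) - e.height x u) * v x -
      (f.height x u - e.height x u) * v x = 0 := fun x hx => by
    rw [h.height_other_row_of_ne u hx, sub_self]
  have he := Row.height_add_of_last u (Row.add_one_eq_card_of_forall_le h.winner_last)
  have hf := Row.height_add_of_last u (Row.add_one_eq_card_of_forall_le h.loser_last)
  simp only [h.height_same_row]
  rw [sum_mul_loserTransvection w l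
      (fun x => f'.height x (loserTransvection w l u) - e.height x u), sub_eq_iff_eq_add',
    ← sub_eq_iff_eq_add, ← Finset.sum_sub_distrib,
    Finset.sum_eq_single l (fun x _ hx => hloser x hx) (by simp), h.height_loser,
    h.height_other_row_of_ne u h.winner_ne_loser]
  linear_combination v l * (he - hf)

theorem height_other_row_of_height_eq {u : A → ℝ} (hu : ∀ x, f.height x u = e.height x u) (x : A) :
    f'.height x (loserTransvection w l u) = f.height x u := by
  obtain rfl | hx := eq_or_ne x l
  · have he := Row.height_add_of_last u (Row.add_one_eq_card_of_forall_le h.winner_last)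
    have hf := Row.height_add_of_last u (Row.add_one_eq_card_of_forall_le h.loser_last)
    rw [h.height_loser, hu w]
    linarith
  · exact h.height_other_row_of_ne u hx

theorem apply_eq_zero {x : A} (hx : (f x : ℕ) = 0) : (f' x : ℕ) = 0 := by
  rw [h.apply_of_le x (Fin.le_def.2 (by omega)), hx]

end IsRowMove

theorem RightMove.apply_false_eq_zero {π π' : RPair A} (h : RightMove π π') {x : A}
    (hx : (π false x : ℕ) = 0) : (π' false x : ℕ) = 0 := by
  obtain ⟨ε, w, l, hε, hmove⟩ := rightMove_iff.1 h
  cases ε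
  · rwa [hε]
  · exact hmove.apply_eq_zero hx

/-- A volume-preserving linear map between weight spaces that intertwines the forms of two pairs. -/
structure IsTransport (π π' : RPair A) (g : (A → ℝ) →ₗ[ℝ] (A → ℝ)) : Prop where
  det_eq_one : LinearMap.det g = 1
  form_map : ∀ u v, π'.form (g u) (g v) = π.form u v

namespace IsTransport

variable {π π' π'' : RPair A} {g g' : (A → ℝ) →ₗ[ℝ] (A → ℝ)}

theorem id (π : RPair A) : IsTransport π π LinearMap.id := ⟨LinearMap.det_id, fun _ _ => rfl⟩

theorem comp (hg' : IsTransport π' π'' g') (hg : IsTransport π π' g) :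
    IsTransport π π'' (g'.comp g) :=
  ⟨by rw [LinearMap.det_comp, hg'.det_eq_one, hg.det_eq_one, one_mul],
    fun u v => (hg'.form_map _ _).trans (hg.form_map u v)⟩

theorem surjective (hg : IsTransport π π' g) : Function.Surjective g :=
  (LinearMap.equivOfDetNeZero g (by rw [hg.det_eq_one]; exact one_ne_zero)).surjective

theorem map_mem_ker_iff (hg : IsTransport π π' g) {u : A → ℝ} :
    g u ∈ LinearMap.ker π'.form ↔ u ∈ LinearMap.ker π.form := by
  rw [LinearMap.mem_ker, LinearMap.mem_ker, LinearMap.ext_iff, LinearMap.ext_iff,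
    hg.surjective.forall]
  simp only [hg.form_map, LinearMap.zero_apply]

end IsTransport

theorem RightMove.exists_isTransport {π π' : RPair A} (h : RightMove π π') :
    ∃ g, IsTransport π π' g ∧ ∀ u ∈ LinearMap.ker π.form, ∀ x,
        Row.height (π' false) x (g u) = Row.height (π false) x u := by
  obtain ⟨ε, w, l, hε, hmove⟩ := rightMove_iff.1 h
  have hform := hmove.sum_height_sub_height_mul
  refine ⟨loserTransvection w l, ⟨det_loserTransvection hmove.winner_ne_loser, fun u v => ?_⟩,
    fun u hu x => ?_⟩
  · rw [RPair.form_apply, RPair.form_apply]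
    cases ε
    · rw [hε]
      exact hform u v
    · rw [hε, ← neg_inj, ← Finset.sum_neg_distrib, ← Finset.sum_neg_distrib]
      simpa only [← neg_mul, neg_sub, Bool.not_true] using hform u v
  · have hker := π.mem_ker_form_iff.1 hu
    cases ε
    · rw [hε]
      exact hmove.height_same_row u x
    · exact hmove.height_other_row_of_height_eq (fun x => (hker x).symm) x

namespace Row

/-- The row read from right to left. -/
def reverse (e : Row A) : Row A := e.trans Fin.revPerm

theorem reverse_apply (e : Row A) (x : A) : e.reverse x = (e x).rev := rfl

@[simp]
theorem reverse_reverse (e : Row A) : e.reverse.reverse = e := by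
  ext x
  simp [reverse_apply]

theorem partialSum_reverse (e : Row A) (u : A → ℝ) {k : ℕ} (hk : k ≤ Fintype.card A) :
    e.reverse.partialSum k u = ∑ y, u y - e.partialSum (Fintype.card A - k) u := by
  rw [partialSum_apply, partialSum_apply, eq_sub_iff_add_eq,
    ← Finset.sum_filter_add_sum_filter_not Finset.univ fun y => (e.reverse y : ℕ) < k]
  congr 2
  ext y
  have := (e y).isLt
  rw [Finset.mem_filter, Finset.mem_filter, reverse_apply, Fin.val_rev]
  simp only [Finset.mem_univ, true_and]
  omega

theorem height_reverse (e : Row A) (u : A → ℝ) (x : A) :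
    e.reverse.height x u = ∑ y, u y - (e.height x u + u x) := by
  have hx := (e x).isLt
  rw [height, reverse_apply, Fin.val_rev, e.partialSum_reverse u (Nat.sub_le _ _),
    Nat.sub_sub_self hx, partialSum_succ]

theorem interiorHeights_reverse (e : Row A) (u : A → ℝ) :
    e.reverse.interiorHeights u = (e.interiorHeights u).map fun s => ∑ y, u y - s := by
  have hreflect : (Finset.Ico 1 (Fintype.card A)).val.map (fun k => Fintype.card A - k) =
      (Finset.Ico 1 (Fintype.card A)).val := by
    rw [← Finset.image_val_of_injOn fun i hi j hj h => by
      simp only [Finset.coe_Ico, Set.mem_Ico] at hi hj h; omega]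
    refine congrArg _ (Finset.ext fun k => ?_)
    simp only [Finset.mem_image, Finset.mem_Ico]
    exact ⟨fun ⟨i, hi, h⟩ => by omega, fun h => ⟨Fintype.card A - k, by omega, by omega⟩⟩
  rw [interiorHeights, interiorHeights, Multiset.map_map]
  conv_rhs => rw [Multiset.Ico, ← hreflect, Multiset.map_map]
  refine Multiset.map_congr rfl fun k hk => ?_
  rw [Function.comp, Function.comp, e.partialSum_reverse u (Multiset.mem_Ico.1 hk).2.le]

end Row

namespace RPair

/-- The pair with both rows read from right to left; it exchanges left and right Rauzy moves. -/
def reverse (π : RPair A) : RPair A := fun ε => Row.reverse (π ε)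

theorem reverse_apply (π : RPair A) (ε : Bool) : π.reverse ε = Row.reverse (π ε) := rfl

@[simp]
theorem reverse_reverse (π : RPair A) : π.reverse.reverse = π :=
  funext fun ε => Row.reverse_reverse (π ε)

theorem form_reverse (π : RPair A) : π.reverse.form = -π.form := by
  refine LinearMap.ext fun u => LinearMap.ext fun v => ?_
  rw [LinearMap.neg_apply, LinearMap.neg_apply, form_apply, form_apply, ← Finset.sum_neg_distrib]
  refine Finset.sum_congr rfl fun x _ => ?_
  rw [reverse_apply, reverse_apply, Row.height_reverse, Row.height_reverse]
  ring

end RPair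

theorem leftMove_of_rightMove_reverse {π π' : RPair A} (h : RightMove π.reverse π'.reverse) :
    LeftMove π π' := by
  obtain ⟨ε, w, l, hw, hl, hε, hle, hloser, hnot⟩ := h
  simp only [RPair.reverse_apply, Row.reverse_apply, Fin.rev_le_rev, Fin.val_rev, Fin.rev_inj]
    at hw hl hle hloser hnot
  refine ⟨ε, w, l, hw, hl, ?_, hle, ?_, fun b hb hbl => ?_⟩
  · rw [← Row.reverse_reverse (π' ε), ← RPair.reverse_apply, hε, RPair.reverse_apply,
      Row.reverse_reverse]
  · omega
  · have := hnot b hb hbl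
    omega

theorem rightMove_reverse_of_leftMove {π π' : RPair A} (h : LeftMove π π') :
    π' = π ∨ RightMove π.reverse π'.reverse := by
  obtain ⟨ε, w, l, hw, hl, hε, hle, hloser, hnot⟩ := h
  have hlt : ∀ x, x ≠ l → π (!ε) l < π (!ε) x := fun x hx =>
    (hl x).lt_of_ne ((π (!ε)).injective.ne hx.symm)
  obtain rfl | hwl := eq_or_ne w l
  · refine Or.inl (funext fun δ => ?_)
    obtain rfl | rfl := Bool.eq_or_eq_not δ ε
    exacts [hε, Equiv.ext fun b => hle b (hl b)]
  · refine Or.inr ⟨ε, w, l, ?_⟩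
    simp only [RPair.reverse_apply, Row.reverse_apply, Fin.rev_le_rev, Fin.val_rev, Fin.rev_inj]
    refine ⟨hw, hl, by rw [hε], hle, ?_, fun b hb hbl => ?_⟩
    · have := hlt w hwl
      omega
    · have := hnot b hb hbl
      have := hlt b hbl
      omega

theorem RightMove.exists_isTransport_interiorHeights {π π' : RPair A} (h : RightMove π π') :
    ∃ g, IsTransport π π' g ∧ ∀ u ∈ LinearMap.ker π.form,
      Row.interiorHeights (π' false) (g u) = Row.interiorHeights (π false) u := by
  classical
  obtain ⟨g, hg, hheight⟩ := h.exists_isTransport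
  obtain ⟨ε, w, -⟩ := id h
  let a := (π false).symm ⟨0, Fintype.card_pos_iff.2 ⟨w⟩⟩
  have ha : (π false a : ℕ) = 0 := by simp [a]
  refine ⟨g, hg, fun u hu => ?_⟩
  rw [← Row.map_height_erase_eq_interiorHeights _ _ ha,
    ← Row.map_height_erase_eq_interiorHeights _ _ (h.apply_false_eq_zero ha)]
  exact Multiset.map_congr rfl fun x _ => hheight u hu x

theorem IsTransport.of_reverse {π π' : RPair A} {g : (A → ℝ) →ₗ[ℝ] (A → ℝ)}
    (hg : IsTransport π.reverse π'.reverse g) : IsTransport π π' g :=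
  ⟨hg.det_eq_one, fun u v => by simpa [RPair.form_reverse] using hg.form_map u v⟩

theorem LeftMove.exists_isTransport_interiorHeights {π π' : RPair A} (h : LeftMove π π') :
    ∃ g, IsTransport π π' g ∧ ∀ u ∈ LinearMap.ker π.form, ∃ t,
      Row.interiorHeights (π' false) (g u) = (Row.interiorHeights (π false) u).map (· + t) := by
  obtain rfl | hrev := rightMove_reverse_of_leftMove h
  · exact ⟨LinearMap.id, .id _, fun u _ => ⟨0, by simp⟩⟩
  obtain ⟨g, hg, hheights⟩ := hrev.exists_isTransport_interiorHeights
  refine ⟨g, hg.of_reverse, fun u hu => ⟨∑ y, g u y - ∑ y, u y, ?_⟩⟩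
  have hrow := hheights u (by simpa [RPair.form_reverse] using hu)
  rw [← Row.reverse_reverse (π' false), Row.interiorHeights_reverse, ← RPair.reverse_apply, hrow,
    RPair.reverse_apply, Row.interiorHeights_reverse, Multiset.map_map]
  exact Multiset.map_congr rfl fun s _ => by simp only [Function.comp]; ring

theorem exists_isTransport_interiorHeights_of_mem_EClass {π π' : RPair A} (h : π' ∈ EClass π) :
    ∃ g, IsTransport π π' g ∧ ∀ u ∈ LinearMap.ker π.form, ∃ t,
      Row.interiorHeights (π' false) (g u) = (Row.interiorHeights (π false) u).map (· + t) := by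
  induction h with
  | refl => exact ⟨LinearMap.id, .id _, fun u _ => ⟨0, by simp⟩⟩
  | tail _ hmove ih =>
    obtain ⟨g, hg, hshift⟩ := ih
    obtain ⟨g', hg', hshift'⟩ := hmove.elim
      (fun hright => hright.exists_isTransport_interiorHeights.imp fun g' hg' =>
        ⟨hg'.1, fun u hu => ⟨(0 : ℝ), by simp [hg'.2 u hu]⟩⟩)
      LeftMove.exists_isTransport_interiorHeights
    refine ⟨g'.comp g, hg'.comp hg, fun u hu => ?_⟩
    obtain ⟨t, ht⟩ := hshift u hu
    obtain ⟨t', ht'⟩ := hshift' (g u) (hg.map_mem_ker_iff.2 hu)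
    exact ⟨t + t', by simp [ht', ht, add_assoc]⟩

/-! ### Heights of kernel vectors -/

namespace PairIrreducible

variable {π : RPair A} (hπ : PairIrreducible π) (hN : 2 ≤ Fintype.card A)
include hπ hN

theorem last_ne {z : A} (hz : (π false z : ℕ) + 1 = Fintype.card A) :
    (π true z : ℕ) + 1 ≠ Fintype.card A := by
  intro hz'
  have hlast := hπ ⟨Fintype.card A - 2, by omega⟩ fun x hx => by
    have hxz : x ≠ z := by
      rintro rfl
      have := Fin.le_def.1 hx
      simp only at this
      omega
    have := Fin.val_ne_of_ne ((π true).injective.ne hxz)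
    rw [Fin.le_def]
    simp only
    omega
  simp only at hlast
  omega

theorem first_ne {a : A} (ha : (π false a : ℕ) = 0) : (π true a : ℕ) ≠ 0 := by
  intro ha'
  have hlast := hπ ⟨0, by omega⟩ fun x hx => by
    have hxa : x = a := (π false).injective (Fin.ext ((Nat.le_zero.1 hx).trans ha.symm))
    rw [hxa, Fin.le_def, ha']
  simp only at hlast
  omega

theorem eq_zero_of_forall_height_eq_zero {u : A → ℝ} (hu : u ∈ LinearMap.ker π.form)
    (hheight : ∀ x, Row.height (π false) x u = 0) : u = 0 := by
  have hheights : ∀ ε x, Row.height (π ε) x u = 0 := by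
    rintro (_ | _) x
    exacts [hheight x, (π.mem_ker_form_iff.1 hu x).trans (hheight x)]
  have hzero : ∀ ε x, (π ε x : ℕ) + 1 ≠ Fintype.card A → u x = 0 := fun ε x hx => by
    have hsucc := Row.height_succ (e := π ε) u (x := x)
      (y := (π ε).symm ⟨π ε x + 1, by have := (π ε x).isLt; omega⟩) (by simp)
    linarith [hheights ε x, hheights ε ((π ε).symm ⟨π ε x + 1, by have := (π ε x).isLt; omega⟩)]
  funext x
  by_cases hx : (π false x : ℕ) + 1 = Fintype.card A
  exacts [hzero true x (hπ.last_ne hN hx), hzero false x hx]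

end PairIrreducible

section Nonempty

variable [Nonempty A]

@[simp]
theorem val_posFirst : (posFirst A : ℕ) = 0 := rfl

theorem val_posLast_add_one : (posLast A : ℕ) + 1 = Fintype.card A :=
  Nat.sub_add_cancel Fintype.card_pos

theorem apply_XOf (π : RPair A) : (π false (XOf π) : ℕ) = 0 := by simp [XOf]

theorem eq_XOf_iff {π : RPair A} {x : A} : x = XOf π ↔ (π false x : ℕ) = 0 :=
  ⟨fun h => h ▸ apply_XOf π, fun h => (π false).injective (Fin.ext (h.trans (apply_XOf π).symm))⟩

namespace IsS

variable {π : RPair A} {S : Perm A} (hS : IsS π S)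
include hS

theorem apply_of_first {b : A} (hb : (π true b : ℕ) = 0) : S b = XOf π := (hS b).1 (Fin.ext hb)

theorem apply_of_succ_last {z z' b : A} (hz : (π false z : ℕ) + 1 = Fintype.card A)
    (hz' : (π true z' : ℕ) + 1 = Fintype.card A) (hb : (π true b : ℕ) = π true z + 1) :
    (π false (S b) : ℕ) = π false z' + 1 := by
  have hlast := val_posLast_add_one (A := A)
  have hzlast : (π false).symm (posLast A) = z := by
    rw [symm_apply_eq]
    exact Fin.ext (by omega)
  have hzlast' : (π true).symm (posLast A) = z' := by
    rw [symm_apply_eq]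
    exact Fin.ext (by omega)
  have hfirst : π true b ≠ posFirst A := fun h => by simp [h] at hb
  have := ((hS b).2 hfirst).1
  rw [hzlast, hzlast'] at this
  exact this hb

theorem apply_of_succ {b c : A} (hc : (π false c : ℕ) + 1 ≠ Fintype.card A)
    (hb : (π true b : ℕ) = π true c + 1) : (π false (S b) : ℕ) = π false c + 1 := by
  have hfirst : π true b ≠ posFirst A := fun h => by simp [h] at hb
  rw [((hS b).2 hfirst).2]
  · congr 3
    rw [symm_apply_eq]
    exact Fin.ext (by simp only; omega)
  · intro h
    have hcz : c = (π false).symm (posLast A) := (π true).injective (Fin.ext (by omega))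
    rw [hcz, apply_symm_apply] at hc
    exact hc val_posLast_add_one

theorem apply_XOf_ne (hπ : PairIrreducible π) (hN : 2 ≤ Fintype.card A) : S (XOf π) ≠ XOf π := by
  have hfirst : π true (XOf π) ≠ posFirst A := fun h =>
    hπ.first_ne hN (apply_XOf π) (by rw [h, val_posFirst])
  obtain ⟨hlast, hother⟩ := (hS (XOf π)).2 hfirst
  rw [ne_eq, eq_XOf_iff]
  by_cases h : (π true (XOf π) : ℕ) = π true ((π false).symm (posLast A)) + 1
  · have := hlast h
    omega
  · have := hother h
    omega

theorem height_apply {u : A → ℝ} (hu : u ∈ LinearMap.ker π.form) (b : A) :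
    Row.height (π false) (S b) u = Row.height (π false) b u := by
  have hker := π.mem_ker_form_iff.1 hu
  rw [← hker b]
  obtain hb | hb := Nat.eq_zero_or_pos (π true b : ℕ)
  · rw [hS.apply_of_first hb, Row.height_of_eq_zero u (apply_XOf π), Row.height_of_eq_zero u hb]
  obtain ⟨c, hc⟩ := (π true).surjective ⟨π true b - 1, by omega⟩
  have hbc : (π true b : ℕ) = π true c + 1 := by rw [hc]; simp only; omega
  rw [Row.height_succ u hbc]
  by_cases hlast : (π false c : ℕ) + 1 = Fintype.card A
  · obtain ⟨z, hz⟩ := (π true).surjective (posLast A)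
    have hz : (π true z : ℕ) + 1 = Fintype.card A := hz ▸ val_posLast_add_one
    rw [Row.height_succ u (hS.apply_of_succ_last hlast hz hbc), ← hker z, hker c,
      Row.height_add_of_last u hz, Row.height_add_of_last u hlast]
  · rw [Row.height_succ u (hS.apply_of_succ hlast hbc), hker c]

theorem exists_next (hπ : PairIrreducible π) (hN : 2 ≤ Fintype.card A) :
    ∃ next : A → A, (∀ x y, (π false y : ℕ) = π false x + 1 → next x = y) ∧
      ∀ x y, (π true y : ℕ) = π true x + 1 → next x = S y := by
  obtain ⟨z, hz⟩ := (π true).surjective (posLast A)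
  have hz : (π true z : ℕ) + 1 = Fintype.card A := hz ▸ val_posLast_add_one
  have hz' : (π false z : ℕ) + 1 ≠ Fintype.card A := fun h => hπ.last_ne hN h hz
  have hlt : ∀ x, (π false x : ℕ) + 1 ≠ Fintype.card A → (π false x : ℕ) + 1 < Fintype.card A :=
    fun x hx => by omega
  refine ⟨fun x => if h : (π false x : ℕ) + 1 = Fintype.card A
    then (π false).symm ⟨_, hlt z hz'⟩ else (π false).symm ⟨_, hlt x h⟩, fun x y h => ?_,
    fun x y h => ?_⟩
  · simp only [show (π false x : ℕ) + 1 ≠ Fintype.card A by omega, dite_false, symm_apply_eq]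
    exact Fin.ext h.symm
  · by_cases hx : (π false x : ℕ) + 1 = Fintype.card A
    · simp only [hx, dite_true, symm_apply_eq]
      exact Fin.ext (hS.apply_of_succ_last hx hz h).symm
    · simp only [hx, dite_false, symm_apply_eq]
      exact Fin.ext (hS.apply_of_succ hx h).symm

theorem exists_mem_ker_height_eq_sub (hπ : PairIrreducible π) (hN : 2 ≤ Fintype.card A)
    {f : A → ℝ} (hf : ∀ b, f (S b) = f b) :
    ∃ u ∈ LinearMap.ker π.form, ∀ b, Row.height (π false) b u = f b - f (XOf π) := by
  obtain ⟨next, hfalse, htrue⟩ := hS.exists_next hπ hN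
  obtain ⟨a, ha⟩ := (π true).surjective (posFirst A)
  have ha : (π true a : ℕ) = 0 := by rw [ha, val_posFirst]
  have hrow₀ := Row.height_eq_sub (π false) (fun x => f (next x) - f x) (apply_XOf π)
    fun x y h => by rw [hfalse x y h]
  have hrow₁ := Row.height_eq_sub (π true) (fun x => f (next x) - f x) ha
    fun x y h => by rw [htrue x y h, hf]
  refine ⟨fun x => f (next x) - f x, π.mem_ker_form_iff.2 fun x => ?_, hrow₀⟩
  rw [hrow₀, hrow₁, ← hf a, hS.apply_of_first ha]

end IsS

end Nonempty

section Cycles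

variable {α : Type*}

theorem apply_eq_apply_of_sameCycle [Finite α] {β : Type*} {f : Perm α} {F : α → β}
    (hF : ∀ x, F (f x) = F x) {x y : α} (h : f.SameCycle x y) : F x = F y := by
  obtain ⟨n, -, rfl⟩ := h.exists_pow_eq'
  induction n with
  | zero => rfl
  | succ n ih => rw [pow_succ', Perm.mul_apply, hF, ← ih ⟨n, by simp⟩]

theorem ncard_setOf_sameCycle [Finite α] (f : Perm α) (x : α) :
    {y | f.SameCycle x y}.ncard = Function.minimalPeriod f x := by
  have horbit : {y | f.SameCycle x y} = MulAction.orbit (Subgroup.zpowers f) x := by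
    ext y
    exact ⟨fun ⟨i, hi⟩ => ⟨⟨f ^ i, i, rfl⟩, hi⟩,
      fun ⟨⟨_, i, hf⟩, hi⟩ => ⟨i, by simpa [← hf] using hi⟩⟩
  have := Fintype.ofFinite (MulAction.orbit (Subgroup.zpowers f) x)
  have hcard := MulAction.minimalPeriod_eq_card (a := f) (b := x)
  rw [horbit, ← Nat.card_coe_set_eq, Nat.card_eq_fintype_card, ← hcard]
  rfl

theorem card_support_cycleOf_eq_minimalPeriod [Fintype α] [DecidableEq α] {f : Perm α} {x : α}
    (hx : f x ≠ x) : (f.cycleOf x).support.card = Function.minimalPeriod f x := by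
  rw [← ncard_setOf_sameCycle, ← Set.ncard_coe_finset]
  congr 1
  ext y
  simp [Perm.mem_support_cycleOf_iff' hx]

theorem nodup_cycleType_iff [Fintype α] [DecidableEq α] {f : Perm α} :
    f.cycleType.Nodup ↔ ∀ x y, f x ≠ x → f y ≠ y →
      Function.minimalPeriod f x = Function.minimalPeriod f y → f.SameCycle x y := by
  rw [Perm.cycleType_def, Multiset.nodup_map_iff_inj_on (Finset.nodup _)]
  constructor
  · intro hinj x y hx hy hxy
    have hcycle := hinj
      (f.cycleOf x) (Perm.cycleOf_mem_cycleFactorsFinset_iff.2 (by simpa using hx))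
      (f.cycleOf y) (Perm.cycleOf_mem_cycleFactorsFinset_iff.2 (by simpa using hy))
      (by simp only [Function.comp, card_support_cycleOf_eq_minimalPeriod hx,
        card_support_cycleOf_eq_minimalPeriod hy, hxy])
    rwa [Perm.sameCycle_iff_cycleOf_eq_of_mem_support] <;> simpa
  · intro h c hc d hd hcd
    have hrep : ∀ c ∈ f.cycleFactorsFinset, ∃ x, f x ≠ x ∧ c = f.cycleOf x := fun c hc => by
      obtain ⟨x, hx⟩ := (Perm.mem_cycleFactorsFinset_iff.1 hc).1.nonempty_support
      exact ⟨x, Perm.mem_support.1 (Perm.mem_cycleFactorsFinset_support_le hc hx),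
        Perm.cycle_is_cycleOf hx hc⟩
    obtain ⟨x, hx, rfl⟩ := hrep c hc
    obtain ⟨y, hy, rfl⟩ := hrep d hd
    simp only [Function.comp, card_support_cycleOf_eq_minimalPeriod hx,
      card_support_cycleOf_eq_minimalPeriod hy] at hcd
    exact (h x y hx hy hcd).cycleOf_eq

theorem nodup_lamOf_iff [Fintype α] [DecidableEq α] {f : Perm α} {a : α} (ha : f a = a) :
    (lamOf f).Nodup ↔ ∀ x y, x ≠ a → y ≠ a →
      Function.minimalPeriod f x = Function.minimalPeriod f y → f.SameCycle x y := by
  set F := (Finset.univ.filter fun x => f x = x).erase a with hF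
  have hmem : ∀ x, x ∈ F ↔ x ≠ a ∧ f x = x := by simp [hF]
  have hone : ∀ x, Function.minimalPeriod f x = 1 ↔ f x = x := fun x =>
    Function.minimalPeriod_eq_one_iff_isFixedPt
  have hdisj : Disjoint f.cycleType (Multiset.replicate F.card 1) := by
    refine Multiset.disjoint_left.2 fun hn hn' => ?_
    have := Perm.two_le_of_mem_cycleType hn
    have := Multiset.eq_of_mem_replicate hn'
    omega
  rw [lamOf, ← Finset.card_erase_of_mem (by simpa using ha), ← hF, Multiset.nodup_add,
    and_iff_left hdisj, nodup_cycleType_iff, Multiset.nodup_iff_count_le_one]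
  simp only [Multiset.count_replicate]
  constructor
  · rintro ⟨hmoved, hfixed⟩ x y hx hy hxy
    by_cases hfx : f x = x
    · have hfy : f y = y := by rw [← hone, ← hxy, hone, hfx]
      have hFcard : F.card ≤ 1 := by simpa using hfixed 1
      rw [Finset.card_le_one.1 hFcard x ((hmem x).2 ⟨hx, hfx⟩) y ((hmem y).2 ⟨hy, hfy⟩)]
    · exact hmoved x y hfx (fun hfy => hfx (by rw [← hone, hxy, hone, hfy])) hxy
  · refine fun h => ⟨fun x y hx hy => h x y (fun e => hx (e ▸ ha)) (fun e => hy (e ▸ ha)),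
      fun n => ?_⟩
    have hFcard : F.card ≤ 1 := Finset.card_le_one.2 fun x hx y hy => by
      obtain ⟨hxa, hfx⟩ := (hmem x).1 hx
      obtain ⟨hya, hfy⟩ := (hmem y).1 hy
      exact (h x y hxa hya (by rw [(hone x).2 hfx, (hone y).2 hfy])).eq_of_left hfx
    split_ifs <;> omega

end Cycles

theorem IsQ.sameCycle_iff [Nonempty A] {π : RPair A} {S Q : Perm A} (hQ : IsQ π S Q)
    (hSX : S (XOf π) ≠ XOf π) {b c : A} (hb : b ≠ XOf π) (hc : c ≠ XOf π) :
    Q.SameCycle b c ↔ S.SameCycle b c := by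
  classical
  constructor
  · intro h
    rw [apply_eq_apply_of_sameCycle (F := fun x => S.SameCycle x c) (fun x => ?_) h]
    obtain rfl | hx := eq_or_ne x (XOf π)
    · rw [hQ.1]
    by_cases hSx : S x = XOf π
    · simp only [(hQ.2 x hx).1 hSx, Perm.sameCycle_apply_left]
    · simp only [(hQ.2 x hx).2 hSx, Perm.sameCycle_apply_left]
  · intro h
    -- `X` has been removed from its `S`-cycle; `S X` stands in for it.
    have key := apply_eq_apply_of_sameCycle
      (F := fun x => Q.SameCycle (if x = XOf π then S (XOf π) else x) c) (fun x => ?_) h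
    · simp only [hb, hc, if_false] at key
      rw [key]
    obtain rfl | hx := eq_or_ne x (XOf π)
    · simp only [hSX, if_true, if_false]
    by_cases hSx : S x = XOf π
    · simp only [hSx, hx, if_true, if_false]
      rw [← Perm.sameCycle_apply_left (x := x), (hQ.2 x hx).1 hSx, hSx]
    · simp only [hSx, hx, if_false]
      rw [← Perm.sameCycle_apply_left (x := x), (hQ.2 x hx).2 hSx]

/-! ### Simple cycle types force even renamings -/

section Fibres

variable {α β γ : Type*} {s : Finset α}

theorem eq_of_eq_of_card_image_le [DecidableEq β] [DecidableEq γ] {f : α → β} {g : α → γ}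
    (hfg : ∀ a ∈ s, ∀ b ∈ s, f a = f b → g a = g b) (hcard : (s.image f).card ≤ (s.image g).card)
    {a b : α} (ha : a ∈ s) (hb : b ∈ s) (hab : g a = g b) : f a = f b := by
  have : Nonempty α := ⟨a⟩
  choose! p hps hfp using fun r (hr : r ∈ s.image f) => Finset.mem_image.1 hr
  have hgp : ∀ a ∈ s, g (p (f a)) = g a := fun a ha =>
    have hfa := Finset.mem_image_of_mem f ha
    hfg _ (hps _ hfa) _ ha (hfp _ hfa)
  have hinj : Set.InjOn (fun r => g (p r)) (s.image f) :=
    Finset.injOn_of_surjOn_of_card_le (t := s.image g) _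
      (fun r hr => Finset.mem_image_of_mem g (hps r hr))
      (fun r hr => by
        obtain ⟨a, ha, rfl⟩ := Finset.mem_image.1 (Finset.mem_coe.1 hr)
        exact ⟨f a, Finset.mem_coe.2 (Finset.mem_image_of_mem f ha), hgp a ha⟩) hcard
  refine hinj (Finset.mem_coe.2 (Finset.mem_image_of_mem f ha))
    (Finset.mem_coe.2 (Finset.mem_image_of_mem f hb)) ?_
  simp only [hgp a ha, hgp b hb, hab]

theorem eqOn_of_map_eq_map [DecidableEq β] {f g : α → β}
    (hfg : ∀ a ∈ s, ∀ b ∈ s, f a = f b → g a = g b)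
    (hfibre : ∀ a ∈ s, ∀ b ∈ s,
      (s.filter fun c => f c = f a).card = (s.filter fun c => f c = f b).card → f a = f b)
    (hmap : s.val.map g = s.val.map f) {a : α} (ha : a ∈ s) : g a = f a := by
  have himage : s.image g = s.image f := by simp only [Finset.image, hmap]
  obtain ⟨c, hc, hca⟩ := Finset.mem_image.1 (himage ▸ Finset.mem_image_of_mem g ha)
  have hfilter : (s.filter fun d => g d = g a) = s.filter fun d => f d = f a :=
    Finset.filter_congr fun d hd =>
      ⟨eq_of_eq_of_card_image_le hfg (by rw [himage]) hd ha, hfg d hd a ha⟩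
  have hcount := congrArg (Multiset.count (g a)) hmap
  simp only [Multiset.count_map, ← Finset.filter_val, Finset.card_val, eq_comm (a := g a)] at hcount
  rw [hfilter, ← hca] at hcount
  rw [← hca, hfibre a ha c hc hcount]

end Fibres

theorem Row.partialSum_trans (ν : Perm A) (e : Row A) (k : ℕ) (u : A → ℝ) :
    Row.partialSum (ν.trans e) k u = e.partialSum k (u ∘ ν.symm) := by
  rw [Row.partialSum_apply, Row.partialSum_apply, Finset.sum_filter, Finset.sum_filter]
  exact Fintype.sum_equiv ν _ _ fun x => by
    rw [Function.comp_apply, ν.symm_apply_apply]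
    rfl

theorem Row.interiorHeights_trans (ν : Perm A) (e : Row A) (u : A → ℝ) :
    Row.interiorHeights (ν.trans e) u = e.interiorHeights (u ∘ ν.symm) := by
  simp only [Row.interiorHeights, Row.partialSum_trans]

theorem form_pairRename (π : RPair A) (ν : Perm A) (u v : A → ℝ) :
    (pairRename π ν).form u v = π.form (u ∘ ν.symm) (v ∘ ν.symm) := by
  rw [RPair.form_apply, RPair.form_apply]
  exact Fintype.sum_equiv ν _ _ fun x => by simp [Row.height, pairRename, Row.partialSum_trans]

theorem det_funLeft_symm {ι R : Type*} [Fintype ι] [DecidableEq ι] [CommRing R] (ν : Perm ι) :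
    LinearMap.det (LinearMap.funLeft R R ν.symm) = (Perm.sign ν : ℤ) := by
  have hmatrix : LinearMap.toMatrix' (LinearMap.funLeft R R ν.symm) = ν⁻¹.permMatrix R := by
    ext i j
    simp [LinearMap.toMatrix'_apply, LinearMap.funLeft_apply, Perm.permMatrix,
      PEquiv.toMatrix_apply, Pi.single_apply, Perm.inv_def, eq_comm]
  rw [← LinearMap.det_toMatrix', hmatrix, Matrix.det_permutation, Perm.sign_inv]

section Rigidity

variable {π : RPair A} {S Q : Perm A}

/-- A weight vector in the kernel of the form separates cycles if its heights take different
values on different cycles of `S`. -/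
def SeparatesCycles (π : RPair A) (S : Perm A) (u : A → ℝ) : Prop :=
  ∀ b c, Row.height (π false) b u = Row.height (π false) c u → S.SameCycle b c

theorem SeparatesCycles.exists_add_smul {u₀ : A → ℝ} (h₀ : SeparatesCycles π S u₀) (u : A → ℝ) :
    ∃ s : ℝ, s ≠ 0 ∧ SeparatesCycles π S (u₀ + s • u) := by
  classical
  let h (b : A) (u : A → ℝ) := Row.height (π false) b u
  obtain ⟨s, hs⟩ := Infinite.exists_notMem_finset (insert 0 (Finset.univ.image fun p : A × A =>
    (h p.2 u₀ - h p.1 u₀) / (h p.1 u - h p.2 u)))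
  simp only [Finset.mem_insert, Finset.mem_image, Finset.mem_univ, true_and, not_or,
    not_exists, Prod.forall] at hs
  refine ⟨s, hs.1, fun b c hbc => h₀ b c ?_⟩
  simp only [map_add, map_smul, smul_eq_mul] at hbc
  by_cases hd : h b u - h c u = 0
  · have hd : Row.height (π false) b u = Row.height (π false) c u := sub_eq_zero.1 hd
    rw [hd] at hbc
    exact add_right_cancel hbc
  · refine absurd ?_ (hs.2 b c)
    rw [div_eq_iff hd]
    simp only [h]
    linarith

variable [Nonempty A]

theorem IsS.height_eq_of_sameCycle (hS : IsS π S) {u : A → ℝ} (hu : u ∈ LinearMap.ker π.form)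
    {b c : A} (h : S.SameCycle b c) : Row.height (π false) b u = Row.height (π false) c u :=
  apply_eq_apply_of_sameCycle (F := fun x => Row.height (π false) x u) (hS.height_apply hu) h

theorem SeparatesCycles.exists_mem_ker (hπ : PairIrreducible π) (hN : 2 ≤ Fintype.card A)
    (hS : IsS π S) : ∃ u ∈ LinearMap.ker π.form, SeparatesCycles π S u := by
  classical
  let f : A → ℝ := fun b => (Fintype.equivFin (Quotient (Perm.SameCycle.setoid S)) ⟦b⟧ : ℕ)
  have hf : ∀ b c, f b = f c ↔ S.SameCycle b c := fun b c => by
    rw [Nat.cast_inj, ← Fin.ext_iff, EmbeddingLike.apply_eq_iff_eq, Quotient.eq]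
    rfl
  obtain ⟨u, hu, hheight⟩ := hS.exists_mem_ker_height_eq_sub hπ hN (f := f) fun b =>
    (hf _ _).2 (Perm.sameCycle_apply_left.2 (.refl _ _))
  refine ⟨u, hu, fun b c h => (hf b c).1 ?_⟩
  rw [hheight, hheight] at h
  linarith

theorem SeparatesCycles.card_filter_height (hπ : PairIrreducible π) (hN : 2 ≤ Fintype.card A)
    (hS : IsS π S) (hQ : IsQ π S Q) {u : A → ℝ} (hu : u ∈ LinearMap.ker π.form)
    (hsep : SeparatesCycles π S u) [DecidableEq A] {b : A} (hb : b ≠ XOf π) :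
    ((Finset.univ.erase (XOf π)).filter fun c =>
      Row.height (π false) c u = Row.height (π false) b u).card = Function.minimalPeriod Q b := by
  rw [← ncard_setOf_sameCycle, ← Set.ncard_coe_finset]
  congr 1
  ext c
  have hSX := hS.apply_XOf_ne hπ hN
  simp only [Finset.coe_filter, Finset.mem_erase, Finset.mem_univ, and_true, Set.mem_ofPred_eq]
  constructor
  · rintro ⟨hc, hcb⟩
    exact (hQ.sameCycle_iff hSX hb hc).2 (hsep b c hcb.symm)
  · intro hbc
    have hc : c ≠ XOf π := by
      rintro rfl
      exact hb (hbc.eq_of_right hQ.1)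
    exact ⟨hc, (hS.height_eq_of_sameCycle hu ((hQ.sameCycle_iff hSX hb hc).1 hbc)).symm⟩

variable (hπ : PairIrreducible π) (hN : 2 ≤ Fintype.card A) (hS : IsS π S) (hQ : IsQ π S Q)
  (hsimple : ∀ b c, b ≠ XOf π → c ≠ XOf π →
    Function.minimalPeriod Q b = Function.minimalPeriod Q c → Q.SameCycle b c)
include hπ hN hS hQ hsimple

theorem eq_of_interiorHeights_eq_map {u v : A → ℝ} (hu : u ∈ LinearMap.ker π.form)
    (hv : v ∈ LinearMap.ker π.form) (hsep : SeparatesCycles π S u) {t : ℝ}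
    (ht : Row.interiorHeights (π false) v = (Row.interiorHeights (π false) u).map (· + t)) :
    v = u := by
  classical
  have hSX := hS.apply_XOf_ne hπ hN
  have hfirst : ∀ w, Row.height (π false) (XOf π) w = 0 := fun w =>
    Row.height_of_eq_zero w (apply_XOf π)
  have hshift : ∀ b, b ≠ XOf π →
      Row.height (π false) b v = Row.height (π false) b u + t := fun b hb => by
    refine eqOn_of_map_eq_map (s := Finset.univ.erase (XOf π))
      (f := fun b => Row.height (π false) b u + t) (g := fun b => Row.height (π false) b v)
      (fun b _ c _ hbc => hS.height_eq_of_sameCycle hv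
        (hsep b c (add_right_cancel hbc))) (fun b hb c hc hbc => ?_) ?_ (by simpa using hb)
    · have hb := Finset.ne_of_mem_erase hb
      have hc := Finset.ne_of_mem_erase hc
      simp only [add_left_inj, hsep.card_filter_height hπ hN hS hQ hu hb,
        hsep.card_filter_height hπ hN hS hQ hu hc] at hbc
      exact congrArg (· + t) (hS.height_eq_of_sameCycle hu
        ((hQ.sameCycle_iff hSX hb hc).1 (hsimple b c hb hc hbc)))
    · rw [Row.map_height_erase_eq_interiorHeights _ _ (apply_XOf π), ht,
        ← Row.map_height_erase_eq_interiorHeights _ _ (apply_XOf π), Multiset.map_map]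
      rfl
  have ht0 : t = 0 := by
    have := hshift _ hSX
    rwa [hS.height_apply hu, hS.height_apply hv, hfirst, hfirst, zero_add, eq_comm] at this
  refine sub_eq_zero.1 (hπ.eq_zero_of_forall_height_eq_zero hN (sub_mem hv hu) fun b => ?_)
  obtain rfl | hb := eq_or_ne b (XOf π)
  · exact hfirst _
  · rw [map_sub, hshift b hb, ht0, add_zero, sub_self]

theorem sign_eq_one_of_mem_renamings [DecidableEq A] {ν : Perm A} (hν : ν ∈ renamings π) :
    Perm.sign ν = 1 := by
  obtain ⟨g, hg, hshift⟩ := exists_isTransport_interiorHeights_of_mem_EClass hν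
  let R : (A → ℝ) →ₗ[ℝ] (A → ℝ) := (LinearMap.funLeft ℝ ℝ ν.symm).comp g
  have hform : ∀ u v, π.form (R u) (R v) = π.form u v := fun u v =>
    (form_pairRename π ν (g u) (g v)).symm.trans (hg.form_map u v)
  have hRtransport : ∀ u ∈ LinearMap.ker π.form, R u ∈ LinearMap.ker π.form :=
    fun u hu => LinearMap.ext fun v => by
      have hgu := hg.map_mem_ker_iff.2 hu
      have := form_pairRename π ν (g u) (v ∘ ν)
      rw [LinearMap.mem_ker.1 hgu, Function.comp_assoc, ν.self_comp_symm] at this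
      exact this.symm
  have hfixSep : ∀ u ∈ LinearMap.ker π.form, SeparatesCycles π S u → R u = u := fun u hu hsep => by
    obtain ⟨t, ht⟩ := hshift u hu
    rw [pairRename, Row.interiorHeights_trans] at ht
    exact eq_of_interiorHeights_eq_map hπ hN hS hQ hsimple hu (hRtransport u hu) hsep ht
  have hfix : ∀ u ∈ LinearMap.ker π.form, R u = u := fun u hu => by
    obtain ⟨u₀, hu₀, hsep₀⟩ := SeparatesCycles.exists_mem_ker hπ hN hS
    obtain ⟨s, hs, hsep⟩ := hsep₀.exists_add_smul u
    have := hfixSep _ (add_mem hu₀ (Submodule.smul_mem _ s hu)) hsep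
    rw [map_add, map_smul, hfixSep u₀ hu₀ hsep₀] at this
    exact smul_right_injective _ hs (add_left_cancel this)
  have hdet : LinearMap.det R = (Perm.sign ν : ℤ) := by
    rw [LinearMap.det_comp, hg.det_eq_one, mul_one, det_funLeft_symm]
  rw [det_eq_one_of_isAlt_of_fixes_ker π.form_isAlt hform hfix] at hdet
  exact Units.ext (Int.cast_injective (α := ℝ) (hdet.symm.trans Int.cast_one.symm))

end Rigidity

/-! ### Rows as words and Rauzy equivalence -/

namespace Row

/-- The letters of a row, listed from left to right. -/
def toList (e : Row A) : List A := List.ofFn e.symm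

variable {e f : Row A} {U V l : List A} {x : A}

theorem nodup_toList (e : Row A) : e.toList.Nodup :=
  List.nodup_ofFn_ofInjective e.symm.injective

theorem mem_toList (e : Row A) (x : A) : x ∈ e.toList :=
  List.mem_ofFn.2 ⟨e x, e.symm_apply_apply x⟩

@[simp]
theorem length_toList (e : Row A) : e.toList.length = Fintype.card A := List.length_ofFn

theorem apply_eq_length (h : e.toList = U ++ x :: V) : (e x : ℕ) = U.length := by
  have hlt : U.length < e.toList.length := by simp [h]
  have hget : e.toList[U.length] = x := by simp [h]
  simp only [toList, List.getElem_ofFn, Equiv.symm_apply_eq] at hget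
  rw [← hget]

theorem toList_injective : Function.Injective (toList : Row A → List A) := fun e f h => by
  ext x
  obtain ⟨U, V, hUV⟩ := List.append_of_mem (e.mem_toList x)
  rw [apply_eq_length hUV, apply_eq_length (h ▸ hUV)]

theorem exists_toList_eq (hnodup : l.Nodup) (hmem : ∀ x, x ∈ l) : ∃ e : Row A, e.toList = l := by
  classical
  have hlength : l.length = Fintype.card A := by
    rw [← List.toFinset_card_of_nodup hnodup, ← Finset.card_univ]
    exact congrArg _ (Finset.eq_univ_of_forall fun x => List.mem_toFinset.2 (hmem x))
  refine ⟨(hnodup.getEquivOfForallMemList l hmem).symm.trans (finCongr hlength), ?_⟩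
  exact List.ext_getElem (by rw [length_toList, hlength]) fun i _ _ => by simp [toList]

theorem exists_toList_eq_of_perm (h : l.Perm e.toList) : ∃ f : Row A, f.toList = l :=
  exists_toList_eq (h.nodup_iff.2 e.nodup_toList) fun x => h.mem_iff.2 (e.mem_toList x)

theorem toList_trans (ν : Perm A) (e : Row A) :
    toList (ν.trans e) = e.toList.map ν.symm := by
  rw [toList, toList, List.map_ofFn]
  rfl

theorem toList_reverse (e : Row A) : e.reverse.toList = e.toList.reverse := by
  refine List.ext_getElem (by simp) fun i hi _ => ?_
  rw [length_toList] at hi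
  simp only [toList, List.getElem_ofFn, List.getElem_reverse, List.length_ofFn]
  rw [Equiv.symm_apply_eq, reverse_apply, apply_symm_apply, Fin.ext_iff, Fin.val_rev]
  simp only
  omega

end Row

theorem Row.apply_of_last_moved_after {f f' : Row A} {U V : List A} {w l : A}
    (hf : f.toList = U ++ w :: (V ++ [l])) (hf' : f'.toList = U ++ w :: l :: V) (b : A) :
    (f b : ℕ) ≤ U.length ∧ (f' b : ℕ) = f b ∨ b = l ∨
      U.length < (f b : ℕ) ∧ (f' b : ℕ) = f b + 1 := by
  have hb := f.mem_toList b
  rw [hf, List.mem_append, List.mem_cons, List.mem_append, List.mem_singleton] at hb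
  obtain hb | rfl | hb | rfl := hb
  · obtain ⟨U₁, U₂, rfl⟩ := List.append_of_mem hb
    left
    rw [Row.apply_eq_length (U := U₁) (by rw [hf, List.append_assoc]; rfl),
      Row.apply_eq_length (U := U₁) (by rw [hf', List.append_assoc]; rfl)]
    simp
  · left
    rw [Row.apply_eq_length hf, Row.apply_eq_length hf']
    simp
  · obtain ⟨V₁, V₂, rfl⟩ := List.append_of_mem hb
    right; right
    rw [Row.apply_eq_length (U := U ++ w :: V₁) (V := V₂ ++ [l]) (by rw [hf]; simp),
      Row.apply_eq_length (U := U ++ w :: l :: V₁) (V := V₂) (by rw [hf']; simp)]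
    simp only [List.length_append, List.length_cons]
    omega
  · exact .inr (.inl rfl)

theorem isRowMove_of_toList_eq {e f f' : Row A} {T U V : List A} {w l : A}
    (he : e.toList = T ++ [w]) (hf : f.toList = U ++ w :: (V ++ [l]))
    (hf' : f'.toList = U ++ w :: l :: V) : IsRowMove e f f' w l := by
  have hcard : Fintype.card A = T.length + 1 := by
    rw [← e.length_toList, he, List.length_append, List.length_singleton]
  have hlength : Fintype.card A = (U ++ w :: V).length + 1 := by
    rw [← f.length_toList, hf, ← List.length_concat (a := l)]
    simp
  have hew : (e w : ℕ) = T.length := Row.apply_eq_length he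
  have hfw : (f w : ℕ) = U.length := Row.apply_eq_length hf
  have hfl : (f l : ℕ) = (U ++ w :: V).length := Row.apply_eq_length (V := []) (by rw [hf]; simp)
  have hfl' : (f' l : ℕ) = (U ++ [w]).length := Row.apply_eq_length (V := V) (by rw [hf']; simp)
  simp only [List.length_append, List.length_cons, List.length_nil] at hlength hfl hfl'
  have hcases := Row.apply_of_last_moved_after hf hf'
  refine ⟨fun x => ?_, fun x => ?_, fun b hb => Fin.ext ?_, by omega, fun b hb hbl => ?_⟩
  · have := (e x).isLt
    rw [Fin.le_def]
    omega
  · have := (f x).isLt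
    rw [Fin.le_def]
    omega
  · rw [Fin.le_def] at hb
    obtain h | rfl | h := hcases b <;> omega
  · rw [Fin.le_def] at hb
    obtain h | rfl | h := hcases b
    exacts [by omega, absurd rfl hbl, h.2]

/-- Each of the two pairs can be reached from the other one by right Rauzy moves. -/
abbrev RightEquiv (π ρ : RPair A) : Prop :=
  AntisymmRel (Relation.ReflTransGen RightMove) π ρ

/-- Each of the two pairs lies in the extended Rauzy class of the other one. -/
abbrev RauzyEquiv (π ρ : RPair A) : Prop :=
  AntisymmRel (Relation.ReflTransGen fun π ρ => RightMove π ρ ∨ LeftMove π ρ) π ρ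

theorem RightEquiv.rauzyEquiv {π ρ : RPair A} (h : RightEquiv π ρ) : RauzyEquiv π ρ :=
  ⟨Relation.ReflTransGen.mono (fun _ _ => Or.inl) _ _ h.1,
    Relation.ReflTransGen.mono (fun _ _ => Or.inl) _ _ h.2⟩

theorem RightEquiv.reverse_rauzyEquiv {π ρ : RPair A} (h : RightEquiv π ρ) :
    RauzyEquiv π.reverse ρ.reverse :=
  have hstep (π ρ : RPair A) (h : RightMove π ρ) :
      RightMove π.reverse ρ.reverse ∨ LeftMove π.reverse ρ.reverse :=
    .inr (leftMove_of_rightMove_reverse (by simpa only [RPair.reverse_reverse] using h))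
  ⟨h.1.lift _ hstep, h.2.lift _ hstep⟩

theorem reflTransGen_rightMove_of_rotate {π : RPair A} {ε : Bool} {f f' : Row A}
    {T U V : List A} {z : A} {n : ℕ} (hε : Row.toList (π ε) = T ++ [z])
    (hf : f.toList = U ++ z :: V.rotate n) (hf' : f'.toList = U ++ z :: V) :
    Relation.ReflTransGen RightMove (Function.update π (!ε) f) (Function.update π (!ε) f') := by
  choose g hg using fun k => Row.exists_toList_eq_of_perm (e := f') (l := U ++ z :: V.rotate k)
    (hf' ▸ ((List.rotate_perm V k).cons z).append_left U)
  have hstep : ∀ k, Relation.ReflTransGen RightMove (Function.update π (!ε) (g (k + 1)))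
      (Function.update π (!ε) (g k)) := fun k => by
    obtain hV | ⟨y, W, hV⟩ : V.rotate k = [] ∨ ∃ y W, V.rotate k = y :: W := by
      cases V.rotate k <;> simp
    · rw [Row.toList_injective ((hg (k + 1)).trans ((hg k).trans
        (by rw [← List.rotate_rotate, hV, List.rotate_nil])).symm).symm]
    · refine .single (rightMove_iff.2 ⟨ε, z, y, by simp, ?_⟩)
      simp only [Function.update_self, Function.update_of_ne (Bool.not_ne_self ε).symm]
      refine isRowMove_of_toList_eq hε ?_ ((hg k).trans (by rw [hV]))
      rw [hg, ← List.rotate_rotate, hV, List.rotate_cons_succ, List.rotate_zero]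
  rw [Row.toList_injective (hf.trans (hg n).symm),
    Row.toList_injective (hf'.trans ((hg 0).trans (by rw [List.rotate_zero])).symm)]
  clear hf
  induction n with
  | zero => rfl
  | succ n ih => exact (hstep n).trans ih

theorem exists_rightEquiv_of_isRotated {π : RPair A} {ε : Bool} {T U V V' : List A} {z : A}
    (hε : Row.toList (π ε) = T ++ [z]) (hnot : Row.toList (π (!ε)) = U ++ z :: V)
    (hV : V ~r V') :
    ∃ ρ : RPair A, ρ ε = π ε ∧ Row.toList (ρ (!ε)) = U ++ z :: V' ∧ RightEquiv π ρ := by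
  obtain ⟨f, hf⟩ := Row.exists_toList_eq_of_perm (e := π (!ε)) (l := U ++ z :: V')
    (hnot ▸ (hV.perm.symm.cons z).append_left U)
  obtain ⟨m, rfl⟩ := hV
  obtain ⟨n, hn⟩ := List.IsRotated.symm ⟨m, rfl⟩
  refine ⟨Function.update π (!ε) f, by simp, by simpa using hf, ?_, ?_⟩
  · simpa only [Function.update_eq_self] using
      reflTransGen_rightMove_of_rotate hε (hnot.trans (by rw [hn])) hf
  · simpa only [Function.update_eq_self] using
      reflTransGen_rightMove_of_rotate (f' := π (!ε)) hε hf hnot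

theorem exists_rauzyEquiv_of_isRotated_left {π : RPair A} {ε : Bool} {T U V V' : List A} {z : A}
    (hε : Row.toList (π ε) = z :: T) (hnot : Row.toList (π (!ε)) = V ++ z :: U)
    (hV : V ~r V') :
    ∃ ρ : RPair A, ρ ε = π ε ∧ Row.toList (ρ (!ε)) = V' ++ z :: U ∧ RauzyEquiv π ρ := by
  obtain ⟨ρ, hρε, hρ, hequiv⟩ := exists_rightEquiv_of_isRotated (π := π.reverse) (ε := ε)
    (T := T.reverse) (U := U.reverse) (V := V.reverse) (z := z)
    (by rw [RPair.reverse_apply, Row.toList_reverse, hε]; simp)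
    (by rw [RPair.reverse_apply, Row.toList_reverse, hnot]; simp) hV.reverse
  refine ⟨ρ.reverse, ?_, ?_, ?_⟩
  · rw [RPair.reverse_apply, hρε, RPair.reverse_apply, Row.reverse_reverse]
  · rw [RPair.reverse_apply, Row.toList_reverse, hρ]
    simp
  · simpa only [RPair.reverse_reverse] using RightEquiv.reverse_rauzyEquiv hequiv

theorem RightMove.pairRename {π ρ : RPair A} (h : RightMove π ρ) (ν : Perm A) :
    RightMove (pairRename π ν) (pairRename ρ ν) := by
  obtain ⟨ε, w, l, hw, hl, hε, hle, hloser, hnot⟩ := h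
  refine ⟨ε, ν.symm w, ν.symm l, fun x => ?_, fun x => ?_, congrArg ν.trans hε, fun b hb => ?_, ?_,
    fun b hb hbl => ?_⟩
  · simpa [_root_.pairRename] using hw (ν x)
  · simpa [_root_.pairRename] using hl (ν x)
  · exact hle (ν b) (by simpa [_root_.pairRename] using hb)
  · simpa [_root_.pairRename] using hloser
  · exact hnot (ν b) (by simpa [_root_.pairRename] using hb) fun h => hbl (by simp [← h])

theorem LeftMove.pairRename {π ρ : RPair A} (h : LeftMove π ρ) (ν : Perm A) :
    LeftMove (pairRename π ν) (pairRename ρ ν) := by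
  obtain ⟨ε, w, l, hw, hl, hε, hge, hloser, hnot⟩ := h
  refine ⟨ε, ν.symm w, ν.symm l, fun x => ?_, fun x => ?_, congrArg ν.trans hε, fun b hb => ?_, ?_,
    fun b hb hbl => ?_⟩
  · simpa [_root_.pairRename] using hw (ν x)
  · simpa [_root_.pairRename] using hl (ν x)
  · exact hge (ν b) (by simpa [_root_.pairRename] using hb)
  · simpa [_root_.pairRename] using hloser
  · exact hnot (ν b) (by simpa [_root_.pairRename] using hb) fun h => hbl (by simp [← h])

theorem RauzyEquiv.pairRename {π ρ : RPair A} (h : RauzyEquiv π ρ) (ν : Perm A) :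
    RauzyEquiv (pairRename π ν) (pairRename ρ ν) :=
  have hstep (π ρ : RPair A) : RightMove π ρ ∨ LeftMove π ρ → _ :=
    Or.imp (fun h => h.pairRename ν) fun h => h.pairRename ν
  ⟨h.1.lift (_root_.pairRename · ν) hstep, h.2.lift (_root_.pairRename · ν) hstep⟩

/-- The pairs `π` and `ρ` are Rauzy equivalent up to a renaming of sign `s`. -/
def SignedEquiv [DecidableEq A] (s : ℤˣ) (π ρ : RPair A) : Prop :=
  ∃ τ : Perm A, Perm.sign τ = s ∧ RauzyEquiv π (pairRename ρ τ)

namespace SignedEquiv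

variable [DecidableEq A] {s t : ℤˣ} {π ρ σ : RPair A}

theorem of_rauzyEquiv (h : RauzyEquiv π ρ) : SignedEquiv 1 π ρ := ⟨1, Perm.sign_one, h⟩

theorem trans (h : SignedEquiv s π ρ) (h' : SignedEquiv t ρ σ) : SignedEquiv (s * t) π σ := by
  obtain ⟨τ, hτ, hπ⟩ := h
  obtain ⟨τ', hτ', hρ⟩ := h'
  exact ⟨τ' * τ, by rw [Perm.sign_mul, hτ, hτ', mul_comm],
    AntisymmRel.trans hπ (RauzyEquiv.pairRename hρ τ)⟩

theorem symm (h : SignedEquiv s π ρ) : SignedEquiv s ρ π := by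
  obtain ⟨τ, hτ, hπ⟩ := h
  refine ⟨τ⁻¹, by rw [Perm.sign_inv, hτ], ?_⟩
  have hcancel : pairRename (pairRename ρ τ) τ⁻¹ = ρ := by
    change pairRename ρ (τ * τ⁻¹) = ρ
    rw [mul_inv_cancel]
    rfl
  rw [← hcancel]
  exact RauzyEquiv.pairRename hπ.symm τ⁻¹

end SignedEquiv

/-- The pair `π`, written as a two-row array, has top row `t` and bottom row `b`. -/
def HasRows (π : RPair A) (t b : List A) : Prop :=
  Row.toList (π false) = t ∧ Row.toList (π true) = b

theorem HasRows.ext {π ρ : RPair A} {t b : List A} (hπ : HasRows π t b) (hρ : HasRows ρ t b) :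
    π = ρ :=
  funext fun ε => Row.toList_injective <| by
    cases ε
    exacts [hπ.1.trans hρ.1.symm, hπ.2.trans hρ.2.symm]

/-- Every pair with rows `t`, `b` is Rauzy equivalent to a pair with rows `t'`, `b'`. -/
def RowsEquiv (t b t' b' : List A) : Prop :=
  ∀ π : RPair A, HasRows π t b → ∃ ρ, HasRows ρ t' b' ∧ RauzyEquiv π ρ

namespace RowsEquiv

variable {t b t' b' t'' b'' T U V V' : List A} {z : A}

theorem trans (h : RowsEquiv t b t' b') (h' : RowsEquiv t' b' t'' b'') :
    RowsEquiv t b t'' b'' := fun π hπ => by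
  obtain ⟨ρ, hρ, hπρ⟩ := h π hπ
  obtain ⟨σ, hσ, hρσ⟩ := h' ρ hρ
  exact ⟨σ, hσ, AntisymmRel.trans hπρ hρσ⟩

theorem rotate_bottom_right (hV : V ~r V') :
    RowsEquiv (T ++ [z]) (U ++ z :: V) (T ++ [z]) (U ++ z :: V') := fun π hπ => by
  obtain ⟨ρ, htop, hbottom, hπρ⟩ := exists_rightEquiv_of_isRotated (ε := false) hπ.1 hπ.2 hV
  exact ⟨ρ, ⟨(congrArg Row.toList htop).trans hπ.1, hbottom⟩, RightEquiv.rauzyEquiv hπρ⟩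

theorem rotate_top_right (hV : V ~r V') :
    RowsEquiv (U ++ z :: V) (T ++ [z]) (U ++ z :: V') (T ++ [z]) := fun π hπ => by
  obtain ⟨ρ, hbottom, htop, hπρ⟩ := exists_rightEquiv_of_isRotated (ε := true) hπ.2 hπ.1 hV
  exact ⟨ρ, ⟨htop, (congrArg Row.toList hbottom).trans hπ.2⟩, RightEquiv.rauzyEquiv hπρ⟩

theorem rotate_bottom_left (hV : V ~r V') :
    RowsEquiv (z :: T) (V ++ z :: U) (z :: T) (V' ++ z :: U) := fun π hπ => by
  obtain ⟨ρ, htop, hbottom, hπρ⟩ := exists_rauzyEquiv_of_isRotated_left (ε := false) hπ.1 hπ.2 hV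
  exact ⟨ρ, ⟨(congrArg Row.toList htop).trans hπ.1, hbottom⟩, hπρ⟩

theorem rotate_top_left (hV : V ~r V') :
    RowsEquiv (V ++ z :: U) (z :: T) (V' ++ z :: U) (z :: T) := fun π hπ => by
  obtain ⟨ρ, hbottom, htop, hπρ⟩ := exists_rauzyEquiv_of_isRotated_left (ε := true) hπ.2 hπ.1 hV
  exact ⟨ρ, ⟨htop, (congrArg Row.toList hbottom).trans hπ.2⟩, hπρ⟩

end RowsEquiv

/-! ### Odd steps between standard pairs -/

section Lists

variable {α : Type*} {l m w V X Y Z : List α} {b q r x : α}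

theorem exists_isRotated_cons (h : b ∈ l) : ∃ w, l ~r b :: w := by
  obtain ⟨s, t, rfl⟩ := List.append_of_mem h
  exact ⟨t ++ s, List.isRotated_append⟩

theorem exists_factors_of_perm {s : α} {v : List α} (h : (q :: w).Perm (s :: v)) :
    ∃ X U P Y r, q :: w = X ++ U ∧ s :: v = P ++ Y ∧ X.head? = some q ∧ X.getLast? = some r ∧
      Y.head? = some q ∧ Y.getLast? = some r := by
  obtain ⟨P, Y, hPY⟩ := List.append_of_mem (h.mem_iff.1 (List.mem_cons_self (a := q)))
  obtain ⟨Z, r, hZr⟩ := List.eq_nil_or_concat' (q :: Y) |>.resolve_left (List.cons_ne_nil q Y)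
  have hr : r ∈ q :: w := h.mem_iff.2 (by rw [hPY, hZr]; simp)
  obtain ⟨X, U, hXU⟩ := List.append_of_mem hr
  refine ⟨X ++ [r], U, P, q :: Y, r, by rw [hXU, List.append_cons], hPY, ?_, by simp, rfl, ?_⟩
  · have hhead := congrArg List.head? (hXU.trans (List.append_cons X r U))
    rw [List.head?_cons, List.head?_append_of_ne_nil _ (by simp)] at hhead
    exact hhead.symm
  · simp [hZr]

variable [DecidableEq α]

theorem formPerm_eq_swap_mul (hl : l.Nodup) (h : l ~r b :: q :: w) :
    l.formPerm = swap b q * (q :: w).formPerm := by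
  rw [List.formPerm_eq_of_isRotated hl h, List.formPerm_cons_cons]

theorem exists_isRotated_cons_cons {f : Perm α} (hl : l.Nodup) (hb : f b = b) (hq : q ≠ b)
    (h : l.formPerm = swap b q * f) : ∃ w, l ~r b :: q :: w ∧ (q :: w).formPerm = f := by
  have hbq : l.formPerm b = q := by rw [h, Perm.mul_apply, hb, swap_apply_left]
  have hmem : b ∈ l := List.mem_of_formPerm_apply_ne (hbq ▸ hq)
  obtain ⟨_ | ⟨q', w⟩, hw⟩ := exists_isRotated_cons hmem
  · rw [List.formPerm_eq_of_isRotated hl hw, List.formPerm_singleton] at hbq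
    exact absurd hbq.symm hq
  · have hform := formPerm_eq_swap_mul hl hw
    have hbw : b ∉ q' :: w := (List.nodup_cons.1 (hw.nodup_iff.1 hl)).1
    obtain rfl : q' = q := by
      rw [← hbq, hform, Perm.mul_apply, List.formPerm_apply_of_notMem hbw, swap_apply_left]
    exact ⟨w, hw, mul_left_cancel (hform.symm.trans h)⟩

theorem formPerm_apply_of_cons_eq_concat (h : x :: Z = Y ++ [r]) : (x :: Z).formPerm r = x := by
  have hlast := List.formPerm_apply_getLast x Z
  simpa only [h, List.getLast_append_singleton] using hlast

theorem formPerm_append_cons (hX : X.getLast? = some r) (hl : (X ++ b :: V).Nodup) :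
    (X ++ b :: V).formPerm = swap b ((X ++ V).formPerm r) * (X ++ V).formPerm := by
  obtain ⟨Y, rfl⟩ := List.getLast?_eq_some_iff.1 hX
  obtain ⟨x, Z, hxZ⟩ := List.exists_cons_of_ne_nil (l := V ++ (Y ++ [r])) (by simp)
  have hrot : (Y ++ [r]) ++ V ~r x :: Z := hxZ ▸ List.isRotated_append
  have hnodup : ((Y ++ [r]) ++ V).Nodup := hl.sublist (by simp)
  have hrot' : (Y ++ [r]) ++ b :: V ~r b :: x :: Z :=
    hxZ ▸ (List.isRotated_append (l := Y ++ [r]) (l' := b :: V))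
  have hr := formPerm_apply_of_cons_eq_concat (Y := V ++ Y) (by rw [← hxZ, List.append_assoc])
  rw [formPerm_eq_swap_mul hl hrot', List.formPerm_eq_of_isRotated hnodup hrot, hr]

theorem formPerm_append_cons_cons (hl : (Y ++ b :: q :: V).Nodup) :
    (Y ++ b :: q :: V).formPerm = swap b q * (Y ++ q :: V).formPerm := by
  have hnodup : (Y ++ q :: V).Nodup := hl.sublist (by simp)
  rw [List.formPerm_eq_of_isRotated hnodup List.isRotated_append]
  exact formPerm_eq_swap_mul hl List.isRotated_append

theorem isRotated_of_formPerm_eq (hl : l.Nodup) (hlm : l.Perm m)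
    (h : l.formPerm = m.formPerm) : l ~r m := by
  obtain h | ⟨hlength, -⟩ := (List.formPerm_eq_formPerm_iff hl (hlm.nodup_iff.1 hl)).1 h
  · exact h
  · obtain _ | ⟨x, _ | ⟨y, w⟩⟩ := l
    · rw [List.nil_perm.1 hlm]
    · rw [List.singleton_perm.1 hlm]
    · simp at hlength

theorem map_swap_eq_self {a : α} (ha : a ∉ l) (hb : b ∉ l) : l.map (swap a b) = l := by
  refine (List.map_congr_left fun x hx => ?_).trans (List.map_id l)
  exact swap_apply_of_ne_of_ne (ne_of_mem_of_not_mem hx ha) (ne_of_mem_of_not_mem hx hb)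

end Lists

namespace RowsEquiv

variable {W W' V V' X Y U P : List A} {a b q r : A}

theorem rotate_standard (hW : W ~r V) (hW' : W' ~r V') :
    RowsEquiv (a :: W) (W' ++ [a]) (a :: V) (V' ++ [a]) :=
  (rotate_top_right (U := []) hW).trans (rotate_bottom_left (U := []) hW')

theorem rotate_flipped (hW : W ~r V) (hW' : W' ~r V') :
    RowsEquiv (W ++ [a]) (a :: W') (V ++ [a]) (a :: V') :=
  (rotate_bottom_right (U := []) hW').trans (rotate_top_left (U := []) hW)

-- The five rotations pass through
-- `aXUb / baPY`, `aXbU / baPY`, `XabU / baPY`, `XabU / aPbY`.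
theorem standard_flipped (hXq : X.head? = some q) (hXr : X.getLast? = some r)
    (hYq : Y.head? = some q) (hYr : Y.getLast? = some r) :
    RowsEquiv (a :: (X ++ U ++ [b])) (b :: (P ++ Y) ++ [a])
      (X ++ b :: U ++ [a]) (a :: (P ++ b :: Y)) := by
  obtain ⟨Xt, hXt⟩ := List.head?_eq_some_iff.1 hXq
  obtain ⟨Xi, hXi⟩ := List.getLast?_eq_some_iff.1 hXr
  obtain ⟨Yt, hYt⟩ := List.head?_eq_some_iff.1 hYq
  obtain ⟨Yi, hYi⟩ := List.getLast?_eq_some_iff.1 hYr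
  have h₁ : RowsEquiv (a :: (X ++ U ++ [b])) (b :: (P ++ Y) ++ [a])
      (a :: (X ++ U ++ [b])) (b :: a :: (P ++ Y)) := by
    simpa using rotate_bottom_right (T := a :: (X ++ U)) (z := b) (U := [])
      (List.isRotated_concat a (P ++ Y))
  have h₂ : RowsEquiv (a :: (X ++ U ++ [b])) (b :: a :: (P ++ Y))
      (a :: (X ++ b :: U)) (b :: a :: (P ++ Y)) := by
    simpa [hXi, hYi] using rotate_top_right (T := b :: a :: (P ++ Yi)) (z := r) (U := a :: Xi)
      (List.isRotated_concat b U)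
  have h₃ : RowsEquiv (a :: (X ++ b :: U)) (b :: a :: (P ++ Y))
      (X ++ a :: b :: U) (b :: a :: (P ++ Y)) := by
    simpa using rotate_top_left (T := a :: (P ++ Y)) (z := b) (U := U)
      (List.isRotated_concat a X).symm
  have h₄ : RowsEquiv (X ++ a :: b :: U) (b :: a :: (P ++ Y))
      (X ++ a :: b :: U) (a :: (P ++ b :: Y)) := by
    simpa [hXt, hYt] using rotate_bottom_left (T := Xt ++ a :: b :: U) (z := q) (U := Yt)
      (List.isRotated_concat b (a :: P)).symm
  have h₅ : RowsEquiv (X ++ a :: b :: U) (a :: (P ++ b :: Y))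
      (X ++ b :: U ++ [a]) (a :: (P ++ b :: Y)) := by
    simpa [hXi, hYi] using rotate_top_right (T := a :: (P ++ b :: Yi)) (z := r) (U := Xi)
      (List.isRotated_concat a (b :: U)).symm
  exact h₁.trans (h₂.trans (h₃.trans (h₄.trans h₅)))

end RowsEquiv

namespace HasRows

variable {π : RPair A} {t b : List A}

theorem nodup_top (h : HasRows π t b) : t.Nodup := h.1 ▸ Row.nodup_toList _

theorem perm (h : HasRows π t b) : t.Perm b := by
  obtain ⟨rfl, rfl⟩ := h
  exact (List.perm_ext_iff_of_nodup (Row.nodup_toList _) (Row.nodup_toList _)).2 fun x =>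
    iff_of_true (Row.mem_toList _ x) (Row.mem_toList _ x)

theorem mem_top (h : HasRows π t b) (x : A) : x ∈ t := h.1 ▸ Row.mem_toList _ x

theorem pairRename (h : HasRows π t b) (ν : Perm A) :
    HasRows (pairRename π ν) (t.map ν.symm) (b.map ν.symm) :=
  ⟨(Row.toList_trans ν _).trans (congrArg _ h.1), (Row.toList_trans ν _).trans (congrArg _ h.2)⟩

end HasRows

/-- The top row of `σ` is `a` followed by a word in which each letter is followed cyclically by its
image under `c`, and the bottom row is such a word for `d` followed by `a`. -/
def IsStandard [DecidableEq A] (a : A) (c d : Perm A) (σ : RPair A) : Prop :=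
  ∃ W W' : List A, HasRows σ (a :: W) (W' ++ [a]) ∧ W.formPerm = c ∧ W'.formPerm = d

/-- The mirror image of `IsStandard`: the letter `a` ends the top row and starts the bottom row. -/
def IsFlipped [DecidableEq A] (a : A) (c d : Perm A) (σ : RPair A) : Prop :=
  ∃ W W' : List A, HasRows σ (W ++ [a]) (a :: W') ∧ W.formPerm = c ∧ W'.formPerm = d

section Standard

variable {σ σ' : RPair A} {a b q s : A} {W W' : List A}

theorem HasRows.nodup_standard (h : HasRows σ (a :: W) (W' ++ [a])) : W.Nodup ∧ a ∉ W :=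
  (List.nodup_cons.1 h.nodup_top).symm

theorem HasRows.perm_standard (h : HasRows σ (a :: W) (W' ++ [a])) : W.Perm W' :=
  (h.perm.trans (List.perm_append_singleton a W')).cons_inv

variable [DecidableEq A] {c d f g : Perm A}

theorem IsStandard.rauzyEquiv (h : IsStandard a c d σ) (h' : IsStandard a c d σ') :
    RauzyEquiv σ σ' := by
  obtain ⟨W, W', hW, rfl, rfl⟩ := h
  obtain ⟨V, V', hV, hc, hd⟩ := h'
  have hWV : W.Perm V := ((List.perm_ext_iff_of_nodup hW.nodup_top hV.nodup_top).2 fun x =>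
    iff_of_true (hW.mem_top x) (hV.mem_top x)).cons_inv
  have hnodup := hW.nodup_standard.1
  have hWV' : W'.Perm V' := hW.perm_standard.symm.trans (hWV.trans hV.perm_standard)
  obtain ⟨ρ, hρ, hσρ⟩ := RowsEquiv.rotate_standard (isRotated_of_formPerm_eq hnodup hWV hc.symm)
    (isRotated_of_formPerm_eq (hW.perm_standard.nodup_iff.1 hnodup) hWV' hd.symm) σ hW
  exact hρ.ext hV ▸ hσρ

-- Rotate the rows so that they read `w b a` and `a v b`; exchanging the names `a` and `b` then
-- turns them into `a`-standard rows with the same cyclic words.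
theorem IsFlipped.exists_isStandard (hab : a ≠ b) (h : IsFlipped a c d σ) :
    ∃ σ', IsStandard a c d σ' ∧ SignedEquiv (-1) σ σ' := by
  obtain ⟨W, W', hσ, rfl, rfl⟩ := h
  have hperm : W.Perm W' := ((List.perm_append_singleton a W).symm.trans hσ.perm).cons_inv
  have hnodup := ((List.perm_append_singleton a W).nodup_iff.1 hσ.nodup_top)
  rw [List.nodup_cons] at hnodup
  have hb : b ∈ W := by simpa [hab.symm] using hσ.mem_top b
  obtain ⟨w, hw⟩ := exists_isRotated_cons hb
  obtain ⟨v, hv⟩ := exists_isRotated_cons (hperm.mem_iff.1 hb)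
  have hv' := hv.trans (List.isRotated_concat b v).symm
  obtain ⟨ρ, hρ, hσρ⟩ := RowsEquiv.rotate_flipped hw hv' σ hσ
  have hbw : b ∉ w := (List.nodup_cons.1 (hw.nodup_iff.1 hnodup.2)).1
  have hbv : b ∉ v := (List.nodup_cons.1 (hv.nodup_iff.1 (hperm.nodup_iff.1 hnodup.2))).1
  have haw : a ∉ w := fun h => hnodup.1 (hw.mem_iff.2 (List.mem_cons_of_mem _ h))
  have hav : a ∉ v := fun h =>
    hnodup.1 (hperm.mem_iff.2 (hv.mem_iff.2 (List.mem_cons_of_mem _ h)))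
  refine ⟨pairRename ρ (swap a b), ⟨w ++ [b], b :: v, ?_, ?_, ?_⟩, swap a b,
    Perm.sign_swap hab, ?_⟩
  · simpa [map_swap_eq_self haw hbw, map_swap_eq_self hav hbv] using hρ.pairRename (swap a b)
  · exact (List.formPerm_eq_of_isRotated hnodup.2
      (hw.trans (List.isRotated_concat b w).symm)).symm
  · exact (List.formPerm_eq_of_isRotated (hperm.nodup_iff.1 hnodup.2) hv).symm
  · have hcancel : pairRename (pairRename ρ (swap a b)) (swap a b) = ρ := by
      change pairRename ρ (swap a b * swap a b) = ρ
      rw [swap_mul_self]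
      rfl
    rwa [hcancel]

theorem IsStandard.exists_isFlipped (hf : f b = b) (hg : g b = b) (hq : q ≠ b) (hs : s ≠ b)
    (h : IsStandard a (swap b q * f) (swap b s * g) σ) :
    ∃ σ', IsFlipped a (swap b ((f * g⁻¹) s) * f) (swap b q * g) σ' ∧ RauzyEquiv σ σ' := by
  obtain ⟨W, W', hσ, hW, hW'⟩ := h
  have hnodup := hσ.nodup_standard.1
  obtain ⟨w, hw, rfl⟩ := exists_isRotated_cons_cons hnodup hf hq hW
  obtain ⟨v, hv, rfl⟩ :=
    exists_isRotated_cons_cons (hσ.perm_standard.nodup_iff.1 hnodup) hg hs hW'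
  have hperm : (q :: w).Perm (s :: v) :=
    (hw.perm.symm.trans (hσ.perm_standard.trans hv.perm)).cons_inv
  obtain ⟨X, U, P, Y, r, hX, hY, hXq, hXr, hYq, hYr⟩ := exists_factors_of_perm hperm
  have hgr : (s :: v).formPerm⁻¹ s = r := by
    obtain ⟨Z, rfl⟩ := List.getLast?_eq_some_iff.1 hYr
    exact Perm.inv_eq_iff_eq.2
      (formPerm_apply_of_cons_eq_concat (hY.trans (List.append_assoc P Z [r]).symm)).symm
  obtain ⟨ρ, hρ, hσρ⟩ :=
    RowsEquiv.rotate_standard (hw.trans (List.isRotated_concat b (q :: w)).symm) hv σ hσ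
  rw [hX, hY] at hρ
  obtain ⟨τ, hτ, hρτ⟩ := RowsEquiv.standard_flipped hXq hXr hYq hYr ρ hρ
  refine ⟨τ, ⟨_, _, hτ, ?_, ?_⟩, AntisymmRel.trans hσρ hρτ⟩
  · rw [Perm.mul_apply, hgr, hX, formPerm_append_cons hXr (List.nodup_append.1 hτ.nodup_top).1]
  · have hbottom := List.nodup_cons.1 (hτ.perm.nodup_iff.1 hτ.nodup_top)
    obtain ⟨Y', rfl⟩ := List.head?_eq_some_iff.1 hYq
    rw [hY, formPerm_append_cons_cons hbottom.2]

end Standard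

/-! ### Odd loops -/

section JoinCycles

variable {α : Type*}

theorem pow_apply_ne_self_of_lt_minimalPeriod {f : Perm α} {x : α} {n : ℕ} (h0 : n ≠ 0)
    (hn : n < Function.minimalPeriod f x) : (f ^ n) x ≠ x := fun h =>
  Function.not_isPeriodicPt_of_pos_of_lt_minimalPeriod h0 hn <| by
    rwa [Function.IsPeriodicPt, Perm.iterate_eq_pow]

theorem pow_minimalPeriod_apply (f : Perm α) (x : α) :
    (f ^ Function.minimalPeriod f x) x = x := by
  rw [← Perm.iterate_eq_pow]
  exact Function.isPeriodicPt_minimalPeriod f x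

theorem pow_apply_eq_of_forall_lt {f g : Perm α} {x : α} {n : ℕ}
    (h : ∀ i < n, g ((f ^ i) x) = f ((f ^ i) x)) : (g ^ n) x = (f ^ n) x := by
  induction n with
  | zero => rfl
  | succ n ih =>
    rw [pow_succ', Perm.mul_apply, ih fun i hi => h i (by omega), h n n.lt_succ_self,
      ← Perm.mul_apply, ← pow_succ']

theorem minimalPeriod_pos [Finite α] (f : Perm α) (x : α) : 0 < Function.minimalPeriod f x := by
  rw [← ncard_setOf_sameCycle, Set.ncard_pos]
  exact ⟨x, Perm.SameCycle.refl f x⟩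

theorem minimalPeriod_eq_of_sameCycle [Finite α] {f : Perm α} {x y : α} (h : f.SameCycle x y) :
    Function.minimalPeriod f x = Function.minimalPeriod f y :=
  apply_eq_apply_of_sameCycle (fun z => Function.minimalPeriod_apply
    (Function.minimalPeriod_pos_iff_mem_periodicPts.1 (minimalPeriod_pos f z))) h

theorem minimalPeriod_conj (f g : Perm α) (x : α) :
    Function.minimalPeriod (g * f * g⁻¹) x = Function.minimalPeriod f (g⁻¹ x) :=
  Function.minimalPeriod_eq_minimalPeriod_iff.2 fun n => by
    simp only [Function.IsPeriodicPt, Function.IsFixedPt, Perm.iterate_eq_pow, conj_pow,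
      Perm.mul_apply]
    exact Perm.eq_inv_iff_eq.symm

variable [DecidableEq α] {f : Perm α} {b q s : α}

theorem joinCycles_pow_succ_apply (hs : f s = q) (hbq : ¬ f.SameCycle b q) {n : ℕ}
    (hn : n < Function.minimalPeriod f b) :
    ((swap b q * f * swap b s) ^ (n + 1)) s = swap b q ((f ^ (n + 1)) b) := by
  induction n with
  | zero => simp
  | succ n ih =>
    have hb : (f ^ (n + 1)) b ≠ b := pow_apply_ne_self_of_lt_minimalPeriod n.succ_ne_zero hn
    have hcycle : f.SameCycle b ((f ^ (n + 1)) b) := ⟨(n + 1 : ℕ), by rw [zpow_natCast]⟩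
    have hq : (f ^ (n + 1)) b ≠ q := fun h => hbq (h ▸ hcycle)
    have hs' : (f ^ (n + 1)) b ≠ s := fun h => hbq (hs ▸ Perm.sameCycle_apply_right.2 (h ▸ hcycle))
    rw [pow_succ', Perm.mul_apply, ih (by omega), swap_apply_of_ne_of_ne hb hq, Perm.mul_apply,
      Perm.mul_apply, swap_apply_of_ne_of_ne hb hs', ← Perm.mul_apply f, ← pow_succ']

theorem joinCycles_pow_apply (hs : f s = q) (hbq : ¬ f.SameCycle b q) {n : ℕ}
    (hn : n < Function.minimalPeriod f q) :
    ((swap b q * f * swap b s) ^ n) q = (f ^ n) q := by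
  have hb (i : ℕ) : (f ^ i) q ≠ b := fun h => hbq (Perm.SameCycle.symm ⟨i, by simpa using h⟩)
  refine pow_apply_eq_of_forall_lt fun i hi => ?_
  have hq : (f ^ (i + 1)) q ≠ q :=
    pow_apply_ne_self_of_lt_minimalPeriod i.succ_ne_zero (by omega)
  have hs' : (f ^ i) q ≠ s := fun h => hq (by rw [pow_succ', Perm.mul_apply, h, hs])
  rw [Perm.mul_apply, Perm.mul_apply, swap_apply_of_ne_of_ne (hb i) hs', ← Perm.mul_apply f,
    ← pow_succ', swap_apply_of_ne_of_ne (hb _) hq]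

theorem joinCycles_pow_minimalPeriod_left [Finite α] (hs : f s = q) (hbq : ¬ f.SameCycle b q) :
    ((swap b q * f * swap b s) ^ Function.minimalPeriod f b) s = q := by
  have hlast := joinCycles_pow_succ_apply hs hbq (Nat.sub_lt (minimalPeriod_pos f b) one_pos)
  rwa [Nat.sub_one_add_one (minimalPeriod_pos f b).ne', pow_minimalPeriod_apply,
    swap_apply_left] at hlast

theorem joinCycles_pow_minimalPeriod_right [Finite α] (hs : f s = q) (hbq : ¬ f.SameCycle b q) :
    ((swap b q * f * swap b s) ^ (Function.minimalPeriod f q - 1)) q = s := by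
  rw [joinCycles_pow_apply hs hbq (Nat.sub_lt (minimalPeriod_pos f q) one_pos)]
  apply f.injective
  rw [← Perm.mul_apply, ← pow_succ', Nat.sub_one_add_one (minimalPeriod_pos f q).ne',
    pow_minimalPeriod_apply, hs]

end JoinCycles

namespace IsStandard

variable [DecidableEq A] {a b q s : A} {c d f g : Perm A} {σ : RPair A}

theorem apply_self (h : IsStandard a c d σ) : c a = a := by
  obtain ⟨W, W', hσ, rfl, rfl⟩ := h
  exact List.formPerm_apply_of_notMem hσ.nodup_standard.2

theorem apply_bottom_ne (h : IsStandard a c d σ) (hb : c b ≠ b) : d b ≠ b := by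
  obtain ⟨W, W', hσ, rfl, rfl⟩ := h
  have hnodup := hσ.nodup_standard.1
  have hmem : b ∈ W := List.mem_of_formPerm_apply_ne hb
  rw [Ne, List.formPerm_apply_mem_eq_self_iff _ hnodup _ hmem] at hb
  rwa [Ne, List.formPerm_apply_mem_eq_self_iff _ (hσ.perm_standard.nodup_iff.1 hnodup) _
    (hσ.perm_standard.mem_iff.1 hmem), ← hσ.perm_standard.length_eq]

theorem exists_pow_eq (h : IsStandard a c d σ) {x y : A} (hx : x ≠ a) (hy : y ≠ a) :
    ∃ n : ℕ, (c ^ n) x = y := by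
  obtain ⟨W, W', hσ, rfl, rfl⟩ := h
  have hmem (z : A) (hz : z ≠ a) : z ∈ W := by simpa [hz] using hσ.mem_top z
  obtain ⟨w, hw⟩ := exists_isRotated_cons (hmem x hx)
  have hnodup := hσ.nodup_standard.1
  obtain ⟨i, hi, rfl⟩ := List.mem_iff_getElem.1 (hw.mem_iff.1 (hmem y hy))
  refine ⟨i, ?_⟩
  rw [List.formPerm_eq_of_isRotated hnodup hw]
  have hpow := List.formPerm_pow_apply_getElem (x :: w) (hw.nodup_iff.1 hnodup) i 0 (by simp)
  simpa only [List.getElem_cons_zero, zero_add, Nat.mod_eq_of_lt hi] using hpow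

theorem exists_odd (hf : f b = b) (hg : g b = b) (hq : q ≠ b) (hs : s ≠ b)
    (h : IsStandard a (swap b q * f) (swap b s * g) σ) :
    ∃ σ', IsStandard a (swap b ((f * g⁻¹) s) * f) (swap b q * g) σ' ∧ SignedEquiv (-1) σ σ' := by
  have hab : a ≠ b := by
    rintro rfl
    exact hq (by simpa [hf] using h.apply_self)
  obtain ⟨ρ, hρ, hσρ⟩ := h.exists_isFlipped hf hg hq hs
  obtain ⟨σ', hσ', hρσ'⟩ := hρ.exists_isStandard hab
  exact ⟨σ', hσ', by simpa using (SignedEquiv.of_rauzyEquiv hσρ).trans hρσ'⟩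

theorem exists_even (hf : f b = b) (hg : g b = b) (hq : q ≠ b) (hs : s ≠ b)
    (h : IsStandard a (swap b q * f) (swap b s * g) σ) (n : ℕ) :
    ∃ σ', IsStandard a (swap b (((f * g⁻¹) ^ n) q) * f) (swap b (((f * g⁻¹) ^ n) s) * g) σ' ∧
      SignedEquiv 1 σ σ' := by
  have hfix : (f * g⁻¹) b = b := by rw [Perm.mul_apply, Perm.inv_eq_iff_eq.2 hg.symm, hf]
  have hne (n : ℕ) {x : A} (hx : x ≠ b) : ((f * g⁻¹) ^ n) x ≠ b := fun h =>
    hx (((f * g⁻¹) ^ n).injective (h.trans (Perm.pow_apply_eq_self_of_apply_eq_self hfix n).symm))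
  induction n with
  | zero => exact ⟨σ, h, SignedEquiv.of_rauzyEquiv (AntisymmRel.refl _ σ)⟩
  | succ n ih =>
    obtain ⟨σ₁, hσ₁, h₁⟩ := ih
    obtain ⟨σ₂, hσ₂, h₂⟩ := hσ₁.exists_odd hf hg (hne n hq) (hne n hs)
    rw [← Perm.mul_apply (f * g⁻¹), ← pow_succ'] at hσ₂
    obtain ⟨σ₃, hσ₃, h₃⟩ := hσ₂.exists_odd hf hg (hne (n + 1) hs) (hne n hq)
    rw [← Perm.mul_apply (f * g⁻¹), ← pow_succ'] at hσ₃
    exact ⟨σ₃, hσ₃, by simpa using (h₁.trans h₂).trans h₃⟩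

theorem signedEquiv_self_of_apply (h : IsStandard a c d σ)
    (hcycle : ¬ (c * d⁻¹).SameCycle b (c b))
    (hperiod : Function.minimalPeriod (c * d⁻¹) b = Function.minimalPeriod (c * d⁻¹) (c b)) :
    SignedEquiv (-1) σ σ := by
  have hc : c b ≠ b := fun h => hcycle (h.symm ▸ Perm.SameCycle.refl _ b)
  have hd : d b ≠ b := h.apply_bottom_ne hc
  set q := c b with hq
  set s := d b with hs
  have hQs : (c * d⁻¹) s = q := by simp [hq, hs]
  have hjoin : swap b q * c * (swap b s * d)⁻¹ = swap b q * (c * d⁻¹) * swap b s := by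
    simp only [mul_inv_rev, swap_inv, mul_assoc]
  have hf : (swap b q * c) b = b := by simp [← hq]
  have hg : (swap b s * d) b = b := by simp [← hs]
  have hσ : IsStandard a (swap b q * (swap b q * c)) (swap b s * (swap b s * d)) σ := by
    simpa only [swap_mul_self_mul] using h
  obtain ⟨σ₁, hσ₁, h₁⟩ := hσ.exists_odd hf hg hc hd
  have hRs : (swap b q * c * (swap b s * d)⁻¹) s ≠ b := by
    rw [hjoin]
    intro hb
    refine hcycle ⟨1, ?_⟩
    simpa [swap_apply_eq_iff] using hb
  obtain ⟨σ₂, hσ₂, h₂⟩ :=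
    hσ₁.exists_even hf hg hRs hc (Function.minimalPeriod (c * d⁻¹) b - 1)
  have hleft := joinCycles_pow_minimalPeriod_left hQs hcycle
  have hright := joinCycles_pow_minimalPeriod_right hQs hcycle
  rw [← Perm.mul_apply, ← pow_succ, Nat.sub_one_add_one (minimalPeriod_pos _ b).ne', hjoin, hleft,
    hperiod, hright, swap_mul_self_mul, swap_mul_self_mul] at hσ₂
  simpa using (h₁.trans h₂).trans (SignedEquiv.of_rauzyEquiv (hσ₂.rauzyEquiv h))

theorem exists_isStandard_conj (h : IsStandard a c d σ) (hcycle : ¬ (c * d⁻¹).SameCycle b (c b)) :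
    ∃ c' d' σ', IsStandard a c' d' σ' ∧ SignedEquiv (-1) σ σ' ∧
      c' * d'⁻¹ = swap b (c b) * (c * d⁻¹) * (swap b (c b))⁻¹ ∧
      ∀ x, x ≠ b → ¬ (c * d⁻¹).SameCycle b (c x) → c' x = c x := by
  have hc : c b ≠ b := fun h => hcycle (h.symm ▸ Perm.SameCycle.refl _ b)
  have hσ : IsStandard a (swap b (c b) * (swap b (c b) * c)) (swap b (d b) * (swap b (d b) * d))
      σ := by simpa only [swap_mul_self_mul] using h
  obtain ⟨σ', hσ', hσσ'⟩ := hσ.exists_odd (by simp) (by simp) hc (h.apply_bottom_ne hc)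
  set R := swap b (c b) * c * (swap b (d b) * d)⁻¹ with hR
  have hRb : R b = b := by
    have hinv : (swap b (d b) * d)⁻¹ b = b := Perm.inv_eq_iff_eq.2 (by simp)
    rw [hR, Perm.mul_apply, hinv, Perm.mul_apply, swap_apply_right]
  refine ⟨_, _, σ', hσ', hσσ', ?_, fun x hxb hx => ?_⟩
  · have hswap : swap b (R (d b)) = R * swap b (d b) * R⁻¹ := by rw [← swap_apply_apply, hRb]
    rw [hswap, hR]
    simp [mul_assoc]
  · have hcx : c x ≠ b := fun h => hx (h.symm ▸ Perm.SameCycle.refl _ b)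
    have hcxb : c x ≠ c b := c.injective.ne hxb
    have hcxR : c x ≠ R (d b) := by
      intro hxR
      have hRd : R (d b) = swap b (c b) ((c * d⁻¹) b) := by simp [hR]
      by_cases hfix : (c * d⁻¹) b = b
      · exact hcxb (by rw [hxR, hRd, hfix, swap_apply_left])
      · have hnext : (c * d⁻¹).SameCycle b ((c * d⁻¹) b) := ⟨1, by simp⟩
        rw [swap_apply_of_ne_of_ne hfix fun h => hcycle (by rwa [h] at hnext)] at hRd
        exact hx (by rwa [hxR, hRd])
    rw [Perm.mul_apply, Perm.mul_apply (swap b (c b)), swap_apply_of_ne_of_ne hcx hcxb,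
      swap_apply_of_ne_of_ne hcx hcxR]

theorem exists_isStandard_conj_pow {m : ℕ} (h : IsStandard a c d σ)
    (hcycle : ∀ i, 0 < i → i ≤ m + 2 → ¬ (c * d⁻¹).SameCycle b ((c ^ i) b)) :
    ∃ c' d' σ', IsStandard a c' d' σ' ∧ SignedEquiv (-1) σ σ' ∧
      c' * d'⁻¹ = swap b (c b) * (c * d⁻¹) * (swap b (c b))⁻¹ ∧
      (c' ^ (m + 1)) (c b) = (c ^ (m + 2)) b := by
  obtain ⟨c', d', σ', hσ', hσσ', hconj, hagree⟩ :=
    h.exists_isStandard_conj (hcycle 1 one_pos (by omega))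
  have hpow (i : ℕ) : (c ^ i) (c b) = (c ^ (i + 1)) b := by rw [pow_succ, Perm.mul_apply]
  refine ⟨c', d', σ', hσ', hσσ', hconj, ?_⟩
  rw [← hpow]
  refine pow_apply_eq_of_forall_lt fun i hi => ?_
  rw [hpow]
  refine hagree _ (fun h => hcycle _ i.succ_pos (by omega) (h.symm ▸ Perm.SameCycle.refl _ b)) ?_
  rw [← Perm.mul_apply, ← pow_succ']
  exact hcycle _ (by omega) (by omega)

-- If `c ^ m` carries `b` to another cycle and no smaller power does, an odd step shortens the
-- distance to `m - 1` while conjugating `c * d⁻¹`; the odd loop is the conjugate of a shorter one.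
theorem signedEquiv_self_of_pow (m : ℕ) (h : IsStandard a c d σ)
    (hcycle : ¬ (c * d⁻¹).SameCycle b ((c ^ m) b))
    (hperiod : Function.minimalPeriod (c * d⁻¹) b = Function.minimalPeriod (c * d⁻¹) ((c ^ m) b)) :
    SignedEquiv (-1) σ σ := by
  induction m using Nat.strong_induction_on generalizing b c d σ with
  | _ m ih =>
  by_cases hmid : ∃ t, 0 < t ∧ t < m ∧ (c * d⁻¹).SameCycle b ((c ^ t) b)
  · obtain ⟨t, ht, htm, hcyclet⟩ := hmid
    have hsplit : (c ^ (m - t)) ((c ^ t) b) = (c ^ m) b := by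
      rw [← Perm.mul_apply, ← pow_add, Nat.sub_add_cancel htm.le]
    exact ih (m - t) (by omega) h (hsplit.symm ▸ fun h' => hcycle (hcyclet.trans h'))
      (by rw [hsplit, ← minimalPeriod_eq_of_sameCycle hcyclet, hperiod])
  push Not at hmid
  rcases m with _ | _ | m
  · exact absurd (Perm.SameCycle.refl _ _) hcycle
  · exact h.signedEquiv_self_of_apply hcycle hperiod
  have hpow (i : ℕ) (hi : 0 < i) (him : i ≤ m + 2) : ¬ (c * d⁻¹).SameCycle b ((c ^ i) b) :=
    him.lt_or_eq.elim (hmid i hi) fun h => h ▸ hcycle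
  have hne (i : ℕ) (hi : 0 < i) (him : i ≤ m + 2) : (c ^ i) b ≠ b := fun h =>
    hpow i hi him (h.symm ▸ Perm.SameCycle.refl _ b)
  obtain ⟨c', d', σ', hσ', hσσ', hconj, hpow'⟩ := h.exists_isStandard_conj_pow hpow
  have hfix : swap b (c b) ((c ^ (m + 2)) b) = (c ^ (m + 2)) b :=
    swap_apply_of_ne_of_ne (hne _ (by omega) le_rfl) fun h =>
      hne (m + 1) (by omega) (by omega) (c.injective (by rwa [pow_succ', Perm.mul_apply] at h))
  have hloop : SignedEquiv (-1) σ' σ' := by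
    refine ih (m + 1) (by omega) (b := c b) hσ' ?_ ?_
    · rwa [hconj, hpow', Perm.sameCycle_conj, swap_inv, swap_apply_right, hfix]
    · rwa [hconj, hpow', minimalPeriod_conj, minimalPeriod_conj, swap_inv, swap_apply_right, hfix]
  simpa using (hσσ'.trans hloop).trans hσσ'.symm

theorem signedEquiv_self {x y : A} (h : IsStandard a c d σ) (hx : x ≠ a) (hy : y ≠ a)
    (hcycle : ¬ (c * d⁻¹).SameCycle x y)
    (hperiod : Function.minimalPeriod (c * d⁻¹) x = Function.minimalPeriod (c * d⁻¹) y) :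
    SignedEquiv (-1) σ σ := by
  obtain ⟨m, rfl⟩ := h.exists_pow_eq hx hy
  exact h.signedEquiv_self_of_pow m hcycle hperiod

end IsStandard

theorem Row.forall_le_of_forall_le {e f : Row A} {k : Fin (Fintype.card A)}
    (h : ∀ x, e x ≤ k → f x ≤ k) (x : A) (hx : f x ≤ k) : e x ≤ k := by
  have hmaps : Set.MapsTo (e.symm.trans f) (Set.Iic k) (Set.Iic k) := fun i hi =>
    h _ (by simpa using hi)
  simpa using Perm.perm_symm_mapsTo_of_mapsTo (e.symm.trans f) hmaps hx

theorem pairIrreducible_iff {π : RPair A} (ε : Bool) : PairIrreducible π ↔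
    ∀ k : Fin (Fintype.card A), (∀ x, π ε x ≤ k → π (!ε) x ≤ k) → (k : ℕ) + 1 = Fintype.card A := by
  cases ε
  · rfl
  · exact forall_congr' fun k => imp_congr_left
      ⟨Row.forall_le_of_forall_le, Row.forall_le_of_forall_le⟩

theorem RightMove.pairIrreducible {π π' : RPair A} (h : RightMove π π') (hπ : PairIrreducible π) :
    PairIrreducible π' := by
  obtain ⟨ε, w, l, hw, -, hε, hle, -⟩ := h
  refine (pairIrreducible_iff (!ε)).2 fun k hk => ?_
  by_contra hlast
  have hkw : k < π (!ε) w := by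
    rw [← hle w le_rfl, ← not_le]
    intro hwk
    have hk_ge := hk w hwk
    have hw_last := Row.add_one_eq_card_of_forall_le hw
    rw [Bool.not_not, hε, Fin.le_def] at hk_ge
    omega
  refine hlast ((pairIrreducible_iff (!ε)).1 hπ k fun x hx => ?_)
  have hxk := hk x (by rwa [hle x (hx.trans hkw.le)])
  rw [Bool.not_not] at hxk ⊢
  rwa [hε] at hxk

theorem RightEquiv.pairIrreducible {π ρ : RPair A} (h : RightEquiv π ρ) (hπ : PairIrreducible π) :
    PairIrreducible ρ := by
  obtain ⟨hpath, -⟩ := h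
  induction hpath with
  | refl => exact hπ
  | tail _ hmove ih => exact hmove.pairIrreducible ih

theorem PairIrreducible.exists_mem_lt_length {π : RPair A} (hπ : PairIrreducible π) {ε : Bool}
    {T U V : List A} {z : A} (hε : Row.toList (π ε) = T ++ [z])
    (hnot : Row.toList (π (!ε)) = U ++ z :: V) (hU : U ≠ []) :
    ∃ y ∈ V, (π ε y : ℕ) < U.length := by
  by_contra! hV
  have hTlen : T.length + 1 = Fintype.card A := by simpa [hε] using Row.length_toList (π ε)
  have hUlen : U.length + (V.length + 1) = Fintype.card A := by
    simpa [hnot] using Row.length_toList (π (!ε))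
  have hpos := List.length_pos_iff.2 hU
  have hlast := (pairIrreducible_iff ε).1 hπ ⟨U.length - 1, by omega⟩ fun y hy => by
    rw [Fin.le_def] at hy ⊢
    simp only at hy ⊢
    have hyz : y ≠ z := by
      rintro rfl
      have := Row.apply_eq_length hε
      omega
    have hyV : y ∉ V := fun h => absurd (hV y h) (by omega)
    have hyU : y ∈ U := by simpa [hnot, hyz, hyV] using Row.mem_toList (π (!ε)) y
    obtain ⟨U₁, U₂, rfl⟩ := List.append_of_mem hyU
    rw [List.append_assoc, List.cons_append] at hnot
    rw [Row.apply_eq_length hnot, List.length_append, List.length_cons]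
    omega
  simp only at hlast
  omega

theorem PairIrreducible.exists_rightEquiv_cons {π : RPair A} (hπ : PairIrreducible π) {ε : Bool}
    {T U V : List A} {z : A} (hε : Row.toList (π ε) = T ++ [z])
    (hnot : Row.toList (π (!ε)) = U ++ z :: V) :
    ∃ σ ε' a T' V', RightEquiv π σ ∧ Row.toList (σ ε') = T' ++ [a] ∧
      Row.toList (σ (!ε')) = a :: V' := by
  induction hn : U.length using Nat.strong_induction_on generalizing π ε T U V z with
  | _ n ih =>
  obtain rfl | hU := eq_or_ne U []
  · exact ⟨π, ε, z, T, V, AntisymmRel.refl _ π, hε, hnot⟩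
  obtain ⟨y, hyV, hy⟩ := hπ.exists_mem_lt_length hε hnot hU
  obtain ⟨w, hw⟩ := exists_isRotated_cons hyV
  obtain ⟨ρ, hρε, hρnot, hπρ⟩ :=
    exists_rightEquiv_of_isRotated hε hnot (hw.trans (List.isRotated_concat y w).symm)
  obtain ⟨P, R, hPR⟩ := List.append_of_mem (Row.mem_toList (π ε) y)
  obtain ⟨σ, ε', a, T', V', hρσ, hσ⟩ := ih P.length
    (by rwa [← Row.apply_eq_length hPR, ← hn]) (RightEquiv.pairIrreducible hπρ hπ) (ε := !ε)
    (z := y) (T := U ++ z :: w) (by rw [hρnot]; simp) (by rw [Bool.not_not, hρε, hPR]) rfl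
  exact ⟨σ, ε', a, T', V', AntisymmRel.trans hπρ hρσ, hσ⟩

theorem PairIrreducible.exists_rightEquiv_hasRows {π : RPair A} (hπ : PairIrreducible π)
    (hN : 2 ≤ Fintype.card A) :
    ∃ σ a W W', RightEquiv π σ ∧ HasRows σ (a :: W) (W' ++ [a]) := by
  obtain ⟨T, z, hT⟩ := (Row.toList (π false)).eq_nil_or_concat'.resolve_left fun h => by
    have := Row.length_toList (π false)
    simp [h] at this
    omega
  obtain ⟨U, V, hU⟩ := List.append_of_mem (Row.mem_toList (π true) z)
  obtain ⟨σ, ε, a, T, V, hπσ, hε, hnot⟩ := hπ.exists_rightEquiv_cons (ε := false) hT hU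
  cases ε with
  | true => exact ⟨σ, a, V, T, hπσ, hnot, hε⟩
  | false =>
    rw [Bool.not_false] at hnot
    rcases T with _ | ⟨b, T⟩
    · have := Row.length_toList (σ false)
      simp [hε] at this
      omega
    have hba : b ≠ a := by
      have := hε ▸ Row.nodup_toList (σ false)
      rintro rfl
      simp at this
    have hb : b ∈ V := by simpa [hnot, hba] using Row.mem_toList (σ true) b
    obtain ⟨w, hw⟩ := exists_isRotated_cons hb
    obtain ⟨ρ, hρε, hρnot, hσρ⟩ := exists_rightEquiv_of_isRotated (U := []) hε hnot
      (hw.trans (List.isRotated_concat b w).symm)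
    exact ⟨ρ, b, T ++ [a], a :: w, AntisymmRel.trans hπσ hσρ, by rw [hρε, hε]; rfl, hρnot⟩

/-! ### Recovering `S` and `Q` from standard rows -/

theorem Row.apply_formPerm [DecidableEq A] {e : Row A} {U W V : List A}
    (h : e.toList = U ++ W ++ V) {y : A} (hy : y ∈ W) :
    (e (W.formPerm y) : ℕ) =
      if (e y : ℕ) + 1 = U.length + W.length then U.length else (e y : ℕ) + 1 := by
  have hW : W.Nodup := (h ▸ e.nodup_toList).of_append_left.of_append_right
  have hpos (i : ℕ) (hi : i < W.length) : (e W[i] : ℕ) = U.length + i := by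
    have hsplit : e.toList = (U ++ W.take i) ++ W[i] :: (W.drop (i + 1) ++ V) := by
      rw [h, List.append_assoc U (W.take i), ← List.cons_append, ← List.drop_eq_getElem_cons hi,
        ← List.append_assoc (W.take i), List.take_append_drop, List.append_assoc]
    rw [Row.apply_eq_length hsplit, List.length_append, List.length_take, min_eq_left hi.le]
  obtain ⟨i, hi, rfl⟩ := List.mem_iff_getElem.1 hy
  rw [List.formPerm_apply_getElem W hW, hpos, hpos _ hi]
  split_ifs with hlast
  · rw [show i + 1 = W.length by omega, Nat.mod_self, add_zero]
  · rw [Nat.mod_eq_of_lt (by omega), add_assoc]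

namespace HasRows

variable {σ : RPair A} {a : A} {W W' : List A}

theorem apply_bottom_last (hσ : HasRows σ (a :: W) (W' ++ [a])) :
    (σ true a : ℕ) + 1 = Fintype.card A := by
  rw [Row.apply_eq_length hσ.2, ← Row.length_toList (σ true), hσ.2, List.length_append,
    List.length_singleton]

theorem XOf_eq [Nonempty A] (hσ : HasRows σ (a :: W) (W' ++ [a])) : XOf σ = a :=
  (eq_XOf_iff.2 (Row.apply_eq_length (U := []) hσ.1)).symm

variable [DecidableEq A]

theorem formPerm_mul_inv_apply_self (hσ : HasRows σ (a :: W) (W' ++ [a])) :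
    (W.formPerm * W'.formPerm⁻¹) a = a := by
  obtain ⟨-, haW⟩ := hσ.nodup_standard
  have haW' : a ∉ W' := fun h => haW (hσ.perm_standard.mem_iff.2 h)
  rw [Perm.mul_apply, Perm.inv_eq_iff_eq.2 (List.formPerm_apply_of_notMem haW').symm,
    List.formPerm_apply_of_notMem haW]

theorem formPerm_bottom_apply (hσ : HasRows σ (a :: W) (W' ++ [a])) {p b y : A}
    (hp : (σ true p : ℕ) = 0) (hb : (σ true b : ℕ) = σ true y + 1) :
    W'.formPerm y = swap a p b := by
  have ha := Row.apply_eq_length hσ.2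
  have ha_last := hσ.apply_bottom_last
  have hya : y ≠ a := by
    rintro rfl
    have := (σ true b).isLt
    omega
  have hy : y ∈ W' := by simpa [hσ.2, hya] using Row.mem_toList (σ true) y
  have hnext := Row.apply_formPerm (U := []) hσ.2 hy
  rw [List.length_nil, zero_add, ← ha, ← hb] at hnext
  refine (σ true).injective (Fin.ext ?_)
  obtain rfl | hba := eq_or_ne b a
  · rw [hnext, if_pos rfl, swap_apply_left, hp]
  have hbp : b ≠ p := by
    rintro rfl
    omega
  rw [hnext, if_neg fun h => hba ((σ true).injective (Fin.ext h)), swap_apply_of_ne_of_ne hba hbp]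

theorem formPerm_top_apply (hσ : HasRows σ (a :: W) (W' ++ [a])) {y : A} (hy : y ≠ a) :
    (σ false (W.formPerm y) : ℕ) =
      if (σ false y : ℕ) + 1 = Fintype.card A then 1 else (σ false y : ℕ) + 1 := by
  have hmem : y ∈ W := by simpa [hy] using hσ.mem_top y
  have hcard : 1 + W.length = Fintype.card A := by
    rw [← Row.length_toList (σ false), hσ.1, List.length_cons, add_comm]
  have hnext := Row.apply_formPerm (U := [a]) (V := []) (by rw [hσ.1]; simp) hmem
  rwa [List.length_singleton, hcard] at hnext

variable [Nonempty A]

theorem isS (hσ : HasRows σ (a :: W) (W' ++ [a])) {p : A} (hp : (σ true p : ℕ) = 0) :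
    IsS σ (W.formPerm * W'.formPerm⁻¹ * swap a p) := by
  have hlast := val_posLast_add_one (A := A)
  refine fun b => ⟨fun hb => ?_, fun hb => ?_⟩
  · obtain rfl : b = p := (σ true).injective (hb.trans (Fin.ext hp.symm))
    rw [Perm.mul_apply, swap_apply_right, hσ.formPerm_mul_inv_apply_self]
    exact hσ.XOf_eq.symm
  have hb_pos : (σ true b : ℕ) ≠ 0 := fun h => hb (Fin.ext h)
  generalize hy : (σ true).symm ⟨(σ true b : ℕ) - 1, _⟩ = y
  rw [symm_apply_eq, Fin.ext_iff] at hy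
  have hby : (σ true b : ℕ) = σ true y + 1 := by simp only at hy; omega
  have hya : y ≠ a := by
    rintro rfl
    have := hσ.apply_bottom_last
    omega
  have hS : (W.formPerm * W'.formPerm⁻¹ * swap a p) b = W.formPerm y := by
    rw [Perm.mul_apply, Perm.mul_apply, ← hσ.formPerm_bottom_apply hp hby,
      Perm.inv_def, symm_apply_apply]
  have hlast_true : (σ true).symm (posLast A) = a := by
    rw [symm_apply_eq, Fin.ext_iff]
    have := hσ.apply_bottom_last
    omega
  have hlast_false : (σ true b : ℕ) = σ true ((σ false).symm (posLast A)) + 1 ↔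
      (σ false y : ℕ) + 1 = Fintype.card A := by
    rw [hby, Nat.add_right_cancel_iff, ← Fin.ext_iff, EmbeddingLike.apply_eq_iff_eq,
      eq_symm_apply, Fin.ext_iff]
    omega
  rw [hS, hlast_true, hσ.formPerm_top_apply hya]
  refine ⟨fun h => ?_, fun h => if_neg (mt hlast_false.2 h)⟩
  rw [if_pos (hlast_false.1 h), Row.apply_eq_length (U := []) hσ.1, List.length_nil]

theorem isQ (hσ : HasRows σ (a :: W) (W' ++ [a])) (p : A) :
    IsQ σ (W.formPerm * W'.formPerm⁻¹ * swap a p) (W.formPerm * W'.formPerm⁻¹) := by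
  have ha := hσ.formPerm_mul_inv_apply_self
  rw [IsQ, hσ.XOf_eq]
  refine ⟨ha, fun b hba => ?_⟩
  obtain rfl | hbp := eq_or_ne b p
  · have hS : (W.formPerm * W'.formPerm⁻¹ * swap a b) b = a := by
      rw [Perm.mul_apply, swap_apply_right, ha]
    refine ⟨fun _ => ?_, fun h => absurd hS h⟩
    rw [hS, Perm.mul_apply _ (swap a b), swap_apply_left]
  · rw [Perm.mul_apply _ (swap a p), swap_apply_of_ne_of_ne hba hbp]
    exact ⟨fun h => absurd (Equiv.injective _ (h.trans ha.symm)) hba, fun _ => rfl⟩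

end HasRows

section Transfer

variable {π σ : RPair A} {S S' Q Q' : Perm A}

theorem forall_height_eq_of_reflTransGen {b c : A} (h : Relation.ReflTransGen RightMove π σ)
    (hbc : ∀ u ∈ LinearMap.ker π.form, Row.height (π false) b u = Row.height (π false) c u) :
    ∀ u ∈ LinearMap.ker σ.form, Row.height (σ false) b u = Row.height (σ false) c u := by
  induction h with
  | refl => exact hbc
  | tail _ hmove ih =>
    obtain ⟨g, hg, hheight⟩ := hmove.exists_isTransport
    intro v hv
    obtain ⟨u, rfl⟩ := hg.surjective v
    have hu := hg.map_mem_ker_iff.1 hv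
    rw [hheight u hu, hheight u hu, ih u hu]

variable [Nonempty A]

theorem RightEquiv.XOf_eq (h : RightEquiv π σ) : XOf π = XOf σ := by
  obtain ⟨hpath, -⟩ := h
  induction hpath with
  | refl => rfl
  | tail _ hmove ih => exact eq_XOf_iff.2 (hmove.apply_false_eq_zero (ih ▸ apply_XOf _))

theorem IsS.sameCycle_iff (hπ : PairIrreducible π) (hN : 2 ≤ Fintype.card A) (hS : IsS π S)
    {b c : A} : S.SameCycle b c ↔
      ∀ u ∈ LinearMap.ker π.form, Row.height (π false) b u = Row.height (π false) c u := by
  refine ⟨fun h u hu => hS.height_eq_of_sameCycle hu h, fun h => ?_⟩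
  obtain ⟨u, hu, hsep⟩ := SeparatesCycles.exists_mem_ker hπ hN hS
  exact hsep b c (h u hu)

theorem RightEquiv.sameCycle_iff (h : RightEquiv π σ) (hπ : PairIrreducible π)
    (hN : 2 ≤ Fintype.card A) (hS : IsS π S) (hS' : IsS σ S') (b c : A) :
    S.SameCycle b c ↔ S'.SameCycle b c := by
  rw [hS.sameCycle_iff hπ hN, hS'.sameCycle_iff (h.pairIrreducible hπ) hN]
  exact ⟨forall_height_eq_of_reflTransGen h.1, forall_height_eq_of_reflTransGen h.2⟩

theorem RightEquiv.sameCycle_iff_of_isQ (h : RightEquiv π σ) (hπ : PairIrreducible π)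
    (hN : 2 ≤ Fintype.card A) (hS : IsS π S) (hQ : IsQ π S Q) (hS' : IsS σ S')
    (hQ' : IsQ σ S' Q') {b : A} (hb : b ≠ XOf π) (c : A) :
    Q.SameCycle b c ↔ Q'.SameCycle b c := by
  have hX := h.XOf_eq
  obtain rfl | hc := eq_or_ne c (XOf π)
  · have hnot {f : Perm A} (hf : f (XOf π) = XOf π) : ¬ f.SameCycle b (XOf π) := fun hbX =>
      hb (hbX.eq_of_right hf)
    exact iff_of_false (hnot hQ.1) (hnot (hX ▸ hQ'.1))
  · rw [hQ.sameCycle_iff (hS.apply_XOf_ne hπ hN) hb hc,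
      hQ'.sameCycle_iff (hS'.apply_XOf_ne (h.pairIrreducible hπ) hN) (hX ▸ hb) (hX ▸ hc),
      h.sameCycle_iff hπ hN hS hS']

theorem PairIrreducible.exists_rightEquiv_isStandard [DecidableEq A] (hπ : PairIrreducible π)
    (hN : 2 ≤ Fintype.card A) (hS : IsS π S) (hQ : IsQ π S Q) :
    ∃ σ c d, RightEquiv π σ ∧ IsStandard (XOf π) c d σ ∧
      ∀ x y, x ≠ XOf π → (Q.SameCycle x y ↔ (c * d⁻¹).SameCycle x y) := by
  obtain ⟨σ, a, W, W', hπσ, hσ⟩ := hπ.exists_rightEquiv_hasRows hN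
  obtain ⟨p, hp⟩ := (σ true).surjective (posFirst A)
  have hS' := hσ.isS (p := p) (by rw [hp, val_posFirst])
  have ha : XOf π = a := RightEquiv.XOf_eq hπσ ▸ hσ.XOf_eq
  exact ⟨σ, W.formPerm, W'.formPerm, hπσ, ⟨W, W', ha ▸ hσ, rfl, rfl⟩, fun x y hx =>
    RightEquiv.sameCycle_iff_of_isQ hπσ hπ hN hS hQ hS' (hσ.isQ p) hx y⟩

theorem exists_mem_renamings_sign_eq_neg_one [DecidableEq A] (hπ : PairIrreducible π)
    (hN : 2 ≤ Fintype.card A) (hS : IsS π S) (hQ : IsQ π S Q) {b c : A} (hb : b ≠ XOf π)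
    (hc : c ≠ XOf π) (hcycle : ¬ Q.SameCycle b c)
    (hperiod : Function.minimalPeriod Q b = Function.minimalPeriod Q c) :
    ∃ ν ∈ renamings π, Perm.sign ν = -1 := by
  obtain ⟨σ, f, g, hπσ, hσ, hsame⟩ := hπ.exists_rightEquiv_isStandard hN hS hQ
  have hperiod_eq (x : A) (hx : x ≠ XOf π) :
      Function.minimalPeriod Q x = Function.minimalPeriod (f * g⁻¹) x := by
    simp only [← ncard_setOf_sameCycle, hsame x _ hx]
  have hodd : SignedEquiv (-1) σ σ := hσ.signedEquiv_self hb hc (by rwa [← hsame b c hb])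
    (by rw [← hperiod_eq b hb, ← hperiod_eq c hc, hperiod])
  have hσπ := SignedEquiv.of_rauzyEquiv (RightEquiv.rauzyEquiv hπσ)
  obtain ⟨ν, hν, hπν⟩ := (hσπ.trans hodd).trans hσπ.symm
  exact ⟨ν, hπν.1, by simpa using hν⟩

end Transfer

/-- `G(π) ⊆ Alt(A)` if and only if `Λ(π)` is simple. -/
theorem stmt8 {A : Type*} [Fintype A] [DecidableEq A] [Nonempty A]
    (hN : 2 ≤ Fintype.card A) (π : RPair A) (hπ : PairIrreducible π)
    (S Q : Equiv.Perm A) (hS : IsS π S) (hQ : IsQ π S Q) :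
    renamings π ⊆ (alternatingGroup A : Set (Equiv.Perm A)) ↔ (lamOf Q).Nodup := by
  rw [nodup_lamOf_iff hQ.1]
  refine ⟨fun hsub b c hb hc hperiod => ?_, fun hsimple ν hν => ?_⟩
  · by_contra hcycle
    obtain ⟨ν, hν, hsign⟩ := exists_mem_renamings_sign_eq_neg_one hπ hN hS hQ hb hc hcycle hperiod
    have hone : Perm.sign ν = 1 := hsub hν
    rw [hsign] at hone
    exact absurd hone (by decide)
  · exact sign_eq_one_of_mem_renamings hπ hN hS hQ hsimple hν
end
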